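/- arXiv:cs/0605071 — 2 statements merged into one kernel-verified Lean document; each statement's English description precedes it below -/
import Mathlib

section
/- For the two-user Gaussian interference channel with degraded message sets in which transmitter 1 knows both messages (arbitrary real b), the dirty-paper-coding region is achievable: for every α ∈ [0,1], every rate pair (R₁,R₂) with R₁ ≤ ½ log(1 + αP₁) and R₂ ≤ ½ log( (1 + b²P₁ + 2|b|√((1−α)P₁P₂) + P₂) / (1 + b²αP₁) ) lies in C^{T₁}_{GIFC}. -/
open scoped BigOperators
open MeasureTheory ProbabilityTheory

noncomputable section

/-- The law of `n` i.i.d. standard Gaussian noise samples. -/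
def stdGaussN (n : ℕ) : Measure (Fin n → ℝ) :=
  Measure.pi fun _ => gaussianReal 0 1

/-- Average probability that receiver 1 errs, for a code for the Gaussian IFC
`Y₁ = X₁ + a X₂ + Z₁`, `Y₂ = b X₁ + X₂ + Z₂` with degraded message sets
(transmitter 1 knows both messages), messages uniform and independent. -/
def peG1T1 (a : ℝ) (n M1 M2 : ℕ) (f1 : Fin M1 → Fin M2 → Fin n → ℝ)
    (f2 : Fin M2 → Fin n → ℝ) (g1 : (Fin n → ℝ) → Fin M1) : ℝ :=
  (1 / (M1 * M2) : ℝ) * ∑ w1 : Fin M1, ∑ w2 : Fin M2,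
    (stdGaussN n {z | g1 (fun i => f1 w1 w2 i + a * f2 w2 i + z i) ≠ w1}).toReal

/-- Average probability that receiver 2 errs (transmitter 1 informed). -/
def peG2T1 (b : ℝ) (n M1 M2 : ℕ) (f1 : Fin M1 → Fin M2 → Fin n → ℝ)
    (f2 : Fin M2 → Fin n → ℝ) (g2 : (Fin n → ℝ) → Fin M2) : ℝ :=
  (1 / (M1 * M2) : ℝ) * ∑ w1 : Fin M1, ∑ w2 : Fin M2,
    (stdGaussN n {z | g2 (fun i => b * f1 w1 w2 i + f2 w2 i + z i) ≠ w2}).toReal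

/-- A rate pair is achievable for the Gaussian IFC with degraded message sets
(transmitter 1 knows both messages) under the average power constraints `P1`, `P2`. -/
def AchievableGT1 (a b P1 P2 R1 R2 : ℝ) : Prop :=
  ∀ ε : ℝ, 0 < ε → ∃ (n M1 M2 : ℕ) (f1 : Fin M1 → Fin M2 → Fin n → ℝ)
    (f2 : Fin M2 → Fin n → ℝ) (g1 : (Fin n → ℝ) → Fin M1) (g2 : (Fin n → ℝ) → Fin M2),
    0 < n ∧ 0 < M1 ∧ 0 < M2 ∧
    (1 / (M1 * M2) : ℝ) * ∑ w1 : Fin M1, ∑ w2 : Fin M2,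
      ((1 / n : ℝ) * ∑ i, (f1 w1 w2 i) ^ 2) ≤ P1 ∧
    (1 / M2 : ℝ) * ∑ w2 : Fin M2, ((1 / n : ℝ) * ∑ i, (f2 w2 i) ^ 2) ≤ P2 ∧
    R1 - ε ≤ Real.logb 2 M1 / n ∧ R2 - ε ≤ Real.logb 2 M2 / n ∧
    peG1T1 a n M1 M2 f1 f2 g1 ≤ ε ∧ peG2T1 b n M1 M2 f1 f2 g2 ≤ ε

/-- The capacity region `C^{T₁}_{GIFC}` of the Gaussian IFC with degraded message sets
in which transmitter 1 knows both messages. -/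
def CapacityGT1 (a b P1 P2 : ℝ) : Set (ℝ × ℝ) :=
  closure {R : ℝ × ℝ | AchievableGT1 a b P1 P2 R.1 R.2}

open Filter
open scoped ENNReal NNReal Topology

/-!
Random coding. Transmitter 1 sends `σ T + q V` and transmitter 2 sends `p V`, where the Gaussian
words `T` and `V` carry the messages 1 and 2, `σ² = α P₁`, `q² = (1 - α) P₁`, `p² = P₂`, and `q` has
the sign of `b`, so that the two copies of `V` add up coherently at receiver 2, which decodes `V`
and treats `T` as noise. Receiver 1 would suffer from the interference `(q + a p) V`, but
transmitter 1 knows `V`. Following Costa, message 1 is carried by the auxiliary word `U = T + κ V`: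
each message owns a bin of words drawn independently of `V`, large enough to contain one that looks
jointly typical with `V` (likelihood covering). For Costa's `κ`, the information that the output of
receiver 1 carries about `U` exceeds the binning rate by `½ log (1 + σ²)`, as if `V` were absent.

Each receiver accepts the words whose Gaussian log-likelihood ratio exceeds a threshold. Under the
joint law its mean is the mutual information, so the weak law of large numbers applies to the word
that was sent, and the exponential moment of the ratio is `1` for the others.
-/

/-! ### Independent samples -/

section ProductMeasures

variable {ι X : Type*} [Fintype ι] [MeasurableSpace X] {μ : Measure X} [IsProbabilityMeasure μ]

lemma measurePreserving_eval_pair {i j : ι} (hij : i ≠ j) :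
    MeasurePreserving (fun x : ι → X => (x i, x j)) (Measure.pi fun _ => μ) (μ.prod μ) := by
  have hind : iIndepFun (fun (k : ι) (x : ι → X) => x k) (Measure.pi fun _ => μ) :=
    iIndepFun_pi (μ := fun _ => μ) (X := fun _ x => x) fun _ => aemeasurable_id
  have hmap := (indepFun_iff_map_prod_eq_prod_map_map (measurable_pi_apply i).aemeasurable
    (measurable_pi_apply j).aemeasurable).1 (hind.indepFun hij)
  have heval (k : ι) : (Measure.pi fun _ : ι => μ).map (fun x => x k) = μ :=
    (measurePreserving_eval (fun _ : ι => μ) k).map_eq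
  exact ⟨by fun_prop, by rw [hmap, heval, heval]⟩

lemma integral_pi_sum {φ : X → ℝ} (hφ : Integrable φ μ) :
    ∫ x, ∑ i, φ (x i) ∂(Measure.pi fun _ : ι => μ) = Fintype.card ι * ∫ a, φ a ∂μ := by
  rw [integral_finsetSum _ fun i _ => integrable_comp_eval (μ := fun _ : ι => μ) hφ]
  simp only [integral_comp_eval (μ := fun _ : ι => μ) hφ.aestronglyMeasurable, Finset.sum_const,
    Finset.card_univ, nsmul_eq_mul]

lemma measure_pi_abs_sum_sub_ge_le [Nonempty ι] {φ : X → ℝ} (hφ : MemLp φ 2 μ) {δ : ℝ}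
    (hδ : 0 < δ) :
    (Measure.pi fun _ : ι => μ)
        {x | Fintype.card ι * δ ≤ |∑ i, φ (x i) - Fintype.card ι * ∫ a, φ a ∂μ|} ≤
      ENNReal.ofReal (variance φ μ / (Fintype.card ι * δ ^ 2)) := by
  have hsum : MemLp (∑ i, fun x : ι → X => φ (x i)) 2 (Measure.pi fun _ => μ) :=
    memLp_finsetSum' _ fun i _ =>
      hφ.comp_measurePreserving (measurePreserving_eval (fun _ : ι => μ) i)
  have hvar := variance_sum_pi (μ := fun _ : ι => μ) (X := fun _ => φ) fun _ => hφ
  have hcheb := meas_ge_le_variance_div_sq hsum (c := Fintype.card ι * δ) (by positivity)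
  simp only [hvar, Finset.sum_apply, integral_pi_sum (hφ.integrable one_le_two), Finset.sum_const,
    Finset.card_univ, nsmul_eq_mul] at hcheb
  convert hcheb using 2
  field_simp

section WeakLaw

variable {φ : X → ℝ}

lemma tendsto_measure_pi_abs_sum_sub_ge (hφ : MemLp φ 2 μ) {δ : ℝ} (hδ : 0 < δ) :
    Tendsto (fun n : ℕ => (Measure.pi fun _ : Fin n => μ)
      {x | n * δ ≤ |∑ i, φ (x i) - n * ∫ a, φ a ∂μ|}) atTop (𝓝 0) := by
  have hlim : Tendsto (fun n : ℕ => ENNReal.ofReal (variance φ μ / (n * δ ^ 2))) atTop (𝓝 0) := by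
    rw [← ENNReal.ofReal_zero]
    exact ENNReal.tendsto_ofReal (tendsto_const_nhds.div_atTop
      (tendsto_natCast_atTop_atTop.atTop_mul_const (by positivity)))
  refine tendsto_of_tendsto_of_tendsto_of_le_of_le' tendsto_const_nhds hlim
    (Eventually.of_forall fun _ => zero_le) ?_
  filter_upwards [eventually_gt_atTop 0] with n hn
  have : NeZero n := ⟨hn.ne'⟩
  simpa only [Fintype.card_fin] using measure_pi_abs_sum_sub_ge_le (ι := Fin n) hφ hδ

lemma tendsto_measure_pi_sum_lt (hφ : MemLp φ 2 μ) {c : ℝ} (hc : c < ∫ a, φ a ∂μ) :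
    Tendsto (fun n : ℕ => (Measure.pi fun _ : Fin n => μ) {x | ∑ i, φ (x i) < n * c})
      atTop (𝓝 0) := by
  refine tendsto_of_tendsto_of_tendsto_of_le_of_le tendsto_const_nhds
    (tendsto_measure_pi_abs_sum_sub_ge hφ (sub_pos.2 hc)) (fun _ => zero_le)
    fun n => measure_mono fun x hx => ?_
  rw [Set.mem_ofPred_eq] at hx ⊢
  rw [abs_sub_comm]
  exact le_trans (by linarith) (le_abs_self _)

lemma tendsto_measure_pi_lt_sum (hφ : MemLp φ 2 μ) {c : ℝ} (hc : ∫ a, φ a ∂μ < c) :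
    Tendsto (fun n : ℕ => (Measure.pi fun _ : Fin n => μ) {x | n * c < ∑ i, φ (x i)})
      atTop (𝓝 0) := by
  refine (tendsto_measure_pi_sum_lt hφ.neg (c := -c) ?_).congr fun n => ?_
  · simpa only [Pi.neg_apply, integral_neg, neg_lt_neg_iff] using hc
  · simp only [Pi.neg_apply, Finset.sum_neg_distrib, mul_neg, neg_lt_neg_iff]

end WeakLaw

/-! ### Covering by independent samples -/

lemma measure_pi_two_mul_sum_lt_card_le_of_bounded [Nonempty ι] {g : X → ℝ} {τ : ℝ}
    (hg : Measurable g) (hg0 : ∀ a, 0 ≤ g a) (hgτ : ∀ a, g a ≤ τ)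
    (hmean : 3 / 4 ≤ ∫ a, g a ∂μ) (hmean1 : ∫ a, g a ∂μ ≤ 1) :
    (Measure.pi fun _ : ι => μ) {c | 2 * ∑ i, g (c i) < Fintype.card ι} ≤
      ENNReal.ofReal (16 * τ / Fintype.card ι) := by
  have hcard : (0 : ℝ) < Fintype.card ι := by exact_mod_cast Fintype.card_pos
  have hτ : 0 ≤ τ := have ⟨a⟩ := μ.nonempty_of_neZero; (hg0 a).trans (hgτ a)
  have hmem : MemLp g 2 μ := MemLp.of_bound hg.aestronglyMeasurable τ
    (Eventually.of_forall fun a => by rw [Real.norm_of_nonneg (hg0 a)]; exact hgτ a)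
  have hvar : variance g μ ≤ τ :=
    calc variance g μ ≤ ∫ a, (g ^ 2) a ∂μ := variance_le_expectation_sq hg.aestronglyMeasurable
      _ ≤ ∫ a, τ * g a ∂μ := by
        refine integral_mono hmem.integrable_sq ((hmem.integrable one_le_two).const_mul τ)
          fun a => ?_
        simp only [Pi.pow_apply]
        nlinarith [hg0 a, hgτ a]
      _ ≤ τ := by
        rw [integral_const_mul]
        nlinarith
  calc (Measure.pi fun _ : ι => μ) {c | 2 * ∑ i, g (c i) < Fintype.card ι}
      ≤ (Measure.pi fun _ : ι => μ) {c | Fintype.card ι * (1 / 4 : ℝ) ≤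
          |∑ i, g (c i) - Fintype.card ι * ∫ a, g a ∂μ|} := by
        refine measure_mono fun c hc => ?_
        rw [Set.mem_ofPred_eq] at hc ⊢
        rw [abs_sub_comm]
        exact le_trans (by nlinarith) (le_abs_self _)
    _ ≤ ENNReal.ofReal (variance g μ / (Fintype.card ι * (1 / 4) ^ 2)) :=
        measure_pi_abs_sum_sub_ge_le hmem (by norm_num)
    _ ≤ ENNReal.ofReal (16 * τ / Fintype.card ι) := by
        refine ENNReal.ofReal_le_ofReal ?_
        rw [div_le_div_iff₀ (by positivity) hcard]
        nlinarith

/-- If `f` keeps most of its mass below `τ`, Chebyshev applies to its truncation; otherwise the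
second term on the right exceeds `1`. -/
lemma measure_pi_two_mul_sum_lt_card_le [Nonempty ι] {f : X → ℝ≥0∞} (hf : Measurable f)
    (hmean : ∫⁻ a, f a ∂μ = 1) (τ : ℝ≥0) :
    (Measure.pi fun _ : ι => μ) {c | 2 * ∑ i, f (c i) < Fintype.card ι} ≤
      ENNReal.ofReal (16 * τ / Fintype.card ι) + 4 * ∫⁻ a in {a | τ < f a}, f a ∂μ := by
  set S : Set X := {a | τ < f a}
  have hS : MeasurableSet S := measurableSet_lt measurable_const hf
  set h : X → ℝ≥0∞ := Sᶜ.indicator f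
  have hh : Measurable h := hf.indicator hS.compl
  have hhτ (a : X) : h a ≤ τ := by
    by_cases ha : a ∈ S
    · simp [h, ha]
    · simpa [h, ha] using (not_lt.1 ha : f a ≤ _)
  have hh_top (a : X) : h a ≠ ∞ := ((hhτ a).trans_lt ENNReal.coe_lt_top).ne
  have hsplit : ∫⁻ a in S, f a ∂μ + ∫⁻ a, h a ∂μ = 1 := by
    rw [lintegral_indicator hS.compl, lintegral_add_compl _ hS, hmean]
  have hh1 : ∫⁻ a, h a ∂μ ≤ 1 := hsplit ▸ le_add_self
  have hhint : ∫ a, (h a).toReal ∂μ = (∫⁻ a, h a ∂μ).toReal :=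
    integral_toReal hh.aemeasurable (Eventually.of_forall fun a => (hh_top a).lt_top)
  by_cases hmass : 3 / 4 ≤ (∫⁻ a, h a ∂μ).toReal
  · refine (measure_mono fun c hc => ?_).trans <|
      (measure_pi_two_mul_sum_lt_card_le_of_bounded (τ := τ) hh.ennreal_toReal
        (fun a => ENNReal.toReal_nonneg) (fun a => ENNReal.toReal_mono ENNReal.coe_ne_top (hhτ a))
        (hhint ▸ hmass) (hhint ▸ ENNReal.toReal_mono ENNReal.one_ne_top hh1)).trans le_self_add
    have hlt : 2 * ∑ i, h (c i) < Fintype.card ι :=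
      lt_of_le_of_lt (by gcongr; exact Set.indicator_le_self _ f _) hc
    have := (ENNReal.toReal_lt_toReal hlt.ne_top (ENNReal.natCast_ne_top _)).2 hlt
    simpa [ENNReal.toReal_sum fun i _ => hh_top (c i)] using this
  · refine prob_le_one.trans (le_trans ?_ le_add_self)
    have hS_top : ∫⁻ a in S, f a ∂μ ≠ ∞ :=
      ((hsplit ▸ le_self_add : _ ≤ (1 : ℝ≥0∞)).trans_lt ENNReal.one_lt_top).ne
    have hsum := congrArg ENNReal.toReal hsplit
    rw [ENNReal.toReal_add hS_top (hh1.trans_lt ENNReal.one_lt_top).ne, ENNReal.toReal_one] at hsum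
    rw [← ENNReal.ofReal_toReal hS_top, ← ENNReal.ofReal_ofNat, ← ENNReal.ofReal_mul (by norm_num),
      ENNReal.one_le_ofReal]
    linarith

end ProductMeasures

/-! ### Random codebooks with binning -/

section RandomCodebook

variable {W₁ W₂ Λ U V : Type*} [Fintype W₁] [Fintype W₂] [Fintype Λ]
  [MeasurableSpace U] [MeasurableSpace V]

section Law

/-- The law of a random superposition codebook: for every message `w₁` a bin of i.i.d. words of law
`μ` indexed by `Λ`, and for every message `w₂` a word of law `ν`, all independent. -/
def codebookLaw (W₁ W₂ Λ : Type*) [Fintype W₁] [Fintype W₂] [Fintype Λ] (μ : Measure U)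
    (ν : Measure V) : Measure ((W₁ → Λ → U) × (W₂ → V)) :=
  (Measure.pi fun _ => Measure.pi fun _ => μ).prod (Measure.pi fun _ => ν)

variable {μ : Measure U} {ν : Measure V} [IsProbabilityMeasure μ] [IsProbabilityMeasure ν]

instance : IsProbabilityMeasure (codebookLaw W₁ W₂ Λ μ ν) := by
  unfold codebookLaw
  infer_instance

lemma measurePreserving_bin (w₁ : W₁) (w₂ : W₂) :
    MeasurePreserving (fun q : (W₁ → Λ → U) × (W₂ → V) => (q.1 w₁, q.2 w₂))
      (codebookLaw W₁ W₂ Λ μ ν) ((Measure.pi fun _ => μ).prod ν) :=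
  (measurePreserving_eval (fun _ : W₁ => Measure.pi fun _ : Λ => μ) w₁).prod
    (measurePreserving_eval (fun _ : W₂ => ν) w₂)

lemma measurePreserving_codeword (w₁ : W₁) (w₂ : W₂) (l : Λ) :
    MeasurePreserving (fun q : (W₁ → Λ → U) × (W₂ → V) => (q.1 w₁ l, q.2 w₂))
      (codebookLaw W₁ W₂ Λ μ ν) (μ.prod ν) :=
  ((measurePreserving_eval (fun _ : Λ => μ) l).prod (.id ν)).comp (measurePreserving_bin w₁ w₂)

lemma measurePreserving_rival_bin {w w₁ : W₁} (hw : w ≠ w₁) (w₂ : W₂) (l' l : Λ) :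
    MeasurePreserving (fun q : (W₁ → Λ → U) × (W₂ → V) => (q.1 w l', (q.1 w₁ l, q.2 w₂)))
      (codebookLaw W₁ W₂ Λ μ ν) (μ.prod (μ.prod ν)) :=
  (measurePreserving_prodAssoc μ μ ν).comp <|
    (((measurePreserving_eval (fun _ : Λ => μ) l').prod
      (measurePreserving_eval (fun _ : Λ => μ) l)).comp (measurePreserving_eval_pair hw)).prod
    (measurePreserving_eval (fun _ : W₂ => ν) w₂)

lemma measurePreserving_rival_word (w₁ : W₁) {w w₂ : W₂} (hw : w ≠ w₂) (l : Λ) :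
    MeasurePreserving (fun q : (W₁ → Λ → U) × (W₂ → V) => (q.2 w, (q.1 w₁ l, q.2 w₂)))
      (codebookLaw W₁ W₂ Λ μ ν) (ν.prod (μ.prod ν)) :=
  ((MeasurePreserving.id ν).prod Measure.measurePreserving_swap).comp <|
    (measurePreserving_prodAssoc ν ν μ).comp <| Measure.measurePreserving_swap.comp <|
      ((measurePreserving_eval (fun _ : Λ => μ) l).comp
        (measurePreserving_eval (fun _ : W₁ => Measure.pi fun _ : Λ => μ) w₁)).prod
      (measurePreserving_eval_pair hw)

lemma measure_bin_uncovered_le [Nonempty Λ] {r : U × V → ℝ≥0∞} (hr : Measurable r)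
    (hr1 : ∀ v, ∫⁻ u, r (u, v) ∂μ = 1) (τ : ℝ≥0) (w₁ : W₁) (w₂ : W₂) :
    codebookLaw W₁ W₂ Λ μ ν {q | 2 * ∑ l, r (q.1 w₁ l, q.2 w₂) < Fintype.card Λ} ≤
      ENNReal.ofReal (16 * τ / Fintype.card Λ) + 4 * ∫⁻ p in {p | τ < r p}, r p ∂(μ.prod ν) := by
  set S : Set (U × V) := {p | τ < r p}
  have hS : MeasurableSet S := measurableSet_lt measurable_const hr
  have hsection (v : V) : ∫⁻ u in {u | τ < r (u, v)}, r (u, v) ∂μ = ∫⁻ u, S.indicator r (u, v) ∂μ :=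
    (lintegral_indicator (measurable_prodMk_right hS) _).symm
  have hT : MeasurableSet
      {x : (Λ → U) × V | 2 * ∑ l, r (x.1 l, x.2) < Fintype.card Λ} :=
    measurableSet_lt (by fun_prop) measurable_const
  calc codebookLaw W₁ W₂ Λ μ ν {q | 2 * ∑ l, r (q.1 w₁ l, q.2 w₂) < Fintype.card Λ}
      = ((Measure.pi fun _ : Λ => μ).prod ν)
          {x | 2 * ∑ l, r (x.1 l, x.2) < Fintype.card Λ} :=
        (measurePreserving_bin w₁ w₂).measure_preimage hT.nullMeasurableSet
    _ = ∫⁻ v, (Measure.pi fun _ : Λ => μ) {c | 2 * ∑ l, r (c l, v) < Fintype.card Λ} ∂ν :=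
        Measure.prod_apply_symm hT
    _ ≤ ∫⁻ v, (ENNReal.ofReal (16 * τ / Fintype.card Λ) +
          4 * ∫⁻ u in {u | τ < r (u, v)}, r (u, v) ∂μ) ∂ν :=
        lintegral_mono fun v => measure_pi_two_mul_sum_lt_card_le (by fun_prop) (hr1 v) τ
    _ = ENNReal.ofReal (16 * τ / Fintype.card Λ) + 4 * ∫⁻ v, ∫⁻ u, S.indicator r (u, v) ∂μ ∂ν := by
        simp only [hsection]
        rw [lintegral_add_left measurable_const, lintegral_const, measure_univ, mul_one,
          lintegral_const_mul _ (hr.indicator hS).lintegral_prod_left']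
    _ = ENNReal.ofReal (16 * τ / Fintype.card Λ) + 4 * ∫⁻ p in S, r p ∂(μ.prod ν) := by
        rw [← lintegral_indicator hS, lintegral_prod_symm _ (hr.indicator hS).aemeasurable]

end Law

lemma lintegral_prod_density_mul_le {A P : Type*} [MeasurableSpace A] [MeasurableSpace P]
    {α : Measure A} {π : Measure P} [SFinite α] [SFinite π] {r : P → ℝ≥0∞} {H : A × P → ℝ≥0∞}
    {h : ℝ≥0∞} (hr : Measurable r) (hH : Measurable H) (hr1 : ∫⁻ p, r p ∂π = 1)
    (hHh : ∀ p, ∫⁻ a, H (a, p) ∂α ≤ h) :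
    ∫⁻ q, r q.2 * H q ∂(α.prod π) ≤ h :=
  calc ∫⁻ q, r q.2 * H q ∂(α.prod π) = ∫⁻ p, ∫⁻ a, r p * H (a, p) ∂α ∂π :=
        lintegral_prod_symm _ (by fun_prop)
    _ = ∫⁻ p, r p * ∫⁻ a, H (a, p) ∂α ∂π :=
        lintegral_congr fun p => lintegral_const_mul _ (by fun_prop)
    _ ≤ ∫⁻ p, r p * h ∂π := by gcongr; exact hHh _
    _ = h := by rw [lintegral_mul_const _ hr, hr1, one_mul]

lemma iInf_min_one_le_indicator_add [Nonempty Λ] (ρ e : Λ → ℝ≥0∞) :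
    ⨅ l, min (e l) 1 ≤ {ρ : Λ → ℝ≥0∞ | 2 * ∑ l, ρ l < Fintype.card Λ}.indicator 1 ρ +
      2 * (Fintype.card Λ : ℝ≥0∞)⁻¹ * ∑ l, ρ l * e l := by
  by_cases hcov : 2 * ∑ l, ρ l < Fintype.card Λ
  · rw [Set.indicator_of_mem (by exact hcov)]
    exact ((iInf_le _ (Classical.arbitrary Λ)).trans (min_le_right _ _)).trans le_self_add
  · set m := ⨅ l, min (e l) 1
    rw [Set.indicator_of_notMem (by exact hcov), zero_add]
    calc m = (Fintype.card Λ : ℝ≥0∞)⁻¹ * (Fintype.card Λ * m) := by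
          rw [← mul_assoc, ENNReal.inv_mul_cancel (by simp) (by simp), one_mul]
      _ ≤ (Fintype.card Λ : ℝ≥0∞)⁻¹ * ((2 * ∑ l, ρ l) * m) := by gcongr; exact not_lt.1 hcov
      _ = 2 * (Fintype.card Λ : ℝ≥0∞)⁻¹ * ∑ l, ρ l * m := by rw [← Finset.sum_mul]; ring
      _ ≤ 2 * (Fintype.card Λ : ℝ≥0∞)⁻¹ * ∑ l, ρ l * e l := by
          gcongr with l
          exact (iInf_le _ l).trans (min_le_left _ _)

variable [DecidableEq W₁] [DecidableEq W₂]

/-- The union bound on the error probability when the pair of words `(c w₁ l, d w₂)` of the codebook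
`q = (c, d)` is sent: `G` accounts for the words sent, `H₁` for a rival word of the first codebook
and `H₂` for a rival word of the second. -/
def errBound (G : U × V → ℝ≥0∞) (H₁ : U × (U × V) → ℝ≥0∞) (H₂ : V × (U × V) → ℝ≥0∞)
    (q : (W₁ → Λ → U) × (W₂ → V)) (w₁ : W₁) (w₂ : W₂) (l : Λ) : ℝ≥0∞ :=
  G (q.1 w₁ l, q.2 w₂) +
    ∑ w ∈ Finset.univ.erase w₁, ∑ l', H₁ (q.1 w l', (q.1 w₁ l, q.2 w₂)) +
    ∑ w ∈ Finset.univ.erase w₂, H₂ (q.2 w, (q.1 w₁ l, q.2 w₂))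

variable {r G : U × V → ℝ≥0∞} {H₁ : U × (U × V) → ℝ≥0∞} {H₂ : V × (U × V) → ℝ≥0∞}

lemma measurable_errBound (hG : Measurable G) (hH₁ : Measurable H₁) (hH₂ : Measurable H₂)
    (w₁ : W₁) (w₂ : W₂) (l : Λ) : Measurable fun q => errBound G H₁ H₂ q w₁ w₂ l := by
  unfold errBound
  fun_prop

variable {μ : Measure U} {ν : Measure V} [IsProbabilityMeasure μ] [IsProbabilityMeasure ν]

lemma lintegral_density_mul_errBound_le {h₁ h₂ : ℝ≥0∞} (hr : Measurable r) (hG : Measurable G)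
    (hH₁ : Measurable H₁) (hH₂ : Measurable H₂) (hr1 : ∫⁻ p, r p ∂(μ.prod ν) = 1)
    (hHh₁ : ∀ p, ∫⁻ u, H₁ (u, p) ∂μ ≤ h₁) (hHh₂ : ∀ p, ∫⁻ v, H₂ (v, p) ∂ν ≤ h₂)
    (w₁ : W₁) (w₂ : W₂) (l : Λ) :
    ∫⁻ q, r (q.1 w₁ l, q.2 w₂) * errBound G H₁ H₂ q w₁ w₂ l ∂(codebookLaw W₁ W₂ Λ μ ν) ≤
      ∫⁻ p, r p * G p ∂(μ.prod ν) + (Fintype.card W₁ - 1 : ℕ) * Fintype.card Λ * h₁ +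
        (Fintype.card W₂ - 1 : ℕ) * h₂ := by
  have hG_eq : ∫⁻ q, r (q.1 w₁ l, q.2 w₂) * G (q.1 w₁ l, q.2 w₂) ∂(codebookLaw W₁ W₂ Λ μ ν) =
      ∫⁻ p, r p * G p ∂(μ.prod ν) :=
    (measurePreserving_codeword w₁ w₂ l).lintegral_comp (hr.mul hG)
  have hH₁_le w (hw : w ≠ w₁) (l' : Λ) :
      ∫⁻ q, r (q.1 w₁ l, q.2 w₂) * H₁ (q.1 w l', (q.1 w₁ l, q.2 w₂))
        ∂(codebookLaw W₁ W₂ Λ μ ν) ≤ h₁ :=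
    ((measurePreserving_rival_bin hw w₂ l' l).lintegral_comp
      ((hr.comp measurable_snd).mul hH₁)).trans_le (lintegral_prod_density_mul_le hr hH₁ hr1 hHh₁)
  have hH₂_le w (hw : w ≠ w₂) :
      ∫⁻ q, r (q.1 w₁ l, q.2 w₂) * H₂ (q.2 w, (q.1 w₁ l, q.2 w₂))
        ∂(codebookLaw W₁ W₂ Λ μ ν) ≤ h₂ :=
    ((measurePreserving_rival_word w₁ hw l).lintegral_comp
      ((hr.comp measurable_snd).mul hH₂)).trans_le (lintegral_prod_density_mul_le hr hH₂ hr1 hHh₂)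
  simp only [errBound, mul_add, Finset.mul_sum]
  rw [lintegral_add_left (by fun_prop), lintegral_add_left (by fun_prop), hG_eq,
    lintegral_finsetSum _ fun w _ => by fun_prop, lintegral_finsetSum _ fun w _ => by fun_prop]
  gcongr
  · calc _ ≤ ∑ _w ∈ Finset.univ.erase w₁, ∑ _l' : Λ, h₁ := by
          refine Finset.sum_le_sum fun w hw => ?_
          rw [lintegral_finsetSum _ fun l' _ => by fun_prop]
          exact Finset.sum_le_sum fun l' _ => hH₁_le w (Finset.ne_of_mem_erase hw) l'
      _ = _ := by simp [mul_assoc]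
  · calc _ ≤ ∑ _w ∈ Finset.univ.erase w₂, h₂ :=
          Finset.sum_le_sum fun w hw => hH₂_le w (Finset.ne_of_mem_erase hw)
      _ = _ := by simp

/-- The average over codebooks is controlled by sending, in every bin, the word with the smallest
error bound, which is at most the `r`-weighted average of the bounds once the bin is covered. -/
lemma lintegral_iInf_errBound_le [Nonempty Λ] {h₁ h₂ : ℝ≥0∞} (hr : Measurable r)
    (hG : Measurable G) (hH₁ : Measurable H₁) (hH₂ : Measurable H₂)
    (hr1 : ∀ v, ∫⁻ u, r (u, v) ∂μ = 1) (hHh₁ : ∀ p, ∫⁻ u, H₁ (u, p) ∂μ ≤ h₁)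
    (hHh₂ : ∀ p, ∫⁻ v, H₂ (v, p) ∂ν ≤ h₂) (τ : ℝ≥0) (w₁ : W₁) (w₂ : W₂) :
    ∫⁻ q, ⨅ l, min (errBound G H₁ H₂ q w₁ w₂ l) 1 ∂(codebookLaw W₁ W₂ Λ μ ν) ≤
      ENNReal.ofReal (16 * τ / Fintype.card Λ) + 4 * ∫⁻ p in {p | τ < r p}, r p ∂(μ.prod ν) +
        2 * (∫⁻ p, r p * G p ∂(μ.prod ν) + (Fintype.card W₁ - 1 : ℕ) * Fintype.card Λ * h₁ +
          (Fintype.card W₂ - 1 : ℕ) * h₂) := by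
  have hr1' : ∫⁻ p, r p ∂(μ.prod ν) = 1 := by
    rw [lintegral_prod_symm _ hr.aemeasurable]
    simp [hr1]
  have hT : MeasurableSet {q : (W₁ → Λ → U) × (W₂ → V) |
      2 * ∑ l, r (q.1 w₁ l, q.2 w₂) < Fintype.card Λ} :=
    measurableSet_lt (by fun_prop) measurable_const
  have hE (l : Λ) := measurable_errBound hG hH₁ hH₂ w₁ w₂ l
  refine (lintegral_mono fun q => iInf_min_one_le_indicator_add
    (fun l => r (q.1 w₁ l, q.2 w₂)) (errBound G H₁ H₂ q w₁ w₂)).trans ?_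
  rw [lintegral_add_right _ (by fun_prop), lintegral_const_mul _ (by fun_prop),
    lintegral_finsetSum _ fun l _ => by fun_prop]
  refine add_le_add ?_ ?_
  · refine le_of_eq_of_le ?_ (measure_bin_uncovered_le hr hr1 τ w₁ w₂)
    rw [← lintegral_indicator_one hT]
    rfl
  · refine (mul_le_mul_right (Finset.sum_le_card_nsmul _ _ _ fun l _ =>
      lintegral_density_mul_errBound_le hr hG hH₁ hH₂ hr1' hHh₁ hHh₂ w₁ w₂ l) _).trans_eq ?_
    rw [Finset.card_univ, nsmul_eq_mul, ← mul_assoc, mul_assoc 2,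
      ENNReal.inv_mul_cancel (by simp) (by simp), mul_one]

lemma exists_codebook [Nonempty Λ] {h₁ h₂ : ℝ≥0∞} (hr : Measurable r) (hG : Measurable G)
    (hH₁ : Measurable H₁) (hH₂ : Measurable H₂) (hr1 : ∀ v, ∫⁻ u, r (u, v) ∂μ = 1)
    (hHh₁ : ∀ p, ∫⁻ u, H₁ (u, p) ∂μ ≤ h₁) (hHh₂ : ∀ p, ∫⁻ v, H₂ (v, p) ∂ν ≤ h₂) (τ : ℝ≥0) :
    ∃ (q : (W₁ → Λ → U) × (W₂ → V)) (l : W₁ → W₂ → Λ),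
      ∑ w₁, ∑ w₂, min (errBound G H₁ H₂ q w₁ w₂ (l w₁ w₂)) 1 ≤
        Fintype.card W₁ * Fintype.card W₂ *
          (ENNReal.ofReal (16 * τ / Fintype.card Λ) + 4 * ∫⁻ p in {p | τ < r p}, r p ∂(μ.prod ν) +
            2 * (∫⁻ p, r p * G p ∂(μ.prod ν) + (Fintype.card W₁ - 1 : ℕ) * Fintype.card Λ * h₁ +
              (Fintype.card W₂ - 1 : ℕ) * h₂)) := by
  have hE (w₁ : W₁) (w₂ : W₂) (l : Λ) := measurable_errBound hG hH₁ hH₂ w₁ w₂ l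
  have hmin (w₁ : W₁) (w₂ : W₂) :
      Measurable fun q => ⨅ l : Λ, min (errBound G H₁ H₂ q w₁ w₂ l) 1 :=
    Measurable.iInf fun l => (hE w₁ w₂ l).min measurable_const
  obtain ⟨q, hq⟩ := exists_le_lintegral (μ := codebookLaw W₁ W₂ Λ μ ν)
    (f := fun q => ∑ w₁, ∑ w₂, ⨅ l, min (errBound G H₁ H₂ q w₁ w₂ l) 1) (by fun_prop)
  choose l hl using fun w₁ w₂ =>
    exists_eq_ciInf_of_finite (f := fun l => min (errBound G H₁ H₂ q w₁ w₂ l) 1)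
  refine ⟨q, l, ?_⟩
  simp only [hl]
  refine hq.trans ?_
  rw [lintegral_finsetSum _ fun w₁ _ => by fun_prop]
  refine (Finset.sum_le_card_nsmul _ _ _ fun w₁ _ => ?_).trans_eq
    (by rw [nsmul_eq_mul, Finset.card_univ, mul_assoc])
  rw [lintegral_finsetSum _ fun w₂ _ => hmin w₁ w₂]
  refine (Finset.sum_le_card_nsmul _ _ _ fun w₂ _ =>
    lintegral_iInf_errBound_le hr hG hH₁ hH₂ hr1 hHh₁ hHh₂ τ w₁ w₂).trans_eq ?_
  rw [nsmul_eq_mul, Finset.card_univ]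

end RandomCodebook

/-! ### One-shot coding for a two-receiver channel -/

section OneShot

lemma exists_decoder {W Y : Type*} [Nonempty W] (A : W → Set Y) :
    ∃ g : Y → W, ∀ w y, g y ≠ w → y ∉ A w ∨ ∃ w' ≠ w, y ∈ A w' := by
  classical
  refine ⟨fun y => if h : ∃ w, y ∈ A w then h.choose else Classical.arbitrary W,
    fun w y hne => or_iff_not_imp_left.2 fun hy => ⟨_, hne, ?_⟩⟩
  have h : ∃ w, y ∈ A w := ⟨w, not_not.1 hy⟩
  simpa only [dif_pos h] using h.choose_spec

variable {W₁ W₂ Λ U V Z Y₁ Y₂ : Type*} [Fintype W₁] [Fintype W₂] [Fintype Λ] [MeasurableSpace Z]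

lemma exists_decoders_measure_le_errBound [DecidableEq W₁] [DecidableEq W₂] [Nonempty W₁]
    [Nonempty W₂] (γ : Measure Z) [IsProbabilityMeasure γ]
    (y₁ : (U × V) × Z → Y₁) (y₂ : (U × V) × Z → Y₂) (D₁ : Set (Y₁ × U)) (D₂ : Set (Y₂ × V))
    (K : Set (U × V)) (q : (W₁ → Λ → U) × (W₂ → V)) (l : W₁ → W₂ → Λ) :
    ∃ (g₁ : Y₁ → W₁) (g₂ : Y₂ → W₂), ∀ w₁ w₂,
      γ {z | (q.1 w₁ (l w₁ w₂), q.2 w₂) ∈ K ∨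
          g₁ (y₁ ((q.1 w₁ (l w₁ w₂), q.2 w₂), z)) ≠ w₁ ∨
          g₂ (y₂ ((q.1 w₁ (l w₁ w₂), q.2 w₂), z)) ≠ w₂} ≤
        min (errBound
          (fun p => γ {z | p ∈ K ∨ (y₁ (p, z), p.1) ∉ D₁ ∨ (y₂ (p, z), p.2) ∉ D₂})
          (fun x => γ {z | (y₁ (x.2, z), x.1) ∈ D₁})
          (fun x => γ {z | (y₂ (x.2, z), x.1) ∈ D₂}) q w₁ w₂ (l w₁ w₂)) 1 := by
  obtain ⟨g₁, hg₁⟩ := exists_decoder fun w => {y | ∃ l', (y, q.1 w l') ∈ D₁}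
  obtain ⟨g₂, hg₂⟩ := exists_decoder fun w => {y | (y, q.2 w) ∈ D₂}
  refine ⟨g₁, g₂, fun w₁ w₂ => le_min ?_ prob_le_one⟩
  set p : U × V := (q.1 w₁ (l w₁ w₂), q.2 w₂)
  calc _ ≤ γ ({z | p ∈ K ∨ (y₁ (p, z), p.1) ∉ D₁ ∨ (y₂ (p, z), p.2) ∉ D₂} ∪
          (⋃ w ∈ Finset.univ.erase w₁, ⋃ l' ∈ Finset.univ, {z | (y₁ (p, z), q.1 w l') ∈ D₁}) ∪
          ⋃ w ∈ Finset.univ.erase w₂, {z | (y₂ (p, z), q.2 w) ∈ D₂}) := by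
        refine measure_mono fun z hz => ?_
        simp only [Set.mem_union, Set.mem_iUnion, Set.mem_ofPred_eq, Finset.mem_erase,
          Finset.mem_univ, and_true, exists_prop, true_and] at hz ⊢
        have h₁ := hg₁ w₁ (y₁ (p, z))
        have h₂ := hg₂ w₂ (y₂ (p, z))
        simp only [Set.mem_ofPred_eq, not_exists] at h₁ h₂
        grind
    _ ≤ _ := by
        refine (measure_union_le _ _).trans (add_le_add ((measure_union_le _ _).trans
          (add_le_add le_rfl ?_)) (measure_biUnion_finset_le _ _))
        exact (measure_biUnion_finset_le _ _).trans
          (Finset.sum_le_sum fun w _ => measure_biUnion_finset_le _ _)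

section Rival

variable {A P Y : Type*} [MeasurableSpace A] [MeasurableSpace P] [MeasurableSpace Y]
  {γ : Measure Z} {y : P × Z → Y} {D : Set (Y × A)}

lemma measurable_measure_accept [SFinite γ] (hy : Measurable y) (hD : MeasurableSet D) :
    Measurable fun x : A × P => γ {z | (y (x.2, z), x.1) ∈ D} :=
  measurable_measure_prodMk_left (hD.preimage
    (by fun_prop : Measurable fun x : (A × P) × Z => (y (x.1.2, x.2), x.1.1)))

lemma lintegral_measure_accept_le [IsProbabilityMeasure γ] {α : Measure A} [SFinite α] {h : ℝ≥0∞}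
    (hy : Measurable y) (hD : MeasurableSet D) (hh : ∀ y, α {a | (y, a) ∈ D} ≤ h) (p : P) :
    ∫⁻ a, γ {z | (y (p, z), a) ∈ D} ∂α ≤ h := by
  have hS : MeasurableSet {x : A × Z | (y (p, x.2), x.1) ∈ D} :=
    hD.preimage (by fun_prop : Measurable fun x : A × Z => (y (p, x.2), x.1))
  calc ∫⁻ a, γ {z | (y (p, z), a) ∈ D} ∂α = (α.prod γ) {x | (y (p, x.2), x.1) ∈ D} :=
        (Measure.prod_apply hS).symm
    _ = ∫⁻ z, α {a | (y (p, z), a) ∈ D} ∂γ := Measure.prod_apply_symm hS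
    _ ≤ ∫⁻ _z, h ∂γ := lintegral_mono fun z => hh _
    _ = h := by simp

end Rival

variable [MeasurableSpace U] [MeasurableSpace V] [MeasurableSpace Y₁] [MeasurableSpace Y₂]

lemma measurableSet_mem_or_notMem_or_notMem {y₁ : (U × V) × Z → Y₁} {y₂ : (U × V) × Z → Y₂}
    {D₁ : Set (Y₁ × U)} {D₂ : Set (Y₂ × V)} {K : Set (U × V)} (hy₁ : Measurable y₁)
    (hy₂ : Measurable y₂) (hD₁ : MeasurableSet D₁) (hD₂ : MeasurableSet D₂)
    (hK : MeasurableSet K) :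
    MeasurableSet {x : (U × V) × Z | x.1 ∈ K ∨ (y₁ x, x.1.1) ∉ D₁ ∨ (y₂ x, x.1.2) ∉ D₂} :=
  (hK.preimage measurable_fst).union <|
    (hD₁.preimage (by fun_prop : Measurable fun x : (U × V) × Z => (y₁ x, x.1.1))).compl.union
    (hD₂.preimage (by fun_prop : Measurable fun x : (U × V) × Z => (y₂ x, x.1.2))).compl

/-- `r` is the density, with respect to the product law of the random codewords, of the law of the
pair of words that is actually sent. -/
lemma exists_code [Nonempty W₁] [Nonempty W₂] [Nonempty Λ] {μ : Measure U} {ν : Measure V}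
    {γ : Measure Z} [IsProbabilityMeasure μ] [IsProbabilityMeasure ν] [IsProbabilityMeasure γ]
    {y₁ : (U × V) × Z → Y₁} {y₂ : (U × V) × Z → Y₂} {D₁ : Set (Y₁ × U)} {D₂ : Set (Y₂ × V)}
    {K : Set (U × V)} {r : U × V → ℝ≥0∞} {h₁ h₂ : ℝ≥0∞} (hy₁ : Measurable y₁)
    (hy₂ : Measurable y₂) (hD₁ : MeasurableSet D₁) (hD₂ : MeasurableSet D₂) (hK : MeasurableSet K)
    (hr : Measurable r) (hr1 : ∀ v, ∫⁻ u, r (u, v) ∂μ = 1)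
    (hh₁ : ∀ y, μ {u | (y, u) ∈ D₁} ≤ h₁) (hh₂ : ∀ y, ν {v | (y, v) ∈ D₂} ≤ h₂) (τ : ℝ≥0) :
    ∃ (u : W₁ → W₂ → U) (v : W₂ → V) (g₁ : Y₁ → W₁) (g₂ : Y₂ → W₂),
      ∑ w₁, ∑ w₂, γ {z | (u w₁ w₂, v w₂) ∈ K ∨ g₁ (y₁ ((u w₁ w₂, v w₂), z)) ≠ w₁ ∨
          g₂ (y₂ ((u w₁ w₂, v w₂), z)) ≠ w₂} ≤
        Fintype.card W₁ * Fintype.card W₂ *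
          (ENNReal.ofReal (16 * τ / Fintype.card Λ) +
            4 * (μ.prod ν).withDensity r {p | τ < r p} +
            2 * ((((μ.prod ν).withDensity r).prod γ)
                {x | x.1 ∈ K ∨ (y₁ x, x.1.1) ∉ D₁ ∨ (y₂ x, x.1.2) ∉ D₂} +
              (Fintype.card W₁ - 1 : ℕ) * Fintype.card Λ * h₁ +
              (Fintype.card W₂ - 1 : ℕ) * h₂)) := by
  classical
  set E : Set ((U × V) × Z) := {x | x.1 ∈ K ∨ (y₁ x, x.1.1) ∉ D₁ ∨ (y₂ x, x.1.2) ∉ D₂}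
  have hE : MeasurableSet E := measurableSet_mem_or_notMem_or_notMem hy₁ hy₂ hD₁ hD₂ hK
  have hE_eq : ∫⁻ p, r p * γ {z | (p, z) ∈ E} ∂(μ.prod ν) =
      (((μ.prod ν).withDensity r).prod γ) E := by
    rw [Measure.prod_apply hE,
      lintegral_withDensity_eq_lintegral_mul _ hr (measurable_measure_prodMk_left hE)]
    rfl
  have hS : MeasurableSet {p | τ < r p} := measurableSet_lt measurable_const hr
  obtain ⟨q, l, hq⟩ := exists_codebook (W₁ := W₁) (W₂ := W₂) (Λ := Λ) hr
    (measurable_measure_prodMk_left (ν := γ) hE) (measurable_measure_accept (γ := γ) hy₁ hD₁)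
    (measurable_measure_accept (γ := γ) hy₂ hD₂) hr1 (lintegral_measure_accept_le hy₁ hD₁ hh₁)
    (lintegral_measure_accept_le hy₂ hD₂ hh₂) τ
  obtain ⟨g₁, g₂, hg⟩ := exists_decoders_measure_le_errBound γ y₁ y₂ D₁ D₂ K q l
  refine ⟨fun w₁ w₂ => q.1 w₁ (l w₁ w₂), q.2, g₁, g₂, ?_⟩
  rw [withDensity_apply _ hS, ← hE_eq]
  exact (Finset.sum_le_sum fun w₁ _ => Finset.sum_le_sum fun w₂ _ => hg w₁ w₂).trans hq

end OneShot

/-! ### Gaussian log-likelihood ratios -/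

section LogLikelihoodRatio

lemma withDensity_prod_pi {ι : Type*} [Fintype ι] {X : ι → Type*} [∀ i, MeasurableSpace (X i)]
    {μ : ∀ i, Measure (X i)} [∀ i, IsProbabilityMeasure (μ i)] {f : ∀ i, X i → ℝ≥0∞}
    [∀ i, SigmaFinite ((μ i).withDensity (f i))] (hf : ∀ i, Measurable (f i)) :
    (Measure.pi μ).withDensity (fun x => ∏ i, f i (x i)) =
      Measure.pi fun i => (μ i).withDensity (f i) := by
  refine (Measure.pi_eq fun s hs => ?_).symm
  have hfs (i : ι) : Measurable ((s i).indicator (f i)) := (hf i).indicator (hs i)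
  have hind (x : ∀ i, X i) : (Set.univ.pi s).indicator (fun x => ∏ i, f i (x i)) x =
      ∏ i, (s i).indicator (f i) (x i) := by
    by_cases hx : x ∈ Set.univ.pi s
    · rw [Set.indicator_of_mem hx]
      exact Finset.prod_congr rfl fun i _ => (Set.indicator_of_mem (hx i (Set.mem_univ i)) _).symm
    · obtain ⟨i, hi⟩ := not_forall.1 (mt Set.mem_univ_pi.2 hx)
      rw [Set.indicator_of_notMem hx,
        Finset.prod_eq_zero (Finset.mem_univ i) (Set.indicator_of_notMem hi _)]
  rw [withDensity_apply _ (MeasurableSet.univ_pi hs),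
    ← lintegral_indicator (MeasurableSet.univ_pi hs)]
  simp only [hind]
  rw [lintegral_prod_eq_prod_lintegral_of_indepFun Finset.univ
    (fun i (x : ∀ i, X i) => (s i).indicator (f i) (x i))
    (iIndepFun_pi fun i => (hfs i).aemeasurable) fun i => (hfs i).comp (measurable_pi_apply i)]
  refine Finset.prod_congr rfl fun i _ => ?_
  rw [withDensity_apply _ (hs i), ← lintegral_indicator (hs i)]
  exact (measurePreserving_eval μ i).lintegral_comp (hfs i)

/-- The log-density, in nats, of `N(m, w)` with respect to `N(0, B)`, evaluated at `x`. -/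
def gaussianLLR (B w : ℝ≥0) (m x : ℝ) : ℝ :=
  1 / 2 * Real.log (B / w) - (x - m) ^ 2 / (2 * w) + x ^ 2 / (2 * B)

@[fun_prop]
lemma measurable_gaussianLLR {Ω : Type*} [MeasurableSpace Ω] {m x : Ω → ℝ} (hm : Measurable m)
    (hx : Measurable x) (B w : ℝ≥0) : Measurable fun ω => gaussianLLR B w (m ω) (x ω) := by
  unfold gaussianLLR
  fun_prop

variable {ι : Type*} [Fintype ι] {B w : ℝ≥0}

lemma gaussianReal_withDensity_gaussianLLR (hB : B ≠ 0) (hw : w ≠ 0) (m : ℝ) :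
    (gaussianReal 0 B).withDensity (fun x => ENNReal.ofReal (Real.exp (gaussianLLR B w m x))) =
      gaussianReal m w := by
  have hB' : (0 : ℝ) < B := by positivity
  have hpdf (x : ℝ) :
      gaussianPDFReal 0 B x * Real.exp (gaussianLLR B w m x) = gaussianPDFReal m w x := by
    have hsqrt : Real.exp (1 / 2 * Real.log (B / w)) = √B / √w := by
      rw [← Real.sqrt_div hB'.le, Real.sqrt_eq_rpow, Real.rpow_def_of_pos (by positivity), mul_comm]
    have hexp : Real.exp (-(x - 0) ^ 2 / (2 * B)) * Real.exp (gaussianLLR B w m x) =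
        √B / √w * Real.exp (-(x - m) ^ 2 / (2 * w)) := by
      rw [← hsqrt, ← Real.exp_add, ← Real.exp_add, gaussianLLR]
      ring_nf
    unfold gaussianPDFReal
    rw [mul_assoc, hexp, Real.sqrt_mul (by positivity) (B : ℝ),
      Real.sqrt_mul (by positivity) (w : ℝ)]
    field_simp
  rw [gaussianReal_of_var_ne_zero _ hB, gaussianReal_of_var_ne_zero _ hw,
    ← withDensity_mul _ (measurable_gaussianPDF _ _) (by fun_prop)]
  congr 1
  funext x
  rw [Pi.mul_apply, gaussianPDF, gaussianPDF, ← ENNReal.ofReal_mul (gaussianPDFReal_nonneg _ _ _),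
    hpdf]

lemma pi_gaussianReal_withDensity_gaussianLLR (hB : B ≠ 0) (hw : w ≠ 0) (m : ι → ℝ) :
    (Measure.pi fun _ => gaussianReal 0 B).withDensity
        (fun x => ENNReal.ofReal (Real.exp (∑ i, gaussianLLR B w (m i) (x i)))) =
      Measure.pi fun i => gaussianReal (m i) w := by
  have hσ (i : ι) : SigmaFinite ((gaussianReal 0 B).withDensity
      fun x => ENNReal.ofReal (Real.exp (gaussianLLR B w (m i) x))) := by
    rw [gaussianReal_withDensity_gaussianLLR hB hw]
    infer_instance
  simp only [Real.exp_sum, ENNReal.ofReal_prod_of_nonneg fun _ _ => (Real.exp_pos _).le]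
  refine (withDensity_prod_pi (μ := fun _ : ι => gaussianReal 0 B)
    (f := fun i x => ENNReal.ofReal (Real.exp (gaussianLLR B w (m i) x)))
    fun i => by fun_prop).trans ?_
  simp only [gaussianReal_withDensity_gaussianLLR hB hw]

lemma lintegral_exp_sum_gaussianLLR (hB : B ≠ 0) (hw : w ≠ 0) (m : ι → ℝ) :
    ∫⁻ x, ENNReal.ofReal (Real.exp (∑ i, gaussianLLR B w (m i) (x i)))
      ∂(Measure.pi fun _ => gaussianReal 0 B) = 1 := by
  rw [← setLIntegral_univ, ← withDensity_apply _ MeasurableSet.univ,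
    pi_gaussianReal_withDensity_gaussianLLR hB hw, measure_univ]

lemma measure_pi_le_sum_gaussianLLR_le (hB : B ≠ 0) (hw : w ≠ 0) (m : ι → ℝ) (c : ℝ) :
    (Measure.pi fun _ => gaussianReal 0 B) {x | c ≤ ∑ i, gaussianLLR B w (m i) (x i)} ≤
      ENNReal.ofReal (Real.exp (-c)) := by
  have hmarkov := mul_meas_ge_le_lintegral (μ := Measure.pi fun _ : ι => gaussianReal 0 B)
    (f := fun x => ENNReal.ofReal (Real.exp (∑ i, gaussianLLR B w (m i) (x i)))) (by fun_prop)
    (ENNReal.ofReal (Real.exp c))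
  rw [lintegral_exp_sum_gaussianLLR hB hw, mul_comm, ← ENNReal.le_inv_iff_mul_le,
    ← ENNReal.ofReal_inv_of_pos (Real.exp_pos _), ← Real.exp_neg] at hmarkov
  refine (measure_mono fun x hx => ?_).trans hmarkov
  exact ENNReal.ofReal_le_ofReal (Real.exp_le_exp.2 hx)

lemma map_add_right_pi_gaussianReal (m : ι → ℝ) :
    (Measure.pi fun _ => gaussianReal 0 w).map (fun t => t + m) =
      Measure.pi fun i => gaussianReal (m i) w := by
  refine (Measure.pi_map_pi (μ := fun _ : ι => gaussianReal 0 w) (f := fun i x => x + m i)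
    fun i => by fun_prop).trans ?_
  simp only [gaussianReal_map_add_const, zero_add]

lemma measurePreserving_shear (hB : B ≠ 0) (hw : w ≠ 0) (κ : ℝ) (ν : Measure (ι → ℝ))
    [SFinite ν] :
    MeasurePreserving (fun p : (ι → ℝ) × (ι → ℝ) => (p.1 + κ • p.2, p.2))
      ((Measure.pi fun _ => gaussianReal 0 w).prod ν)
      (((Measure.pi fun _ => gaussianReal 0 B).prod ν).withDensity fun p =>
        ENNReal.ofReal (Real.exp (∑ i, gaussianLLR B w (κ * p.2 i) (p.1 i)))) := by
  refine ⟨by fun_prop, Measure.ext fun s hs => ?_⟩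
  have hsec (v : ι → ℝ) : MeasurableSet ((fun u => (u, v)) ⁻¹' s) := hs.preimage (by fun_prop)
  rw [Measure.map_apply (by fun_prop) hs, Measure.prod_apply_symm (hs.preimage (by fun_prop)),
    withDensity_apply _ hs, ← lintegral_indicator hs,
    lintegral_prod_symm' _ (Measurable.indicator (by fun_prop) hs)]
  refine lintegral_congr fun v => ?_
  calc (Measure.pi fun _ => gaussianReal 0 w)
        ((fun t => t + κ • v) ⁻¹' ((fun u => (u, v)) ⁻¹' s))
      = ((Measure.pi fun _ => gaussianReal 0 B).withDensity fun u =>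
          ENNReal.ofReal (Real.exp (∑ i, gaussianLLR B w (κ * v i) (u i))))
            ((fun u => (u, v)) ⁻¹' s) := by
        rw [← Measure.map_apply (by fun_prop) (hsec v), map_add_right_pi_gaussianReal,
          pi_gaussianReal_withDensity_gaussianLLR hB hw]
        rfl
    _ = ∫⁻ u, s.indicator (fun p => ENNReal.ofReal
          (Real.exp (∑ i, gaussianLLR B w (κ * p.2 i) (p.1 i)))) (u, v)
            ∂Measure.pi fun _ => gaussianReal 0 B := by
        rw [withDensity_apply _ (hsec v), ← lintegral_indicator (hsec v)]
        rfl

section Moments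

variable {Ω : Type*} [MeasurableSpace Ω] {P : Measure Ω} {X Y : Ω → ℝ}

lemma memLp_sq_of_hasLaw_gaussianReal {m : ℝ} (hX : HasLaw X (gaussianReal m w) P) :
    MemLp (fun ω => X ω ^ 2) 2 P := by
  have : ENNReal.HolderTriple 4 4 2 := ⟨by
    rw [← two_mul, show (4 : ℝ≥0∞) = 2 * 2 by norm_num, ENNReal.mul_inv (by simp) (by simp),
      ← mul_assoc, ENNReal.mul_inv_cancel (by simp) (by simp), one_mul]⟩
  have h4 : MemLp X 4 P := by
    have := memLp_id_gaussianReal' (μ := m) (v := w) 4 (by simp)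
    rw [← hX.map_eq, memLp_map_measure_iff (by fun_prop) hX.aemeasurable] at this
    exact this
  simp only [pow_two]
  exact h4.mul' h4

lemma integral_sq_of_hasLaw_gaussianReal (hX : HasLaw X (gaussianReal 0 w) P) :
    ∫ ω, X ω ^ 2 ∂P = w := by
  have hvar := variance_eq_integral (μ := gaussianReal 0 w) measurable_id.aemeasurable
  rw [variance_id_gaussianReal] at hvar
  rw [hvar, ← hX.integral_comp (by fun_prop)]
  simp

lemma memLp_gaussianLLR {m : Ω → ℝ} [IsFiniteMeasure P] (hX : HasLaw X (gaussianReal 0 B) P)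
    (hXm : HasLaw (fun ω => X ω - m ω) (gaussianReal 0 w) P) :
    MemLp (fun ω => gaussianLLR B w (m ω) (X ω)) 2 P :=
  (((memLp_const _).sub ((memLp_sq_of_hasLaw_gaussianReal hXm).mul_const _)).add
    ((memLp_sq_of_hasLaw_gaussianReal hX).mul_const _))

lemma integral_gaussianLLR [IsProbabilityMeasure P] {m : Ω → ℝ} (hB : B ≠ 0) (hw : w ≠ 0)
    (hX : HasLaw X (gaussianReal 0 B) P)
    (hXm : HasLaw (fun ω => X ω - m ω) (gaussianReal 0 w) P) :
    ∫ ω, gaussianLLR B w (m ω) (X ω) ∂P = 1 / 2 * Real.log (B / w) := by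
  have hiX := ((memLp_sq_of_hasLaw_gaussianReal hX).integrable one_le_two).div_const (2 * (B : ℝ))
  have hiXm :=
    ((memLp_sq_of_hasLaw_gaussianReal hXm).integrable one_le_two).div_const (2 * (w : ℝ))
  have hsub : Integrable
      (fun ω => 1 / 2 * Real.log (B / w) - (X ω - m ω) ^ 2 / (2 * (w : ℝ))) P :=
    (integrable_const _).sub hiXm
  unfold gaussianLLR
  rw [integral_add hsub hiX, integral_sub (integrable_const _) hiXm,
    integral_div, integral_div, integral_sq_of_hasLaw_gaussianReal hX,
    integral_sq_of_hasLaw_gaussianReal hXm]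
  have : (B : ℝ) ≠ 0 := by positivity
  have : (w : ℝ) ≠ 0 := by positivity
  simp only [one_div, integral_const, probReal_univ, smul_eq_mul, one_mul]
  field_simp
  ring

end Moments

end LogLikelihoodRatio

/-! ### Three independent Gaussian layers -/

section Layers

/-- The joint law of one use of the two codeword layers `T`, `V` and of the noise `Z`: three
independent standard Gaussians, nested as `((T, V), Z)`. -/
def layerLaw : Measure ((ℝ × ℝ) × ℝ) :=
  ((gaussianReal 0 1).prod (gaussianReal 0 1)).prod (gaussianReal 0 1)

/-- The joint law of `n` independent uses of the layers, as a triple of words `((T, V), Z)`. -/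
def layerLawN (n : ℕ) : Measure (((Fin n → ℝ) × (Fin n → ℝ)) × (Fin n → ℝ)) :=
  ((stdGaussN n).prod (stdGaussN n)).prod (stdGaussN n)

instance isProbabilityMeasure_stdGaussN (n : ℕ) : IsProbabilityMeasure (stdGaussN n) := by
  unfold stdGaussN
  infer_instance

instance isProbabilityMeasure_layerLaw : IsProbabilityMeasure layerLaw := by
  unfold layerLaw
  infer_instance

instance isProbabilityMeasure_layerLawN (n : ℕ) : IsProbabilityMeasure (layerLawN n) := by
  unfold layerLawN
  infer_instance

/-- The `i`-th letters of a triple of words. -/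
def letters {n : ℕ} (x : ((Fin n → ℝ) × (Fin n → ℝ)) × (Fin n → ℝ)) (i : Fin n) : (ℝ × ℝ) × ℝ :=
  ((x.1.1 i, x.1.2 i), x.2 i)

lemma measurePreserving_letters (n : ℕ) :
    MeasurePreserving letters (layerLawN n) (Measure.pi fun _ : Fin n => layerLaw) := by
  have hpair := (measurePreserving_arrowProdEquivProdArrow ℝ ℝ (Fin n)
    (fun _ => gaussianReal 0 1) fun _ => gaussianReal 0 1).symm
  have htriple := (measurePreserving_arrowProdEquivProdArrow (ℝ × ℝ) ℝ (Fin n)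
    (fun _ => (gaussianReal 0 1).prod (gaussianReal 0 1)) fun _ => gaussianReal 0 1).symm
  exact htriple.comp (hpair.prod (MeasurePreserving.id _))

lemma tendsto_layerLawN_sum_lt {φ : (ℝ × ℝ) × ℝ → ℝ} (hφm : Measurable φ)
    (hφ : MemLp φ 2 layerLaw) {c : ℝ} (hc : c < ∫ x, φ x ∂layerLaw) :
    Tendsto (fun n : ℕ => layerLawN n {x | ∑ i, φ (letters x i) < n * c}) atTop (𝓝 0) := by
  refine (tendsto_measure_pi_sum_lt hφ hc).congr fun n => ?_
  exact ((measurePreserving_letters n).measure_preimage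
    (measurableSet_lt (by fun_prop) (by fun_prop)).nullMeasurableSet).symm

lemma tendsto_layerLawN_lt_sum {φ : (ℝ × ℝ) × ℝ → ℝ} (hφm : Measurable φ)
    (hφ : MemLp φ 2 layerLaw) {c : ℝ} (hc : ∫ x, φ x ∂layerLaw < c) :
    Tendsto (fun n : ℕ => layerLawN n {x | n * c < ∑ i, φ (letters x i)}) atTop (𝓝 0) := by
  refine (tendsto_measure_pi_lt_sum hφ hc).congr fun n => ?_
  exact ((measurePreserving_letters n).measure_preimage
    (measurableSet_lt (by fun_prop) (by fun_prop)).nullMeasurableSet).symm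

lemma hasLaw_fst_add_snd_gaussianReal {Ω₁ Ω₂ : Type*} [MeasurableSpace Ω₁] [MeasurableSpace Ω₂]
    {μ : Measure Ω₁} {ν : Measure Ω₂} [IsProbabilityMeasure μ] [IsProbabilityMeasure ν]
    {X : Ω₁ → ℝ} {Y : Ω₂ → ℝ} {m₁ m₂ : ℝ} {w₁ w₂ : ℝ≥0}
    (hX : HasLaw X (gaussianReal m₁ w₁) μ) (hY : HasLaw Y (gaussianReal m₂ w₂) ν) :
    HasLaw (fun ω : Ω₁ × Ω₂ => X ω.1 + Y ω.2) (gaussianReal (m₁ + m₂) (w₁ + w₂)) (μ.prod ν) := by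
  have hX' := hX.comp (measurePreserving_fst (μ := μ) (ν := ν)).hasLaw
  have hY' := hY.comp (measurePreserving_snd (μ := μ) (ν := ν)).hasLaw
  exact ⟨hX'.aemeasurable.add hY'.aemeasurable, gaussianReal_add_gaussianReal_of_indepFun
    (indepFun_prod₀ hX.aemeasurable hY.aemeasurable) hX'.map_eq hY'.map_eq⟩

lemma hasLaw_linear_layerLaw (k l m : ℝ) {w : ℝ≥0} (hw : (w : ℝ) = k ^ 2 + l ^ 2 + m ^ 2) :
    HasLaw (fun x : (ℝ × ℝ) × ℝ => k * x.1.1 + l * x.1.2 + m * x.2) (gaussianReal 0 w)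
      layerLaw := by
  have hscale (c : ℝ) :
      HasLaw (fun x => c * x) (gaussianReal 0 (.mk (c ^ 2) (sq_nonneg c))) (gaussianReal 0 1) := by
    simpa only [mul_zero, mul_one, id] using
      gaussianReal_const_mul (HasLaw.id (μ := gaussianReal 0 1)) c
  have hvar : w = .mk (k ^ 2) (sq_nonneg k) + .mk (l ^ 2) (sq_nonneg l) +
      .mk (m ^ 2) (sq_nonneg m) := NNReal.eq hw
  simpa only [hvar, add_zero, layerLaw] using hasLaw_fst_add_snd_gaussianReal
    (hasLaw_fst_add_snd_gaussianReal (hscale k) (hscale l)) (hscale m)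

variable {B w : ℝ≥0} {X m : (ℝ × ℝ) × ℝ → ℝ}

lemma tendsto_layerLawN_sum_gaussianLLR_lt (hB : B ≠ 0) (hw : w ≠ 0) (hm : Measurable m)
    (hXmeas : Measurable X) (hX : HasLaw X (gaussianReal 0 B) layerLaw)
    (hXm : HasLaw (fun ω => X ω - m ω) (gaussianReal 0 w) layerLaw) {c : ℝ}
    (hc : c < 1 / 2 * Real.log (B / w)) :
    Tendsto (fun n : ℕ => layerLawN n
      {x | ∑ i, gaussianLLR B w (m (letters x i)) (X (letters x i)) < n * c}) atTop (𝓝 0) :=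
  tendsto_layerLawN_sum_lt (φ := fun x => gaussianLLR B w (m x) (X x)) (by fun_prop)
    (memLp_gaussianLLR hX hXm) (by rwa [integral_gaussianLLR hB hw hX hXm])

lemma tendsto_layerLawN_lt_sum_gaussianLLR (hB : B ≠ 0) (hw : w ≠ 0) (hm : Measurable m)
    (hXmeas : Measurable X) (hX : HasLaw X (gaussianReal 0 B) layerLaw)
    (hXm : HasLaw (fun ω => X ω - m ω) (gaussianReal 0 w) layerLaw) {c : ℝ}
    (hc : 1 / 2 * Real.log (B / w) < c) :
    Tendsto (fun n : ℕ => layerLawN n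
      {x | n * c < ∑ i, gaussianLLR B w (m (letters x i)) (X (letters x i))}) atTop (𝓝 0) :=
  tendsto_layerLawN_lt_sum (φ := fun x => gaussianLLR B w (m x) (X x)) (by fun_prop)
    (memLp_gaussianLLR hX hXm) (by rwa [integral_gaussianLLR hB hw hX hXm])

lemma tendsto_layerLawN_lt_sum_sq {k l θ c : ℝ} (hc : 0 ≤ c) (hθ : θ < 1)
    (hkl : k ^ 2 + l ^ 2 ≤ θ * c) :
    Tendsto (fun n : ℕ => layerLawN n
      {x | n * c < ∑ i, (k * x.1.1 i + l * x.1.2 i) ^ 2}) atTop (𝓝 0) := by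
  rcases hc.eq_or_lt with rfl | hc
  · have hk : k = 0 := by nlinarith
    have hl : l = 0 := by nlinarith
    simp [hk, hl]
  · have hlaw := hasLaw_linear_layerLaw k l 0 (w := .mk (k ^ 2 + l ^ 2) (by positivity))
      (by simp)
    simp only [zero_mul, add_zero] at hlaw
    exact tendsto_layerLawN_lt_sum (φ := fun x => (k * x.1.1 + l * x.1.2) ^ 2) (by fun_prop)
      (memLp_sq_of_hasLaw_gaussianReal hlaw)
      ((integral_sq_of_hasLaw_gaussianReal hlaw).trans_lt (by
        rw [NNReal.coe_mk]
        nlinarith))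

end Layers

/-! ### Costa's choice of the auxiliary word -/

section Costa

/-- The capacity, in nats per use, of the Gaussian channel with signal-to-noise ratio `s`. -/
def awgnCapacity (s : ℝ) : ℝ :=
  1 / 2 * Real.log (1 + s)

lemma awgnCapacity_nonneg {s : ℝ} (hs : 0 ≤ s) : 0 ≤ awgnCapacity s :=
  mul_nonneg one_half_pos.le (Real.log_nonneg (by linarith))

lemma awgnCapacity_eq_mul_logb (s : ℝ) :
    awgnCapacity s = 1 / 2 * Real.logb 2 (1 + s) * Real.log 2 := by
  rw [awgnCapacity, mul_assoc, Real.logb, div_mul_cancel₀ _ (Real.log_pos one_lt_two).ne']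

lemma continuousAt_awgnCapacity {s : ℝ} (hs : 0 ≤ s) : ContinuousAt awgnCapacity s := by
  have : 1 + s ≠ 0 := by positivity
  unfold awgnCapacity
  fun_prop (disch := assumption)

/-- Costa's coefficient `κ` of the auxiliary word `U = T + κ V`, for a receiver that observes
`σ T + s V + Z`. -/
def costaCoeff (σ s : ℝ) : ℝ :=
  σ * s / (1 + σ ^ 2)

variable {B w : ℝ≥0} {σ s κ c : ℝ}

lemma tendsto_layerLawN_lt_covering (hB : (B : ℝ) = 1 + κ ^ 2) (hc : awgnCapacity (κ ^ 2) < c) :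
    Tendsto (fun n : ℕ => layerLawN n
      {x | n * c < ∑ i, gaussianLLR B 1 (κ * x.1.2 i) (x.1.1 i + κ * x.1.2 i)}) atTop (𝓝 0) := by
  have hB0 : B ≠ 0 := NNReal.coe_ne_zero.1 (by rw [hB]; positivity)
  refine tendsto_layerLawN_lt_sum_gaussianLLR (m := fun x => κ * x.1.2)
    (X := fun x => x.1.1 + κ * x.1.2) hB0 one_ne_zero (by fun_prop) (by fun_prop) ?_ ?_ ?_
  · simpa using hasLaw_linear_layerLaw 1 κ 0 (w := B) (by simp [hB])
  · simpa using hasLaw_linear_layerLaw 1 0 0 (w := 1) (by simp)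
  · simpa [hB, awgnCapacity] using hc

/-- With Costa's coefficient, the error `U - σ / (1 + σ²) · (σ T + s V + Z)` of the linear estimate
of the auxiliary letter is `(T - σ Z) / (1 + σ²)`, free of the interference `V`. -/
lemma tendsto_layerLawN_auxiliary_lt (hB : (B : ℝ) = 1 + costaCoeff σ s ^ 2)
    (hw : (w : ℝ) = 1 / (1 + σ ^ 2))
    (hc : c < awgnCapacity (costaCoeff σ s ^ 2) + awgnCapacity (σ ^ 2)) :
    Tendsto (fun n : ℕ => layerLawN n
      {x | ∑ i, gaussianLLR B w (σ / (1 + σ ^ 2) * (σ * x.1.1 i + s * x.1.2 i + x.2 i))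
        (x.1.1 i + costaCoeff σ s * x.1.2 i) < n * c}) atTop (𝓝 0) := by
  have hB0 : B ≠ 0 := NNReal.coe_ne_zero.1 (by rw [hB]; positivity)
  have hw0 : w ≠ 0 := NNReal.coe_ne_zero.1 (by rw [hw]; positivity)
  refine tendsto_layerLawN_sum_gaussianLLR_lt
    (m := fun x => σ / (1 + σ ^ 2) * (σ * x.1.1 + s * x.1.2 + x.2))
    (X := fun x => x.1.1 + costaCoeff σ s * x.1.2) hB0 hw0 (by fun_prop) (by fun_prop) ?_ ?_ ?_
  · simpa using hasLaw_linear_layerLaw 1 (costaCoeff σ s) 0 (w := B) (by simp [hB])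
  · convert hasLaw_linear_layerLaw (1 / (1 + σ ^ 2)) 0 (-σ / (1 + σ ^ 2)) (w := w) _ using 2 with x
    · unfold costaCoeff
      field_simp
      ring
    · rw [hw]
      field_simp
      ring
  · refine hc.trans_eq ?_
    rw [hB, hw, div_div_eq_mul_div, div_one, Real.log_mul (by positivity) (by positivity),
      awgnCapacity, awgnCapacity, mul_add]

lemma tendsto_layerLawN_word_lt {e : ℝ} (hw : (w : ℝ) = (1 + e ^ 2) / (1 + e ^ 2 + s ^ 2))
    (hc : c < awgnCapacity (s ^ 2 / (1 + e ^ 2))) :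
    Tendsto (fun n : ℕ => layerLawN n
      {x | ∑ i, gaussianLLR 1 w (s / (1 + e ^ 2 + s ^ 2) * (e * x.1.1 i + s * x.1.2 i + x.2 i))
        (x.1.2 i) < n * c}) atTop (𝓝 0) := by
  have hw0 : w ≠ 0 := NNReal.coe_ne_zero.1 (by rw [hw]; positivity)
  refine tendsto_layerLawN_sum_gaussianLLR_lt
    (m := fun x => s / (1 + e ^ 2 + s ^ 2) * (e * x.1.1 + s * x.1.2 + x.2))
    (X := fun x => x.1.2) one_ne_zero hw0 (by fun_prop) (by fun_prop) ?_ ?_ ?_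
  · simpa using hasLaw_linear_layerLaw 0 1 0 (w := 1) (by simp)
  · convert hasLaw_linear_layerLaw (-(s * e) / (1 + e ^ 2 + s ^ 2))
      ((1 + e ^ 2) / (1 + e ^ 2 + s ^ 2)) (-s / (1 + e ^ 2 + s ^ 2)) (w := w) _ using 2 with x
    · field_simp
      ring
    · rw [hw]
      field_simp
      ring
  · refine hc.trans_eq ?_
    rw [hw, NNReal.coe_one, one_div_div, add_div, div_self (by positivity), awgnCapacity]

end Costa

/-! ### The superposition code -/

section Code

variable {a b P1 P2 : ℝ} {n : ℕ}

/-- There is a code of length `n` with `M1` and `M2` messages, all of whose codewords obey the power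
constraints and whose average error probabilities are at most `ε`. -/
def HasCode (a b P1 P2 ε : ℝ) (n M1 M2 : ℕ) : Prop :=
  ∃ (f1 : Fin M1 → Fin M2 → Fin n → ℝ) (f2 : Fin M2 → Fin n → ℝ)
    (g1 : (Fin n → ℝ) → Fin M1) (g2 : (Fin n → ℝ) → Fin M2),
    (∀ w1 w2, ∑ i, f1 w1 w2 i ^ 2 ≤ n * P1) ∧ (∀ w2, ∑ i, f2 w2 i ^ 2 ≤ n * P2) ∧
    peG1T1 a n M1 M2 f1 f2 g1 ≤ ε ∧ peG2T1 b n M1 M2 f1 f2 g2 ≤ ε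

lemma mean_toReal_le {M1 M2 : ℕ} [NeZero M1] [NeZero M2] {p : Fin M1 → Fin M2 → ℝ≥0∞} {ε : ℝ}
    (hε : 0 ≤ ε) (hp : ∑ w1, ∑ w2, p w1 w2 ≤ M1 * M2 * ENNReal.ofReal ε) :
    (1 / (M1 * M2) : ℝ) * ∑ w1, ∑ w2, (p w1 w2).toReal ≤ ε := by
  have hM1 : (0 : ℝ) < M1 := Nat.cast_pos.2 (NeZero.pos M1)
  have hM2 : (0 : ℝ) < M2 := Nat.cast_pos.2 (NeZero.pos M2)
  have htop : (M1 * M2 * ENNReal.ofReal ε : ℝ≥0∞) ≠ ∞ := by finiteness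
  have hfin (w1 : Fin M1) : ∑ w2, p w1 w2 ≠ ∞ :=
    ((Finset.single_le_sum_of_canonicallyOrdered (Finset.mem_univ w1)).trans hp).trans_lt
      htop.lt_top |>.ne
  have hp' := ENNReal.toReal_mono htop hp
  rw [ENNReal.toReal_sum fun w1 _ => hfin w1] at hp'
  simp only [ENNReal.toReal_sum fun w2 _ => ENNReal.sum_ne_top.1 (hfin _) w2 (Finset.mem_univ w2),
    ENNReal.toReal_mul, ENNReal.toReal_natCast, ENNReal.toReal_ofReal hε] at hp'
  rwa [one_div_mul_eq_div, div_le_iff₀' (by positivity)]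

/-- Replacing the codewords that violate their power constraint by zero words costs no more than the
violation event. -/
lemma hasCode_of_sum_measure_le {M1 M2 : ℕ} [NeZero M1] [NeZero M2] {ε : ℝ} (hP1 : 0 ≤ P1)
    (hP2 : 0 ≤ P2) (hε : 0 ≤ ε) {f1 : Fin M1 → Fin M2 → Fin n → ℝ} {f2 : Fin M2 → Fin n → ℝ}
    {g1 : (Fin n → ℝ) → Fin M1} {g2 : (Fin n → ℝ) → Fin M2}
    (h : ∑ w1, ∑ w2, stdGaussN n {z |
      (n * P1 < ∑ i, f1 w1 w2 i ^ 2 ∨ n * P2 < ∑ i, f2 w2 i ^ 2) ∨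
        g1 (fun i => f1 w1 w2 i + a * f2 w2 i + z i) ≠ w1 ∨
        g2 (fun i => b * f1 w1 w2 i + f2 w2 i + z i) ≠ w2} ≤ M1 * M2 * ENNReal.ofReal ε) :
    HasCode a b P1 P2 ε n M1 M2 := by
  classical
  have hzero {P : ℝ} (hP : 0 ≤ P) (x : Fin n → ℝ) :
      ∑ i, (if n * P < ∑ j, x j ^ 2 then 0 else x) i ^ 2 ≤ n * P := by
    split_ifs with hx
    · simpa using mul_nonneg n.cast_nonneg hP
    · exact not_lt.1 hx
  refine ⟨fun w1 w2 => if n * P1 < ∑ i, f1 w1 w2 i ^ 2 then 0 else f1 w1 w2,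
    fun w2 => if n * P2 < ∑ i, f2 w2 i ^ 2 then 0 else f2 w2, g1, g2,
    fun w1 w2 => hzero hP1 _, fun w2 => hzero hP2 _, mean_toReal_le hε (le_trans ?_ h),
    mean_toReal_le hε (le_trans ?_ h)⟩ <;>
  · refine Finset.sum_le_sum fun w1 _ => Finset.sum_le_sum fun w2 _ => measure_mono fun z hz => ?_
    rw [Set.mem_ofPred_eq] at hz ⊢
    by_cases hpow : n * P1 < ∑ i, f1 w1 w2 i ^ 2 ∨ n * P2 < ∑ i, f2 w2 i ^ 2
    · exact Or.inl hpow
    · obtain ⟨hpow1, hpow2⟩ := not_or.1 hpow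
      simp only [if_neg hpow1, if_neg hpow2] at hz
      tauto

end Code

section AuxiliaryWord

variable {n : ℕ} {B w : ℝ≥0} {κ c : ℝ}

/-- The density of the law of `(T + κ V, V)` with respect to `N(0, B)ⁿ ⊗ N(0, 1)ⁿ`. -/
def auxDensity (B : ℝ≥0) (κ : ℝ) (x : (Fin n → ℝ) × (Fin n → ℝ)) : ℝ≥0∞ :=
  ENNReal.ofReal (Real.exp (∑ i, gaussianLLR B 1 (κ * x.2 i) (x.1 i)))

/-- The joint law of the auxiliary word `T + κ V` and of the word `V`, given by its density because
the auxiliary words of the random code are drawn from `N(0, B)ⁿ`, independently of `V`. -/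
def auxLaw (B : ℝ≥0) (κ : ℝ) (n : ℕ) : Measure ((Fin n → ℝ) × (Fin n → ℝ)) :=
  ((Measure.pi fun _ => gaussianReal 0 B).prod (stdGaussN n)).withDensity (auxDensity B κ)

/-- The pairs `(y, x)` for which the candidate word `x ∼ N(0, B)ⁿ` passes the test that it was sent,
given that it should be `N(k y, w)ⁿ` after reception of `y`. -/
def acceptance (B w : ℝ≥0) (k c : ℝ) (n : ℕ) : Set ((Fin n → ℝ) × (Fin n → ℝ)) :=
  {x | c ≤ ∑ i, gaussianLLR B w (k * x.1 i) (x.2 i)}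

@[fun_prop]
lemma measurable_auxDensity : Measurable (auxDensity (n := n) B κ) := by
  unfold auxDensity
  fun_prop

lemma measurableSet_acceptance {k : ℝ} : MeasurableSet (acceptance B w k c n) :=
  measurableSet_le (by fun_prop) (by fun_prop)

lemma measure_acceptance_le (hB : B ≠ 0) (hw : w ≠ 0) (k c : ℝ) (y : Fin n → ℝ) :
    (Measure.pi fun _ => gaussianReal 0 B) {x | (y, x) ∈ acceptance B w k c n} ≤
      ENNReal.ofReal (Real.exp (-c)) :=
  measure_pi_le_sum_gaussianLLR_le hB hw (fun i => k * y i) c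

lemma measurePreserving_auxLaw (hB : B ≠ 0) (κ : ℝ) (n : ℕ) :
    MeasurePreserving (fun x => ((x.1.1 + κ • x.1.2, x.1.2), x.2)) (layerLawN n)
      ((auxLaw B κ n).prod (stdGaussN n)) :=
  have hshear := measurePreserving_shear hB one_ne_zero κ (stdGaussN n)
  have : SFinite (auxLaw B κ n) := by
    unfold auxLaw
    infer_instance
  hshear.prod (MeasurePreserving.id (stdGaussN n))

end AuxiliaryWord

/-- The gains of a superposition code, whose layers are `T` (message 1) and `V` (message 2):
transmitter 1 sends `σ T + q V`, transmitter 2 sends `p V`, and the auxiliary word is `T + κ V`. -/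
structure Superposition where
  σ : ℝ
  q : ℝ
  p : ℝ
  κ : ℝ

namespace Superposition

variable (S : Superposition) {a b P1 P2 ε : ℝ} {n : ℕ} {B w₁ w₂ : ℝ≥0}

/-- The word sent by transmitter 1, as a function of the auxiliary word and of `V`. -/
def input₁ (x : (Fin n → ℝ) × (Fin n → ℝ)) (i : Fin n) : ℝ :=
  S.σ * (x.1 i - S.κ * x.2 i) + S.q * x.2 i

/-- The word sent by transmitter 2, as a function of `V`. -/
def input₂ (v : Fin n → ℝ) (i : Fin n) : ℝ :=
  S.p * v i

/-- The word received by receiver 1, as a function of the auxiliary word, `V` and the noise. -/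
def output₁ (a : ℝ) (x : ((Fin n → ℝ) × (Fin n → ℝ)) × (Fin n → ℝ)) (i : Fin n) : ℝ :=
  S.input₁ x.1 i + a * S.input₂ x.1.2 i + x.2 i

/-- The word received by receiver 2, as a function of the auxiliary word, `V` and the noise. -/
def output₂ (b : ℝ) (x : ((Fin n → ℝ) × (Fin n → ℝ)) × (Fin n → ℝ)) (i : Fin n) : ℝ :=
  b * S.input₁ x.1 i + S.input₂ x.1.2 i + x.2 i

/-- The auxiliary words and words `V` for which some transmitter exceeds its power. -/
def overPower (P1 P2 : ℝ) (n : ℕ) : Set ((Fin n → ℝ) × (Fin n → ℝ)) :=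
  {x | n * P1 < ∑ i, S.input₁ x i ^ 2 ∨ n * P2 < ∑ i, S.input₂ x.2 i ^ 2}

/-- The event that some transmitter exceeds its power or some receiver rejects the word sent. -/
def failure (a b P1 P2 : ℝ) (D₁ D₂ : Set ((Fin n → ℝ) × (Fin n → ℝ))) :
    Set (((Fin n → ℝ) × (Fin n → ℝ)) × (Fin n → ℝ)) :=
  {x | x.1 ∈ S.overPower P1 P2 n ∨ (S.output₁ a x, x.1.1) ∉ D₁ ∨ (S.output₂ b x, x.1.2) ∉ D₂}

@[fun_prop]
lemma measurable_input₁ : Measurable (S.input₁ (n := n)) := by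
  unfold input₁
  fun_prop

@[fun_prop]
lemma measurable_input₂ : Measurable (S.input₂ (n := n)) := by
  unfold input₂
  fun_prop

@[fun_prop]
lemma measurable_output₁ : Measurable (S.output₁ (n := n) a) := by
  unfold output₁
  fun_prop

@[fun_prop]
lemma measurable_output₂ : Measurable (S.output₂ (n := n) b) := by
  unfold output₂
  fun_prop

lemma measurableSet_overPower : MeasurableSet (S.overPower P1 P2 n) :=
  (measurableSet_lt (f := fun _ => n * P1) (g := fun x => ∑ i, S.input₁ x i ^ 2)
    (by fun_prop) (by fun_prop)).union
  (measurableSet_lt (f := fun _ => n * P2)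
    (g := fun x : (Fin n → ℝ) × (Fin n → ℝ) => ∑ i, S.input₂ x.2 i ^ 2)
    (by fun_prop) (by fun_prop))

lemma measurableSet_failure {D₁ D₂ : Set ((Fin n → ℝ) × (Fin n → ℝ))} (hD₁ : MeasurableSet D₁)
    (hD₂ : MeasurableSet D₂) : MeasurableSet (S.failure a b P1 P2 D₁ D₂) :=
  measurableSet_mem_or_notMem_or_notMem S.measurable_output₁ S.measurable_output₂ hD₁ hD₂
    S.measurableSet_overPower

lemma hasCode (hP1 : 0 ≤ P1) (hP2 : 0 ≤ P2) (hε : 0 ≤ ε) (hB : B ≠ 0) (hw₁ : w₁ ≠ 0)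
    (hw₂ : w₂ ≠ 0) {k₁ k₂ c₁ c₂ : ℝ} (τ : ℝ≥0) {m₁ m₂ : ℕ} (l : ℕ)
    (h : ENNReal.ofReal (16 * τ / (l + 1 : ℕ)) +
        4 * auxLaw B S.κ n {x | τ < auxDensity B S.κ x} +
        2 * ((auxLaw B S.κ n).prod (stdGaussN n) (S.failure a b P1 P2
            (acceptance B w₁ k₁ c₁ n) (acceptance 1 w₂ k₂ c₂ n)) +
          m₁ * (l + 1 : ℕ) * ENNReal.ofReal (Real.exp (-c₁)) +
          m₂ * ENNReal.ofReal (Real.exp (-c₂))) ≤ ENNReal.ofReal ε) :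
    HasCode a b P1 P2 ε n (m₁ + 1) (m₂ + 1) := by
  have hr1 (v : Fin n → ℝ) :
      ∫⁻ u, auxDensity B S.κ (u, v) ∂(Measure.pi fun _ => gaussianReal 0 B) = 1 :=
    lintegral_exp_sum_gaussianLLR hB one_ne_zero fun i => S.κ * v i
  obtain ⟨u, v, g1, g2, hcode⟩ := exists_code (W₁ := Fin (m₁ + 1)) (W₂ := Fin (m₂ + 1))
    (Λ := Fin (l + 1)) (γ := stdGaussN n) (ν := stdGaussN n) (S.measurable_output₁ (a := a))
    (S.measurable_output₂ (b := b)) measurableSet_acceptance measurableSet_acceptance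
    (S.measurableSet_overPower (P1 := P1) (P2 := P2)) measurable_auxDensity hr1
    (measure_acceptance_le hB hw₁ k₁ c₁) (measure_acceptance_le one_ne_zero hw₂ k₂ c₂) τ
  refine hasCode_of_sum_measure_le (f1 := fun w1 w2 => S.input₁ (u w1 w2, v w2))
    (f2 := fun w2 => S.input₂ (v w2)) (g1 := g1) (g2 := g2) hP1 hP2 hε (hcode.trans ?_)
  simp only [Fintype.card_fin, Nat.add_sub_cancel]
  exact mul_le_mul_right h _

end Superposition

/-! ### Asymptotics -/

lemma tendsto_auxLaw_lt_auxDensity {B : ℝ≥0} {κ c : ℝ} (hB : (B : ℝ) = 1 + κ ^ 2)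
    (hc : awgnCapacity (κ ^ 2) < c) :
    Tendsto (fun n : ℕ => auxLaw B κ n {x | ENNReal.ofReal (Real.exp (n * c)) < auxDensity B κ x})
      atTop (𝓝 0) := by
  have hB0 : B ≠ 0 := NNReal.coe_ne_zero.1 (by rw [hB]; positivity)
  refine (tendsto_layerLawN_lt_covering hB hc).congr fun n => ?_
  have : SFinite (auxLaw B κ n) := by
    unfold auxLaw
    infer_instance
  have hlaw := measurePreserving_fst.comp (measurePreserving_auxLaw hB0 κ n)
  rw [← hlaw.measure_preimage
    (measurableSet_lt (by fun_prop) (by fun_prop)).nullMeasurableSet]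
  congr 1
  ext x
  simp [auxDensity, ENNReal.ofReal_lt_ofReal_iff (Real.exp_pos _)]

namespace Superposition

variable (S : Superposition) {a b : ℝ} {n : ℕ} (x : ((Fin n → ℝ) × (Fin n → ℝ)) × (Fin n → ℝ))

lemma input₁_add_smul (t v : Fin n → ℝ) (i : Fin n) :
    S.input₁ (t + S.κ • v, v) i = S.σ * t i + S.q * v i := by
  simp [input₁]

lemma output₁_add_smul (t v z : Fin n → ℝ) (i : Fin n) :
    S.output₁ a ((t + S.κ • v, v), z) i = S.σ * t i + (S.q + a * S.p) * v i + z i := by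
  rw [output₁, input₁_add_smul, input₂]
  ring

lemma output₂_add_smul (t v z : Fin n → ℝ) (i : Fin n) :
    S.output₂ b ((t + S.κ • v, v), z) i = b * S.σ * t i + (b * S.q + S.p) * v i + z i := by
  rw [output₂, input₁_add_smul, input₂]
  ring

variable {S} {P1 P2 : ℝ} {B w₁ w₂ : ℝ≥0} {x}

lemma mem_failure_add_smul {k₁ k₂ c₁ c₂ : ℝ} :
    ((x.1.1 + S.κ • x.1.2, x.1.2), x.2) ∈
        S.failure a b P1 P2 (acceptance B w₁ k₁ c₁ n) (acceptance 1 w₂ k₂ c₂ n) ↔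
      (n * P1 < ∑ i, (S.σ * x.1.1 i + S.q * x.1.2 i) ^ 2 ∨
        n * P2 < ∑ i, (0 * x.1.1 i + S.p * x.1.2 i) ^ 2) ∨
      ∑ i, gaussianLLR B w₁ (k₁ * (S.σ * x.1.1 i + (S.q + a * S.p) * x.1.2 i + x.2 i))
        (x.1.1 i + S.κ * x.1.2 i) < c₁ ∨
      ∑ i, gaussianLLR 1 w₂ (k₂ * (b * S.σ * x.1.1 i + (b * S.q + S.p) * x.1.2 i + x.2 i))
        (x.1.2 i) < c₂ := by
  simp only [failure, overPower, acceptance, Set.mem_ofPred_eq, input₁_add_smul, output₁_add_smul,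
    output₂_add_smul, input₂, not_le, zero_mul, zero_add, Pi.add_apply, Pi.smul_apply, smul_eq_mul]

lemma tendsto_failure (hP1 : 0 ≤ P1) (hP2 : 0 ≤ P2) {θ : ℝ} (hθ : θ < 1)
    (hpow₁ : S.σ ^ 2 + S.q ^ 2 ≤ θ * P1) (hpow₂ : S.p ^ 2 ≤ θ * P2)
    (hκ : S.κ = costaCoeff S.σ (S.q + a * S.p)) (hB : (B : ℝ) = 1 + S.κ ^ 2)
    (hw₁ : (w₁ : ℝ) = 1 / (1 + S.σ ^ 2))
    (hw₂ : (w₂ : ℝ) = (1 + (b * S.σ) ^ 2) / (1 + (b * S.σ) ^ 2 + (b * S.q + S.p) ^ 2)) {c₁ c₂ : ℝ}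
    (hc₁ : c₁ < awgnCapacity (S.κ ^ 2) + awgnCapacity (S.σ ^ 2))
    (hc₂ : c₂ < awgnCapacity ((b * S.q + S.p) ^ 2 / (1 + (b * S.σ) ^ 2))) :
    Tendsto (fun n : ℕ => (auxLaw B S.κ n).prod (stdGaussN n) (S.failure a b P1 P2
      (acceptance B w₁ (S.σ / (1 + S.σ ^ 2)) (n * c₁) n)
      (acceptance 1 w₂ ((b * S.q + S.p) / (1 + (b * S.σ) ^ 2 + (b * S.q + S.p) ^ 2)) (n * c₂) n)))
      atTop (𝓝 0) := by
  have hB0 : B ≠ 0 := NNReal.coe_ne_zero.1 (by rw [hB]; positivity)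
  have hlim := (((tendsto_layerLawN_lt_sum_sq hP1 hθ hpow₁).add
    (tendsto_layerLawN_lt_sum_sq (k := 0) (l := S.p) hP2 hθ (by simpa using hpow₂))).add
    (tendsto_layerLawN_auxiliary_lt (hκ ▸ hB) hw₁ (hκ ▸ hc₁))).add
    (tendsto_layerLawN_word_lt hw₂ hc₂)
  simp only [add_zero] at hlim
  refine tendsto_of_tendsto_of_tendsto_of_le_of_le tendsto_const_nhds hlim (fun _ => zero_le)
    fun n => ?_
  dsimp only
  rw [← (measurePreserving_auxLaw hB0 S.κ n).measure_preimage (measurableSet_failure S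
    measurableSet_acceptance measurableSet_acceptance).nullMeasurableSet]
  refine (measure_mono fun x hx => ?_).trans ((measure_union_le _ _).trans <|
    add_le_add_left ((measure_union_le _ _).trans <| add_le_add_left (measure_union_le _ _) _) _)
  rw [Set.mem_preimage, mem_failure_add_smul, hκ] at hx
  simpa only [Set.mem_union, Set.mem_ofPred_eq, or_assoc] using hx

end Superposition

lemma ofReal_mul_exp_div_floor_exp_le {c : ℝ} (hc : 0 ≤ c) (x y : ℝ) :
    ENNReal.ofReal (c * Real.exp x / (⌊Real.exp y⌋₊ + 1 : ℕ)) ≤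
      ENNReal.ofReal (c * Real.exp (x - y)) := by
  rw [Real.exp_sub, mul_div_assoc, Nat.cast_add_one]
  gcongr
  exact (Nat.lt_floor_add_one _).le

lemma floor_exp_mul_ofReal_exp_le (x y : ℝ) :
    (⌊Real.exp x⌋₊ : ℝ≥0∞) * ENNReal.ofReal (Real.exp y) ≤ ENNReal.ofReal (Real.exp (x + y)) := by
  rw [← ENNReal.ofReal_natCast, Real.exp_add, ENNReal.ofReal_mul (Real.exp_pos x).le]
  gcongr
  exact Nat.floor_le (Real.exp_pos x).le

lemma floor_exp_add_one_le_ofReal {x : ℝ} (hx : 0 ≤ x) :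
    ((⌊Real.exp x⌋₊ + 1 : ℕ) : ℝ≥0∞) ≤ ENNReal.ofReal (2 * Real.exp x) := by
  rw [← ENNReal.ofReal_natCast]
  refine ENNReal.ofReal_le_ofReal ?_
  push_cast
  linarith [Nat.floor_le (Real.exp_pos x).le, Real.one_le_exp hx]

lemma floor_exp_mul_floor_exp_add_one_mul_ofReal_exp_le (x z : ℝ) {y : ℝ} (hy : 0 ≤ y) :
    (⌊Real.exp x⌋₊ : ℝ≥0∞) * (⌊Real.exp y⌋₊ + 1 : ℕ) * ENNReal.ofReal (Real.exp z) ≤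
      ENNReal.ofReal (2 * Real.exp (x + y + z)) :=
  calc (⌊Real.exp x⌋₊ : ℝ≥0∞) * (⌊Real.exp y⌋₊ + 1 : ℕ) * ENNReal.ofReal (Real.exp z)
    _ ≤ ⌊Real.exp x⌋₊ * ENNReal.ofReal (2 * Real.exp y) * ENNReal.ofReal (Real.exp z) := by
      gcongr
      exact floor_exp_add_one_le_ofReal hy
    _ = ENNReal.ofReal 2 * (⌊Real.exp x⌋₊ * ENNReal.ofReal (Real.exp (y + z))) := by
      rw [Real.exp_add, ENNReal.ofReal_mul zero_le_two, ENNReal.ofReal_mul (Real.exp_pos y).le]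
      ring
    _ ≤ ENNReal.ofReal (2 * Real.exp (x + y + z)) := by
      rw [ENNReal.ofReal_mul zero_le_two, add_assoc]
      gcongr
      exact floor_exp_mul_ofReal_exp_le x (y + z)

lemma tendsto_ofReal_mul_exp_neg (c : ℝ) {δ : ℝ} (hδ : 0 < δ) :
    Tendsto (fun n : ℕ => ENNReal.ofReal (c * Real.exp (-(n * δ)))) atTop (𝓝 0) := by
  have hexp : Tendsto (fun n : ℕ => Real.exp (-(n * δ))) atTop (𝓝 0) :=
    Real.tendsto_exp_neg_atTop_nhds_zero.comp (tendsto_natCast_atTop_atTop.atTop_mul_const hδ)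
  simpa using ENNReal.tendsto_ofReal (hexp.const_mul c)

namespace Superposition

variable {S : Superposition} {a b P1 P2 ε r₁ r₂ : ℝ}

lemma hasCode_floor_exp (hP1 : 0 ≤ P1) (hP2 : 0 ≤ P2) (hε : 0 ≤ ε) {B w₁ w₂ : ℝ≥0} (hB : B ≠ 0)
    (hw₁ : w₁ ≠ 0) (hw₂ : w₂ ≠ 0) {k₁ k₂ I₀ I₁ I₂ δ : ℝ} (hI₀ : 0 ≤ I₀) (hδ : 0 ≤ δ)
    (hr₁ : r₁ + 4 * δ ≤ I₁) (hr₂ : r₂ + 2 * δ ≤ I₂) {n : ℕ}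
    (h : ENNReal.ofReal (16 * Real.exp (-(n * δ))) +
        4 * auxLaw B S.κ n {x | ENNReal.ofReal (Real.exp (n * (I₀ + δ))) < auxDensity B S.κ x} +
        2 * ((auxLaw B S.κ n).prod (stdGaussN n) (S.failure a b P1 P2
            (acceptance B w₁ k₁ (n * (I₀ + I₁ - δ)) n) (acceptance 1 w₂ k₂ (n * (I₂ - δ)) n)) +
          ENNReal.ofReal (2 * Real.exp (-(n * δ))) + ENNReal.ofReal (Real.exp (-(n * δ)))) ≤
      ENNReal.ofReal ε) :
    HasCode a b P1 P2 ε n (⌊Real.exp (n * r₁)⌋₊ + 1) (⌊Real.exp (n * r₂)⌋₊ + 1) := by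
  have hn : (0 : ℝ) ≤ n := n.cast_nonneg
  refine S.hasCode hP1 hP2 hε hB hw₁ hw₂ (k₁ := k₁) (k₂ := k₂) (c₁ := n * (I₀ + I₁ - δ))
    (c₂ := n * (I₂ - δ)) (Real.exp (n * (I₀ + δ))).toNNReal ⌊Real.exp (n * (I₀ + 2 * δ))⌋₊
    (le_trans ?_ h)
  gcongr ?_ + 4 * ?_ + 2 * (?_ + ?_ + ?_)
  · rw [Real.coe_toNNReal _ (Real.exp_pos _).le]
    refine (ofReal_mul_exp_div_floor_exp_le (by norm_num) _ _).trans_eq ?_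
    congr 3
    ring
  · exact le_rfl
  · exact le_rfl
  · refine (floor_exp_mul_floor_exp_add_one_mul_ofReal_exp_le _ _ (by positivity)).trans ?_
    gcongr
    linarith [mul_le_mul_of_nonneg_left hr₁ hn]
  · refine (floor_exp_mul_ofReal_exp_le _ _).trans ?_
    gcongr
    linarith [mul_le_mul_of_nonneg_left hr₂ hn]

lemma eventually_hasCode (hP1 : 0 ≤ P1) (hP2 : 0 ≤ P2) {θ : ℝ} (hθ : θ < 1)
    (hpow₁ : S.σ ^ 2 + S.q ^ 2 ≤ θ * P1) (hpow₂ : S.p ^ 2 ≤ θ * P2)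
    (hκ : S.κ = costaCoeff S.σ (S.q + a * S.p)) (hr₁ : r₁ < awgnCapacity (S.σ ^ 2))
    (hr₂ : r₂ < awgnCapacity ((b * S.q + S.p) ^ 2 / (1 + (b * S.σ) ^ 2))) (hε : 0 < ε) :
    ∀ᶠ n : ℕ in atTop,
      HasCode a b P1 P2 ε n (⌊Real.exp (n * r₁)⌋₊ + 1) (⌊Real.exp (n * r₂)⌋₊ + 1) := by
  obtain ⟨B, hB⟩ : ∃ B : ℝ≥0, (B : ℝ) = 1 + S.κ ^ 2 := CanLift.prf _ (by positivity)
  obtain ⟨w₁, hw₁⟩ : ∃ w : ℝ≥0, (w : ℝ) = 1 / (1 + S.σ ^ 2) := CanLift.prf _ (by positivity)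
  obtain ⟨w₂, hw₂⟩ : ∃ w : ℝ≥0,
      (w : ℝ) = (1 + (b * S.σ) ^ 2) / (1 + (b * S.σ) ^ 2 + (b * S.q + S.p) ^ 2) :=
    CanLift.prf _ (by positivity)
  have hB0 : B ≠ 0 := NNReal.coe_ne_zero.1 (by rw [hB]; positivity)
  have hw₁0 : w₁ ≠ 0 := NNReal.coe_ne_zero.1 (by rw [hw₁]; positivity)
  have hw₂0 : w₂ ≠ 0 := NNReal.coe_ne_zero.1 (by rw [hw₂]; positivity)
  set I₀ := awgnCapacity (S.κ ^ 2)
  set I₁ := awgnCapacity (S.σ ^ 2)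
  set I₂ := awgnCapacity ((b * S.q + S.p) ^ 2 / (1 + (b * S.σ) ^ 2))
  have hI₀ : 0 ≤ I₀ := awgnCapacity_nonneg (sq_nonneg _)
  obtain ⟨δ, hδ, hδ₁, hδ₂⟩ : ∃ δ > 0, r₁ + 4 * δ ≤ I₁ ∧ r₂ + 2 * δ ≤ I₂ := by
    refine ⟨min ((I₁ - r₁) / 4) ((I₂ - r₂) / 2), lt_min (by linarith) (by linarith), ?_, ?_⟩
    · linarith [min_le_left ((I₁ - r₁) / 4) ((I₂ - r₂) / 2)]
    · linarith [min_le_right ((I₁ - r₁) / 4) ((I₂ - r₂) / 2)]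
  have hcover := tendsto_auxLaw_lt_auxDensity hB (lt_add_of_pos_right I₀ hδ)
  have hfail := tendsto_failure hP1 hP2 hθ hpow₁ hpow₂ hκ hB hw₁ hw₂
    (sub_lt_self (I₀ + I₁) hδ) (sub_lt_self I₂ hδ)
  have hexp : Tendsto (fun n : ℕ => ENNReal.ofReal (Real.exp (-(n * δ)))) atTop (𝓝 0) := by
    simpa using tendsto_ofReal_mul_exp_neg 1 hδ
  have hbound := ((tendsto_ofReal_mul_exp_neg 16 hδ).add
    (ENNReal.Tendsto.const_mul hcover (Or.inr (by finiteness : (4 : ℝ≥0∞) ≠ ∞)))).add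
    (ENNReal.Tendsto.const_mul ((hfail.add (tendsto_ofReal_mul_exp_neg 2 hδ)).add hexp)
      (Or.inr (by finiteness : (2 : ℝ≥0∞) ≠ ∞)))
  simp only [mul_zero, add_zero] at hbound
  filter_upwards [hbound.eventually_le_const (ENNReal.ofReal_pos.2 hε)] with n hn
  exact hasCode_floor_exp hP1 hP2 hε.le hB0 hw₁0 hw₂0 hI₀ hδ.le hδ₁ hδ₂ hn

end Superposition

lemma achievableGT1_of_hasCode {a b P1 P2 R1 R2 : ℝ}
    (h : ∀ ε > 0, ∃ n : ℕ, 0 < n ∧ ∃ M1 M2 : ℕ, Real.exp (n * ((R1 - ε) * Real.log 2)) ≤ M1 ∧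
      Real.exp (n * ((R2 - ε) * Real.log 2)) ≤ M2 ∧ HasCode a b P1 P2 ε n M1 M2) :
    AchievableGT1 a b P1 P2 R1 R2 := by
  intro ε hε
  obtain ⟨n, hn, M1, M2, hM1, hM2, f1, f2, g1, g2, hf1, hf2, hg1, hg2⟩ := h ε hε
  have hn' : (0 : ℝ) < n := Nat.cast_pos.2 hn
  have hM1' : (0 : ℝ) < M1 := (Real.exp_pos _).trans_le hM1
  have hM2' : (0 : ℝ) < M2 := (Real.exp_pos _).trans_le hM2
  have hlog := Real.log_pos one_lt_two
  have hrate {M : ℕ} {R : ℝ} (hM : Real.exp (n * (R * Real.log 2)) ≤ M) :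
      R ≤ Real.logb 2 M / n := by
    rw [le_div_iff₀ hn', Real.logb, le_div_iff₀ hlog]
    linarith [(Real.le_log_iff_exp_le ((Real.exp_pos _).trans_le hM)).2 hM]
  have hpower {x : Fin n → ℝ} {P : ℝ} (hx : ∑ i, x i ^ 2 ≤ n * P) :
      (1 / n : ℝ) * ∑ i, x i ^ 2 ≤ P := by
    rwa [one_div_mul_eq_div, div_le_iff₀' hn']
  refine ⟨n, M1, M2, f1, f2, g1, g2, hn, Nat.cast_pos.1 hM1', Nat.cast_pos.1 hM2', ?_, ?_,
    hrate hM1, hrate hM2, hg1, hg2⟩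
  · rw [one_div_mul_eq_div, div_le_iff₀' (by positivity), mul_assoc]
    refine (Finset.sum_le_sum fun w1 _ => Finset.sum_le_card_nsmul _ _ P1 fun w2 _ =>
      hpower (hf1 w1 w2)).trans ?_
    simp
  · rw [one_div_mul_eq_div, div_le_iff₀' hM2']
    exact (Finset.sum_le_card_nsmul _ _ P2 fun w2 _ => hpower (hf2 w2)).trans (by simp)

/-- Scaling all the gains by some `t < 1` leaves room between the powers of the random codewords and
the constraints, and for `t` close to `1` the rates remain below capacity. -/
lemma achievableGT1_of_superposition {a b P1 P2 R1 R2 σ q p : ℝ} (hP1 : σ ^ 2 + q ^ 2 ≤ P1)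
    (hP2 : p ^ 2 ≤ P2) (hR1 : R1 * Real.log 2 ≤ awgnCapacity (σ ^ 2))
    (hR2 : R2 * Real.log 2 ≤ awgnCapacity ((b * q + p) ^ 2 / (1 + (b * σ) ^ 2))) :
    AchievableGT1 a b P1 P2 R1 R2 := by
  refine achievableGT1_of_hasCode fun ε hε => ?_
  have hlog : 0 < ε * Real.log 2 := mul_pos hε (Real.log_pos one_lt_two)
  have hcont₁ : ContinuousAt (fun t => awgnCapacity ((t * σ) ^ 2)) 1 :=
    continuousAt_awgnCapacity (by positivity) |>.comp (by fun_prop)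
  have hcont₂ : ContinuousAt
      (fun t => awgnCapacity ((b * (t * q) + t * p) ^ 2 / (1 + (b * (t * σ)) ^ 2))) 1 :=
    continuousAt_awgnCapacity (by positivity) |>.comp (by fun_prop (disch := positivity))
  have hr₁ := hcont₁.eventually_const_lt (u := (R1 - ε) * Real.log 2)
    (by simp only [one_mul]; linarith)
  have hr₂ := hcont₂.eventually_const_lt (u := (R2 - ε) * Real.log 2)
    (by simp only [one_mul]; linarith)
  obtain ⟨t, ⟨hr₁, hr₂⟩, ht0, ht1⟩ :=
    (((hr₁.and hr₂).filter_mono nhdsWithin_le_nhds).and (Ioo_mem_nhdsLT one_pos)).exists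
  have hcode := Superposition.eventually_hasCode (a := a)
    (S := ⟨t * σ, t * q, t * p, costaCoeff (t * σ) (t * q + a * (t * p))⟩)
    ((by positivity : 0 ≤ σ ^ 2 + q ^ 2).trans hP1) ((sq_nonneg p).trans hP2)
    (pow_lt_one₀ ht0.le ht1 two_ne_zero)
    (by simpa only [mul_pow, ← mul_add] using mul_le_mul_of_nonneg_left hP1 (sq_nonneg t))
    (by simpa only [mul_pow] using mul_le_mul_of_nonneg_left hP2 (sq_nonneg t)) rfl hr₁ hr₂ hε
  obtain ⟨n, hcode, hn⟩ := (hcode.and (eventually_gt_atTop 0)).exists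
  refine ⟨n, hn, _, _, ?_, ?_, hcode⟩ <;>
  · push_cast
    exact (Nat.lt_floor_add_one _).le

lemma one_add_received_snr_eq {b P1 P2 α s : ℝ} (hP1 : 0 ≤ P1) (hP2 : 0 ≤ P2) (hα0 : 0 ≤ α)
    (hα1 : α ≤ 1) (hbs : b * s = |b|) :
    1 + (b * (s * √((1 - α) * P1)) + √P2) ^ 2 / (1 + (b * √(α * P1)) ^ 2) =
      (1 + b ^ 2 * P1 + 2 * |b| * √((1 - α) * P1 * P2) + P2) / (1 + b ^ 2 * α * P1) := by
  have hα : 0 ≤ (1 - α) * P1 := mul_nonneg (sub_nonneg.2 hα1) hP1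
  rw [mul_pow, Real.sq_sqrt (mul_nonneg hα0 hP1), ← mul_assoc, hbs, add_sq, mul_pow, sq_abs,
    Real.sq_sqrt hα, Real.sq_sqrt hP2, Real.sqrt_mul hα]
  field_simp
  ring

/-- **Achievability of the dirty-paper-coding region (arbitrary `b`).**  For every
`α ∈ [0,1]`, every rate pair `(R₁,R₂)` with `R₁ ≤ ½ log(1 + αP₁)` and
`R₂ ≤ ½ log((1 + b²P₁ + 2|b|√((1−α)P₁P₂) + P₂)/(1 + b²αP₁))` lies in the capacity
region `C^{T₁}_{GIFC}` of the Gaussian IFC with degraded message sets in which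
transmitter 1 knows both messages. -/
theorem DPC12_achievable (a b P1 P2 : ℝ) (hP1 : 0 ≤ P1) (hP2 : 0 ≤ P2)
    (α : ℝ) (hα0 : 0 ≤ α) (hα1 : α ≤ 1) (R1 R2 : ℝ)
    (hR1 : R1 ≤ (1 / 2) * Real.logb 2 (1 + α * P1))
    (hR2 : R2 ≤ (1 / 2) * Real.logb 2
      ((1 + b ^ 2 * P1 + 2 * |b| * Real.sqrt ((1 - α) * P1 * P2) + P2)
        / (1 + b ^ 2 * α * P1))) :
    (R1, R2) ∈ CapacityGT1 a b P1 P2 := by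
  obtain ⟨s, hs, hbs⟩ : ∃ s : ℝ, s ^ 2 = 1 ∧ b * s = |b| := by
    rcases abs_choice b with h | h
    · exact ⟨1, by norm_num, by rw [h, mul_one]⟩
    · exact ⟨-1, by norm_num, by rw [h, mul_neg_one]⟩
  have hlog := Real.log_pos one_lt_two
  refine subset_closure (achievableGT1_of_superposition (σ := √(α * P1))
    (q := s * √((1 - α) * P1)) (p := √P2) ?_ (Real.sq_sqrt hP2).le ?_ ?_)
  · rw [mul_pow, hs, Real.sq_sqrt (mul_nonneg hα0 hP1),
      Real.sq_sqrt (mul_nonneg (sub_nonneg.2 hα1) hP1)]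
    linarith
  · rwa [Real.sq_sqrt (mul_nonneg hα0 hP1), awgnCapacity_eq_mul_logb, mul_le_mul_iff_left₀ hlog]
  · rwa [awgnCapacity_eq_mul_logb, mul_le_mul_iff_left₀ hlog,
      one_add_received_snr_eq hP1 hP2 hα0 hα1 hbs]
end
end

section
/- Let |b| ≤ 1, let U be a random element, let X₁, X₂ be zero-mean real random variables with E[X₁²] ≤ P₁ and E[X₂²] ≤ P₂, let Z₁ ~ N(0,1) and Z' ~ N(0,1−b²) be independent of each other and of (U,X₁,X₂), and set Y₂ = bX₁ + X₂ + bZ₁ + Z' (so that the additive noise bZ₁ + Z' is standard Gaussian); assume all differential entropies involved are well defined and finite. If α ∈ [0,1] satisfies h(X₁ + Z₁ | U, X₂) = ½ log(2πe(1 + αP₁)), then I(U, X₂ ; Y₂) ≤ ½ log( (1 + b²P₁ + P₂ + 2|b|√((1−α)P₁P₂)) / (1 + b²αP₁) ). -/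
open MeasureTheory ProbabilityTheory

noncomputable section

/-- Differential entropy (base 2) of a measure on `ℝ`, computed from its
Radon–Nikodym density with respect to Lebesgue measure:
`h(ν) = -∫ f log₂ f` where `f = dν/dx`. -/
def dH1 (ν : Measure ℝ) : ℝ :=
  -∫ x, (ν.rnDeriv volume x).toReal * Real.logb 2 (ν.rnDeriv volume x).toReal

/-- Conditional differential entropy (base 2) `h(Y | X)`: the expectation over `X`
of the differential entropy of the conditional law of `Y` given `X`. -/
def condDiffEnt {Ω β : Type*} [MeasurableSpace Ω] [MeasurableSpace β]
    (μ : Measure Ω) [IsFiniteMeasure μ] (Y : Ω → ℝ) (X : Ω → β) : ℝ :=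
  ∫ ω, dH1 (condDistrib Y X μ (X ω)) ∂μ

/-!
By Gibbs' inequality `h(X₁ + Z₁ | U, X₂)` is at most the Gaussian entropy whose variance is the
mean square error of any estimate `β X₂` of `X₁`, plus one; the entropy assumption therefore gives
`α P₁ ≤ E (X₁ - β X₂)²` for all `β`. The discriminant of this quadratic in `β` bounds the
correlation of `X₁` and `X₂`, hence the power of `Y₂`, hence `h(Y₂)`.

Conditionally on `(U, X₂)`, the output `Y₂` is a translate of `b (X₁ + Z₁)` plus independent
Gaussian noise of variance `1 - b²`, so `h(Y₂ | U, X₂)` is bounded below by the entropy power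
inequality. To average that inequality over `(U, X₂)` one uses its tangent at the Gaussian case,
`h(√s V + √t W) ≥ s h(V) + t h(W)` with `s + t = 1`, after standardising. This form follows from
transporting a rotated pair of standard Gaussians monotonically to `V` and `W`, and the concavity of
the logarithm.
-/

/-- `IsPosDensity p μ` says that `p` is an everywhere positive continuous density of `μ`. Measures
smoothed by a Gaussian have such a density, and monotone transport between two such measures is
differentiable. -/
structure IsPosDensity (p : ℝ → ℝ) (μ : Measure ℝ) : Prop where
  continuous : Continuous p
  pos : ∀ x, 0 < p x
  eq_withDensity : μ = volume.withDensity fun x => ENNReal.ofReal (p x)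

namespace IsPosDensity

variable {p : ℝ → ℝ} {μ : Measure ℝ}

lemma measurable (hp : IsPosDensity p μ) : Measurable p :=
  hp.continuous.measurable

lemma measurable_log (hp : IsPosDensity p μ) : Measurable fun x => Real.log (p x) :=
  hp.measurable.log

lemma lintegral_eq (hp : IsPosDensity p μ) {f : ℝ → ENNReal} (hf : Measurable f) :
    ∫⁻ x, f x ∂μ = ∫⁻ x, ENNReal.ofReal (p x) * f x := by
  rw [hp.eq_withDensity,
    lintegral_withDensity_eq_lintegral_mul _ hp.measurable.ennreal_ofReal hf]
  rfl

lemma integral_eq (hp : IsPosDensity p μ) (f : ℝ → ℝ) : ∫ x, f x ∂μ = ∫ x, p x * f x := by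
  rw [hp.eq_withDensity, integral_withDensity_eq_integral_toReal_smul
    hp.measurable.ennreal_ofReal (by simp)]
  simp only [ENNReal.toReal_ofReal (hp.pos _).le, smul_eq_mul]

lemma lintegral_ofReal [IsProbabilityMeasure μ] (hp : IsPosDensity p μ) :
    ∫⁻ x, ENNReal.ofReal (p x) = 1 := by
  simpa using (hp.lintegral_eq measurable_const (f := fun _ => 1)).symm

lemma integrable [IsProbabilityMeasure μ] (hp : IsPosDensity p μ) : Integrable p :=
  ⟨hp.measurable.aestronglyMeasurable, by
    rw [hasFiniteIntegral_iff_ofReal (ae_of_all _ fun x => (hp.pos x).le), hp.lintegral_ofReal]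
    exact ENNReal.one_lt_top⟩

lemma dH1_eq (hp : IsPosDensity p μ) : dH1 μ = -∫ x, Real.logb 2 (p x) ∂μ := by
  have hrn : μ.rnDeriv volume =ᵐ[volume] fun x => ENNReal.ofReal (p x) := by
    conv_lhs => rw [hp.eq_withDensity]
    exact Measure.rnDeriv_withDensity _ hp.measurable.ennreal_ofReal
  rw [dH1, hp.integral_eq]
  congr 1
  refine integral_congr_ae ?_
  filter_upwards [hrn] with x hx
  rw [hx, ENNReal.toReal_ofReal (hp.pos x).le]

lemma integral_log (hp : IsPosDensity p μ) : ∫ x, Real.log (p x) ∂μ = -(Real.log 2 * dH1 μ) := by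
  have hlog2 : Real.log 2 ≠ 0 := (Real.log_pos one_lt_two).ne'
  simp only [hp.dH1_eq, Real.logb, integral_div]
  field_simp

lemma integral_log_comp {Ω : Type*} [MeasurableSpace Ω] {P : Measure Ω} {T : Ω → ℝ}
    (hp : IsPosDensity p μ) (hT : MeasurePreserving T P μ) :
    ∫ ω, Real.log (p (T ω)) ∂P = -(Real.log 2 * dH1 μ) := by
  rw [← hp.integral_log, ← hT.map_eq,
    integral_map hT.measurable.aemeasurable hp.measurable_log.aestronglyMeasurable]

lemma map_affine (hp : IsPosDensity p μ) {r : ℝ} (hr : r ≠ 0) (a : ℝ) :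
    IsPosDensity (fun y => |r|⁻¹ * p ((y - a) / r)) (μ.map fun x => r * x + a) where
  continuous := by have := hp.continuous; fun_prop
  pos y := mul_pos (by positivity) (hp.pos _)
  eq_withDensity := by
    have hpm := hp.measurable
    refine Measure.ext_of_lintegral _ fun f hf => ?_
    have hsurj : (fun x : ℝ => r * x + a) '' Set.univ = Set.univ :=
      Set.image_univ_of_surjective fun y => ⟨(y - a) / r, by field_simp; ring⟩
    have hinj : Set.InjOn (fun x : ℝ => r * x + a) Set.univ := fun x _ y _ h => by
      simpa [hr] using h
    have hderiv : ∀ x ∈ Set.univ, HasDerivWithinAt (fun x : ℝ => r * x + a) r Set.univ x :=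
      fun x _ => by simpa using ((hasDerivAt_id x).const_mul r).add_const a
    rw [lintegral_map hf (by fun_prop), hp.lintegral_eq (by fun_prop),
      lintegral_withDensity_eq_lintegral_mul _ (by fun_prop) hf]
    rw [← setLIntegral_univ (_ * f), ← hsurj,
      lintegral_image_eq_lintegral_abs_deriv_mul MeasurableSet.univ hderiv hinj,
      setLIntegral_univ]
    refine lintegral_congr fun x => ?_
    rw [Pi.mul_apply, ← mul_assoc, ← ENNReal.ofReal_mul (abs_nonneg r), add_sub_cancel_right,
      mul_div_cancel_left₀ x hr, mul_inv_cancel_left₀ (abs_ne_zero.2 hr)]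

lemma log_map_affine (hp : IsPosDensity p μ) {r : ℝ} (hr : r ≠ 0) (a x : ℝ) :
    Real.log (|r|⁻¹ * p ((r * x + a - a) / r)) = Real.log (p x) - Real.log |r| := by
  rw [add_sub_cancel_right, mul_div_cancel_left₀ x hr, Real.log_mul (by positivity) (hp.pos x).ne',
    Real.log_inv]
  ring

lemma integrable_log_map_affine [IsFiniteMeasure μ] (hp : IsPosDensity p μ)
    (hlog : Integrable (fun x => Real.log (p x)) μ) {r : ℝ} (hr : r ≠ 0) (a : ℝ) :
    Integrable (fun y => Real.log (|r|⁻¹ * p ((y - a) / r))) (μ.map fun x => r * x + a) := by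
  rw [integrable_map_measure (hp.map_affine hr a).measurable_log.aestronglyMeasurable
    (by fun_prop)]
  simp only [Function.comp_def, hp.log_map_affine hr]
  exact hlog.sub (integrable_const _)

lemma dH1_map_affine [IsProbabilityMeasure μ] (hp : IsPosDensity p μ)
    (hlog : Integrable (fun x => Real.log (p x)) μ) {r : ℝ} (hr : r ≠ 0) (a : ℝ) :
    dH1 (μ.map fun x => r * x + a) = dH1 μ + Real.logb 2 |r| := by
  have hlog2 : Real.log 2 ≠ 0 := (Real.log_pos one_lt_two).ne'
  have hT : MeasurePreserving (fun x => r * x + a) μ (μ.map fun x => r * x + a) :=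
    ⟨by fun_prop, rfl⟩
  have h := (hp.map_affine hr a).integral_log_comp hT
  simp only [hp.log_map_affine hr] at h
  rw [integral_sub hlog (integrable_const _), hp.integral_log, integral_const, probReal_univ,
    one_smul] at h
  rw [Real.logb, ← mul_right_inj' hlog2, mul_add, mul_div_cancel₀ _ hlog2]
  linarith

end IsPosDensity

lemma hasDerivAt_of_hasDerivAt_comp {f g : ℝ → ℝ} {f' h' x : ℝ} (hg : ContinuousAt g x)
    (hf : HasDerivAt f f' (g x)) (hf' : f' ≠ 0) (hfg : HasDerivAt (f ∘ g) h' x) :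
    HasDerivAt g (h' / f') x := by
  have hlim : Filter.Tendsto (fun y => dslope f (g x) (g y)) (nhds x) (nhds f') := by
    have h := (continuousAt_dslope_same.2 hf.differentiableAt).tendsto.comp hg.tendsto
    rwa [dslope_same, hf.deriv] at h
  rw [hasDerivAt_iff_tendsto_slope] at hfg ⊢
  refine (hfg.div (hlim.mono_left nhdsWithin_le_nhds) hf').congr' ?_
  filter_upwards [nhdsWithin_le_nhds (hlim.eventually_ne hf')] with y hy
  rw [Pi.div_apply, slope_def_module, slope_def_module, Function.comp, Function.comp,
    ← sub_smul_dslope f (g x) (g y), smul_eq_mul, smul_eq_mul, smul_eq_mul]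
  field_simp

namespace IsPosDensity

variable {p q : ℝ → ℝ} {μ ν : Measure ℝ} [IsProbabilityMeasure μ] [IsProbabilityMeasure ν]

lemma hasDerivAt_cdf (hp : IsPosDensity p μ) (x : ℝ) : HasDerivAt (cdf μ) (p x) x := by
  have hint (y : ℝ) : cdf μ y = (∫ z in Set.Iic 0, p z) + ∫ z in (0 : ℝ)..y, p z := by
    have h := intervalIntegral.integral_Iic_sub_Iic (a := 0) (b := y) hp.integrable.integrableOn
      hp.integrable.integrableOn
    rw [cdf_eq_real, measureReal_def, hp.eq_withDensity, withDensity_apply _ measurableSet_Iic,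
      ← integral_eq_lintegral_of_nonneg_ae (ae_of_all _ fun z => (hp.pos z).le)
        hp.measurable.aestronglyMeasurable]
    linarith
  have hcont := hp.continuous
  exact ((intervalIntegral.integral_hasDerivAt_right (hcont.intervalIntegrable 0 x)
    (hcont.stronglyMeasurableAtFilter _ _) hcont.continuousAt).const_add _).congr_of_eventuallyEq
    (Filter.Eventually.of_forall hint)

lemma strictMono_cdf (hp : IsPosDensity p μ) : StrictMono (cdf μ) :=
  strictMono_of_hasDerivAt_pos hp.hasDerivAt_cdf hp.pos

lemma range_cdf (hp : IsPosDensity p μ) : Set.range (cdf μ) = Set.Ioo 0 1 := by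
  refine Set.Subset.antisymm ?_ fun y hy => ?_
  · rintro _ ⟨x, rfl⟩
    exact ⟨(cdf_nonneg μ (x - 1)).trans_lt (hp.strictMono_cdf (sub_one_lt x)),
      (hp.strictMono_cdf (lt_add_one x)).trans_le (cdf_le_one μ (x + 1))⟩
  · have hcont : Continuous (cdf μ) :=
      continuous_iff_continuousAt.2 fun x => (hp.hasDerivAt_cdf x).continuousAt
    obtain ⟨a, ha⟩ := ((tendsto_cdf_atBot μ).eventually_lt_const hy.1).exists
    obtain ⟨c, hc⟩ := ((tendsto_cdf_atTop μ).eventually_const_lt hy.2).exists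
    exact mem_range_of_exists_le_of_exists_ge hcont ⟨a, ha.le⟩ ⟨c, hc.le⟩

lemma exists_transport (hp : IsPosDensity p μ) (hq : IsPosDensity q ν) :
    ∃ T : ℝ → ℝ, (∀ x, HasDerivAt T (p x / q (T x)) x) ∧ MeasurePreserving T μ ν := by
  have hrange : Set.range (cdf μ) = Set.range (cdf ν) := by rw [hp.range_cdf, hq.range_cdf]
  choose T hT using fun x => hrange.le (Set.mem_range_self x)
  have hmono : StrictMono T := fun x y hxy => by
    rw [← hq.strictMono_cdf.lt_iff_lt, hT, hT]
    exact hp.strictMono_cdf hxy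
  have hsurj : Function.Surjective T := fun w => by
    obtain ⟨x, hx⟩ := hrange.ge (Set.mem_range_self w)
    exact ⟨x, hq.strictMono_cdf.injective (by rw [hT, hx])⟩
  have hcont : Continuous T := hmono.monotone.continuous_of_surjective hsurj
  refine ⟨T, fun x => ?_, hcont.measurable, ?_⟩
  · refine hasDerivAt_of_hasDerivAt_comp hcont.continuousAt (hq.hasDerivAt_cdf (T x))
      (hq.pos _).ne' ?_
    rw [show cdf ν ∘ T = cdf μ from funext hT]
    exact hp.hasDerivAt_cdf x
  · have : IsProbabilityMeasure (μ.map T) := Measure.isProbabilityMeasure_map hcont.aemeasurable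
    refine Measure.ext_of_Iic _ _ fun w => ?_
    obtain ⟨x, rfl⟩ := hsurj w
    have hpre : T ⁻¹' Set.Iic (T x) = Set.Iic x := Set.ext fun y => hmono.le_iff_le
    rw [Measure.map_apply hcont.measurable measurableSet_Iic, hpre, ← ofReal_cdf, ← ofReal_cdf, hT]

end IsPosDensity

lemma integral_nonpos_of_lintegral_exp_le_one {α : Type*} [MeasurableSpace α] {μ : Measure α}
    [IsProbabilityMeasure μ] {F : α → ℝ} (hF : Integrable F μ)
    (hexp : ∫⁻ x, ENNReal.ofReal (Real.exp (F x)) ∂μ ≤ 1) : ∫ x, F x ∂μ ≤ 0 := by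
  have hmeas : AEStronglyMeasurable (fun x => Real.exp (F x)) μ :=
    Real.continuous_exp.comp_aestronglyMeasurable hF.1
  have hint : Integrable (fun x => Real.exp (F x)) μ := by
    refine ⟨hmeas, ?_⟩
    rw [hasFiniteIntegral_iff_ofReal (ae_of_all _ fun x => (Real.exp_pos _).le)]
    exact hexp.trans_lt ENNReal.one_lt_top
  have hexp' : ∫ x, Real.exp (F x) ∂μ ≤ 1 := by
    rw [integral_eq_lintegral_of_nonneg_ae (ae_of_all _ fun x => (Real.exp_pos _).le) hmeas]
    exact ENNReal.toReal_le_of_le_ofReal zero_le_one (by simpa using hexp)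
  have h : ∫ x, (F x + 1) ∂μ ≤ ∫ x, Real.exp (F x) ∂μ :=
    integral_mono (hF.add (integrable_const _)) hint fun x => Real.add_one_le_exp (F x)
  rw [integral_add hF (integrable_const _), integral_const, probReal_univ, one_smul] at h
  linarith

lemma IsPosDensity.integral_log_le {p q : ℝ → ℝ} {μ ν : Measure ℝ} [IsProbabilityMeasure μ]
    [IsProbabilityMeasure ν] (hp : IsPosDensity p μ) (hq : IsPosDensity q ν)
    (hlogp : Integrable (fun x => Real.log (p x)) μ)
    (hlogq : Integrable (fun x => Real.log (q x)) μ) :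
    ∫ x, Real.log (q x) ∂μ ≤ ∫ x, Real.log (p x) ∂μ := by
  have hpm := hp.measurable
  have hqm := hq.measurable
  rw [← sub_nonpos, ← integral_sub hlogq hlogp]
  refine integral_nonpos_of_lintegral_exp_le_one (hlogq.sub hlogp) ?_
  rw [hp.lintegral_eq (by fun_prop), ← hq.lintegral_ofReal]
  refine (lintegral_congr fun x => ?_).le
  rw [Real.exp_sub, Real.exp_log (hq.pos x), Real.exp_log (hp.pos x),
    ← ENNReal.ofReal_mul (hp.pos x).le, mul_div_cancel₀ _ (hp.pos x).ne']

/-- The differential entropy `½ log₂ (2πev)` of a Gaussian of variance `v`. The variance is a real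
number, unlike the `ℝ≥0` argument of `gaussianReal`, so that it can be computed with. -/
def gaussianEntropy (v : ℝ) : ℝ :=
  (1 / 2) * Real.logb 2 (2 * Real.pi * Real.exp 1 * v)

lemma log_two_mul_gaussianEntropy {v : ℝ} (hv : 0 < v) :
    Real.log 2 * gaussianEntropy v = (Real.log (2 * Real.pi * v) + 1) / 2 := by
  have hlog2 : Real.log 2 ≠ 0 := (Real.log_pos one_lt_two).ne'
  rw [gaussianEntropy, show 2 * Real.pi * Real.exp 1 * v = 2 * Real.pi * v * Real.exp 1 by ring,
    Real.logb, Real.log_mul (by positivity) (Real.exp_pos 1).ne', Real.log_exp]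
  field_simp

lemma gaussianEntropy_sub {v w : ℝ} (hv : 0 < v) (hw : 0 < w) :
    gaussianEntropy v - gaussianEntropy w = (1 / 2) * Real.logb 2 (v / w) := by
  rw [gaussianEntropy, gaussianEntropy, Real.logb_mul (by positivity) hv.ne',
    Real.logb_mul (by positivity) hw.ne', Real.logb_div hv.ne' hw.ne']
  ring

section Gaussian

open scoped NNReal

lemma isPosDensity_gaussianReal (m : ℝ) {v : ℝ≥0} (hv : v ≠ 0) :
    IsPosDensity (gaussianPDFReal m v) (gaussianReal m v) where
  continuous := by unfold gaussianPDFReal; fun_prop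
  pos x := gaussianPDFReal_pos m v x hv
  eq_withDensity := gaussianReal_of_var_ne_zero m hv

lemma log_gaussianPDFReal (m : ℝ) {v : ℝ≥0} (hv : v ≠ 0) (x : ℝ) :
    Real.log (gaussianPDFReal m v x) = -Real.log (2 * Real.pi * v) / 2 - (x - m) ^ 2 / (2 * v) := by
  rw [gaussianPDFReal, Real.log_mul (by positivity) (Real.exp_pos _).ne', Real.log_exp,
    Real.log_inv, Real.log_sqrt (by positivity)]
  ring

lemma integrable_log_gaussianPDFReal (m : ℝ) {v : ℝ≥0} (hv : v ≠ 0) {μ : Measure ℝ}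
    [IsFiniteMeasure μ] (hμ : MemLp id 2 μ) :
    Integrable (fun x => Real.log (gaussianPDFReal m v x)) μ := by
  simp only [log_gaussianPDFReal m hv]
  exact (integrable_const _).sub ((hμ.sub (memLp_const m)).integrable_sq.div_const _)

lemma integral_log_gaussianPDFReal (m : ℝ) {v : ℝ≥0} (hv : v ≠ 0) {μ : Measure ℝ}
    [IsProbabilityMeasure μ] (hμ : MemLp id 2 μ) :
    ∫ x, Real.log (gaussianPDFReal m v x) ∂μ
      = -Real.log (2 * Real.pi * v) / 2 - (∫ x, (x - m) ^ 2 ∂μ) / (2 * v) := by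
  have hsq : Integrable (fun x : ℝ => (x - m) ^ 2) μ := (hμ.sub (memLp_const m)).integrable_sq
  simp only [log_gaussianPDFReal m hv]
  rw [integral_sub (integrable_const _) (hsq.div_const _), integral_const, probReal_univ, one_smul,
    integral_div]

lemma integral_sub_sq_gaussianReal (m : ℝ) (v : ℝ≥0) :
    ∫ x, (x - m) ^ 2 ∂(gaussianReal m v) = v := by
  have h := variance_fun_id_gaussianReal (μ := m) (v := v)
  rwa [variance_eq_integral (by fun_prop), integral_id_gaussianReal] at h

lemma dH1_gaussianReal (m : ℝ) {v : ℝ≥0} (hv : v ≠ 0) :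
    dH1 (gaussianReal m v) = gaussianEntropy v := by
  have hv' : (0 : ℝ) < v := by positivity
  have h := (isPosDensity_gaussianReal m hv).integral_log
  rw [integral_log_gaussianPDFReal m hv (memLp_id_gaussianReal' 2 (by simp)),
    integral_sub_sq_gaussianReal] at h
  rw [← mul_right_inj' (Real.log_pos one_lt_two).ne', log_two_mul_gaussianEntropy hv']
  field_simp at h ⊢
  linarith

end Gaussian

-- Gibbs' inequality against the Gaussian of mean `a` and variance `s`.
lemma IsPosDensity.dH1_le_gaussianEntropy_add {p : ℝ → ℝ} {μ : Measure ℝ} [IsProbabilityMeasure μ]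
    (hp : IsPosDensity p μ) (hlog : Integrable (fun x => Real.log (p x)) μ) (hμ : MemLp id 2 μ)
    (a : ℝ) {s : ℝ} (hs : 0 < s) :
    dH1 μ ≤ gaussianEntropy s + ((∫ x, (x - a) ^ 2 ∂μ) / s - 1) / (2 * Real.log 2) := by
  have hs' : s.toNNReal ≠ 0 := (Real.toNNReal_pos.2 hs).ne'
  have hlog2 : 0 < Real.log 2 := Real.log_pos one_lt_two
  have h := hp.integral_log_le (isPosDensity_gaussianReal a hs') hlog
    (integrable_log_gaussianPDFReal a hs' hμ)
  rw [integral_log_gaussianPDFReal a hs' hμ, hp.integral_log, Real.coe_toNNReal s hs.le] at h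
  rw [← mul_le_mul_iff_right₀ hlog2, mul_add, log_two_mul_gaussianEntropy hs]
  calc Real.log 2 * dH1 μ
      ≤ Real.log (2 * Real.pi * s) / 2 + (∫ x, (x - a) ^ 2 ∂μ) / (2 * s) := by linarith
    _ = _ := by field_simp; ring

lemma exp_add_mul_log_le {s t x y : ℝ} (hs : 0 ≤ s) (ht : 0 ≤ t) (hst : s + t = 1) (hx : 0 < x)
    (hy : 0 < y) : Real.exp (s * Real.log x + t * Real.log y) ≤ s * x + t * y := by
  have h := convexOn_exp.2 (Set.mem_univ (Real.log x)) (Set.mem_univ (Real.log y)) hs ht hst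
  simpa only [smul_eq_mul, Real.exp_log hx, Real.exp_log hy] using h

lemma measurePreserving_gaussianReal_rotation {C S : ℝ} (h : C ^ 2 + S ^ 2 = 1) :
    MeasurePreserving (fun z : ℝ × ℝ => (C * z.1 - S * z.2, S * z.1 + C * z.2))
      ((gaussianReal 0 1).prod (gaussianReal 0 1))
      ((gaussianReal 0 1).prod (gaussianReal 0 1)) := by
  have hnorm : ‖(⟨C, S⟩ : ℂ)‖ = 1 := by
    rw [Complex.norm_def, Complex.normSq_mk, Real.sqrt_eq_one]
    linarith
  have hcos : Real.cos (Complex.arg ⟨C, S⟩) = C := by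
    rw [Complex.cos_arg (norm_ne_zero_iff.1 (by rw [hnorm]; exact one_ne_zero)), hnorm, div_one]
  have hsin : Real.sin (Complex.arg ⟨C, S⟩) = S := by rw [Complex.sin_arg, hnorm, div_one]
  have hrot := IsGaussian.map_rotation_eq_self (μ := gaussianReal 0 1)
    integral_id_gaussianReal (-Complex.arg ⟨C, S⟩)
  refine ⟨by fun_prop, ?_⟩
  convert hrot using 2
  funext z
  simp only [ContinuousLinearMap.rotation_apply, Real.cos_neg, hcos, smul_eq_mul, Real.sin_neg,
    hsin, neg_mul, neg_neg, Prod.mk.injEq, and_true]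
  ring

instance isProbabilityMeasure_map_const_mul (μ : Measure ℝ) [IsProbabilityMeasure μ] (c : ℝ) :
    IsProbabilityMeasure (μ.map (c * ·)) :=
  Measure.isProbabilityMeasure_map (by fun_prop)

lemma map_mul_conv_map_mul (μ ν : Measure ℝ) [SFinite μ] [SFinite ν] (c d : ℝ) :
    μ.map (c * ·) ∗ ν.map (d * ·) = (μ.prod ν).map fun z => c * z.1 + d * z.2 := by
  rw [Measure.conv, Measure.map_prod_map _ _ (by fun_prop) (by fun_prop),
    Measure.map_map (by fun_prop) (by fun_prop)]
  rfl

namespace IsPosDensity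

variable {p q r : ℝ → ℝ} {μ ν ρ : Measure ℝ}

section Comp

variable {Ω : Type*} [MeasurableSpace Ω] {P : Measure Ω} {u w : Ω → ℝ}

lemma integrable_log_div_comp (hp : IsPosDensity p μ) (hq : IsPosDensity q ν)
    (hlogp : Integrable (fun x => Real.log (p x)) μ)
    (hlogq : Integrable (fun x => Real.log (q x)) ν)
    (hu : MeasurePreserving u P μ) (hw : MeasurePreserving w P ν) :
    Integrable (fun ω => Real.log (p (u ω) / q (w ω))) P := by
  simp only [Real.log_div (hp.pos _).ne' (hq.pos _).ne']
  exact (hu.integrable_comp_of_integrable hlogp).sub (hw.integrable_comp_of_integrable hlogq)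

lemma integral_log_div_comp (hp : IsPosDensity p μ) (hq : IsPosDensity q ν)
    (hlogp : Integrable (fun x => Real.log (p x)) μ)
    (hlogq : Integrable (fun x => Real.log (q x)) ν)
    (hu : MeasurePreserving u P μ) (hw : MeasurePreserving w P ν) :
    ∫ ω, Real.log (p (u ω) / q (w ω)) ∂P = Real.log 2 * (dH1 ν - dH1 μ) := by
  have hlogu : Integrable (fun ω => Real.log (p (u ω))) P := hu.integrable_comp_of_integrable hlogp
  have hlogw : Integrable (fun ω => Real.log (q (w ω))) P := hw.integrable_comp_of_integrable hlogq
  simp only [Real.log_div (hp.pos _).ne' (hq.pos _).ne']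
  rw [integral_sub hlogu hlogw, hp.integral_log_comp hu, hq.integral_log_comp hw]
  ring

end Comp

variable [IsProbabilityMeasure ρ]

lemma lintegral_comp_mul_deriv_le_one (hr : IsPosDensity r ρ) {θ θ' : ℝ → ℝ}
    (hθ : ∀ x, HasDerivAt θ (θ' x) x) (hθ' : ∀ x, 0 < θ' x) :
    ∫⁻ x, ENNReal.ofReal (r (θ x) * θ' x) ≤ 1 := by
  have hinj : Set.InjOn θ Set.univ := (strictMono_of_hasDerivAt_pos hθ hθ').injective.injOn
  calc ∫⁻ x, ENNReal.ofReal (r (θ x) * θ' x)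
      = ∫⁻ x in Set.univ, ENNReal.ofReal |θ' x| * ENNReal.ofReal (r (θ x)) := by
        simp only [setLIntegral_univ, abs_of_pos (hθ' _), mul_comm (r _),
          ENNReal.ofReal_mul (hθ' _).le]
    _ = ∫⁻ y in θ '' Set.univ, ENNReal.ofReal (r y) :=
        (lintegral_image_eq_lintegral_abs_deriv_mul MeasurableSet.univ
          (fun x _ => (hθ x).hasDerivWithinAt) hinj fun y => ENNReal.ofReal (r y)).symm
    _ ≤ ∫⁻ y, ENNReal.ofReal (r y) := setLIntegral_le_lintegral _ _
    _ = 1 := hr.lintegral_ofReal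

lemma lintegral_prod_comp_div_mul_deriv_le_one [SFinite μ] [IsProbabilityMeasure ν]
    (hr : IsPosDensity r ρ) (hp : IsPosDensity p μ) {θ θ' : ℝ × ℝ → ℝ} (hθm : Measurable θ)
    (hθ'm : Measurable θ') (hθ : ∀ x y, HasDerivAt (fun x => θ (x, y)) (θ' (x, y)) x)
    (hθ' : ∀ z, 0 < θ' z) :
    ∫⁻ z, ENNReal.ofReal (r (θ z) / p z.1 * θ' z) ∂(μ.prod ν) ≤ 1 := by
  have hpm := hp.measurable
  have hrm := hr.measurable
  rw [lintegral_prod_symm _ (by fun_prop)]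
  calc ∫⁻ y, ∫⁻ x, ENNReal.ofReal (r (θ (x, y)) / p x * θ' (x, y)) ∂μ ∂ν
      ≤ ∫⁻ _, 1 ∂ν := by
        refine lintegral_mono fun y => ?_
        rw [hp.lintegral_eq (by fun_prop)]
        refine le_of_eq_of_le (lintegral_congr fun x => ?_)
          (hr.lintegral_comp_mul_deriv_le_one (fun x => hθ x y) fun x => hθ' (x, y))
        rw [← ENNReal.ofReal_mul (hp.pos x).le, ← mul_assoc, mul_div_cancel₀ _ (hp.pos x).ne']
    _ = 1 := by simp

end IsPosDensity

section EntropyPower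

variable {p q r : ℝ → ℝ} {μ ν : Measure ℝ} [IsProbabilityMeasure μ] [IsProbabilityMeasure ν]

-- `u` and `v` are a rotation of the standard Gaussian pair `(x, y)`; `w₁` and `w₂` are their
-- monotone transports to `μ` and `ν`.
lemma exists_gaussian_coupling {C S : ℝ} (hCS : C ^ 2 + S ^ 2 = 1) (hp : IsPosDensity p μ)
    (hq : IsPosDensity q ν) :
    ∃ u v w₁ w₂ : ℝ × ℝ → ℝ,
      MeasurePreserving u ((gaussianReal 0 1).prod (gaussianReal 0 1)) (gaussianReal 0 1) ∧
      MeasurePreserving v ((gaussianReal 0 1).prod (gaussianReal 0 1)) (gaussianReal 0 1) ∧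
      MeasurePreserving w₁ ((gaussianReal 0 1).prod (gaussianReal 0 1)) μ ∧
      MeasurePreserving w₂ ((gaussianReal 0 1).prod (gaussianReal 0 1)) ν ∧
      MeasurePreserving (fun z => C * w₁ z + S * w₂ z)
        ((gaussianReal 0 1).prod (gaussianReal 0 1)) (μ.map (C * ·) ∗ ν.map (S * ·)) ∧
      ∀ x y, HasDerivAt (fun x => C * w₁ (x, y) + S * w₂ (x, y))
        (C ^ 2 * (gaussianPDFReal 0 1 (u (x, y)) / p (w₁ (x, y)))
          + S ^ 2 * (gaussianPDFReal 0 1 (v (x, y)) / q (w₂ (x, y)))) x := by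
  have hφ := isPosDensity_gaussianReal 0 one_ne_zero
  obtain ⟨T₁, hT₁, hmp₁⟩ := hφ.exists_transport hp
  obtain ⟨T₂, hT₂, hmp₂⟩ := hφ.exists_transport hq
  have hrot := measurePreserving_gaussianReal_rotation hCS
  have hu : MeasurePreserving (fun z : ℝ × ℝ => C * z.1 - S * z.2)
      ((gaussianReal 0 1).prod (gaussianReal 0 1)) (gaussianReal 0 1) :=
    measurePreserving_fst.comp hrot
  have hv : MeasurePreserving (fun z : ℝ × ℝ => S * z.1 + C * z.2)
      ((gaussianReal 0 1).prod (gaussianReal 0 1)) (gaussianReal 0 1) :=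
    measurePreserving_snd.comp hrot
  refine ⟨_, _, _, _, hu, hv, hmp₁.comp hu, hmp₂.comp hv, ?_, fun x y => ?_⟩
  · have hsum : MeasurePreserving (fun z => C * z.1 + S * z.2) (μ.prod ν)
        (μ.map (C * ·) ∗ ν.map (S * ·)) := ⟨by fun_prop, (map_mul_conv_map_mul μ ν C S).symm⟩
    exact hsum.comp ((hmp₁.prod hmp₂).comp hrot)
  · have hu' : HasDerivAt (fun x => C * x - S * y) C x := by
      simpa using! ((hasDerivAt_id x).const_mul C).sub_const (S * y)
    have hv' : HasDerivAt (fun x => S * x + C * y) S x := by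
      simpa using! ((hasDerivAt_id x).const_mul S).add_const (C * y)
    have hw₁ := ((hT₁ _).comp x hu').const_mul C
    have hw₂ := ((hT₂ _).comp x hv').const_mul S
    refine (hw₁.add hw₂).congr_deriv ?_
    simp only [Function.comp]
    ring

-- In the coupling, `θ = C * w₁ + S * w₂` is for fixed `y` a change of variables in `x` with
-- derivative `C ^ 2 * D₁ + S ^ 2 * D₂`. So `exp F` has integral at most `1`, where
-- `F = log (r θ / φ x) + C ^ 2 * log D₁ + S ^ 2 * log D₂`, and the claim is `∫ F ≤ 0`.
theorem sq_mul_dH1_add_sq_mul_dH1_le_dH1_conv {C S : ℝ} (hCS : C ^ 2 + S ^ 2 = 1)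
    (hp : IsPosDensity p μ) (hq : IsPosDensity q ν)
    (hr : IsPosDensity r (μ.map (C * ·) ∗ ν.map (S * ·)))
    (hlogp : Integrable (fun x => Real.log (p x)) μ)
    (hlogq : Integrable (fun x => Real.log (q x)) ν)
    (hlogr : Integrable (fun x => Real.log (r x)) (μ.map (C * ·) ∗ ν.map (S * ·))) :
    C ^ 2 * dH1 μ + S ^ 2 * dH1 ν ≤ dH1 (μ.map (C * ·) ∗ ν.map (S * ·)) := by
  obtain ⟨u, v, w₁, w₂, hu, hv, hw₁, hw₂, hθ, hderiv⟩ := exists_gaussian_coupling hCS hp hq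
  set φ := gaussianPDFReal 0 1
  set γ := gaussianReal 0 1
  have hφ : IsPosDensity φ γ := isPosDensity_gaussianReal 0 one_ne_zero
  have hlogφ : Integrable (fun x => Real.log (φ x)) γ :=
    integrable_log_gaussianPDFReal 0 one_ne_zero (memLp_id_gaussianReal' 2 (by simp))
  set θ : ℝ × ℝ → ℝ := fun z => C * w₁ z + S * w₂ z
  set D₁ : ℝ × ℝ → ℝ := fun z => φ (u z) / p (w₁ z)
  set D₂ : ℝ × ℝ → ℝ := fun z => φ (v z) / q (w₂ z)
  have hexp (z : ℝ × ℝ) : Real.exp (C ^ 2 * Real.log (D₁ z) + S ^ 2 * Real.log (D₂ z))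
      ≤ C ^ 2 * D₁ z + S ^ 2 * D₂ z :=
    exp_add_mul_log_le (sq_nonneg C) (sq_nonneg S) hCS (div_pos (hφ.pos _) (hp.pos _))
      (div_pos (hφ.pos _) (hq.pos _))
  have hi := hr.integrable_log_div_comp hφ hlogr hlogφ hθ measurePreserving_fst
  have hi₁ := (hφ.integrable_log_div_comp hp hlogφ hlogp hu hw₁).const_mul (C ^ 2)
  have hi₂ := (hφ.integrable_log_div_comp hq hlogφ hlogq hv hw₂).const_mul (S ^ 2)
  have hD : Measurable fun z => C ^ 2 * D₁ z + S ^ 2 * D₂ z :=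
    (((hφ.measurable.comp hu.measurable).div (hp.measurable.comp hw₁.measurable)).const_mul _).add
      (((hφ.measurable.comp hv.measurable).div (hq.measurable.comp hw₂.measurable)).const_mul _)
  have hle := integral_nonpos_of_lintegral_exp_le_one (hi.add (hi₁.add hi₂)) <|
    (lintegral_mono fun z => ENNReal.ofReal_le_ofReal <| by
      have hpos := div_pos (hr.pos (θ z)) (hφ.pos z.1)
      rw [Pi.add_apply, Pi.add_apply, Real.exp_add, Real.exp_log hpos]
      exact mul_le_mul_of_nonneg_left (hexp z) hpos.le).trans <|
    hr.lintegral_prod_comp_div_mul_deriv_le_one hφ hθ.measurable hD hderiv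
      fun z => (Real.exp_pos _).trans_le (hexp z)
  rw [integral_add' hi (hi₁.add hi₂), integral_add' hi₁ hi₂, integral_const_mul, integral_const_mul,
    hr.integral_log_div_comp hφ hlogr hlogφ hθ measurePreserving_fst,
    hφ.integral_log_div_comp hp hlogφ hlogp hu hw₁,
    hφ.integral_log_div_comp hq hlogφ hlogq hv hw₂] at hle
  refine le_of_mul_le_mul_left ?_ (Real.log_pos one_lt_two)
  linear_combination hle + Real.log 2 * dH1 γ * hCS

end EntropyPower

lemma map_mul_conv_map_mul_map_mul (μ ν : Measure ℝ) [SFinite μ] [SFinite ν] (k c d : ℝ) :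
    (μ.map (c * ·) ∗ ν.map (d * ·)).map (k * ·) = μ.map (k * c * ·) ∗ ν.map (k * d * ·) := by
  rw [map_mul_conv_map_mul, map_mul_conv_map_mul, Measure.map_map (by fun_prop) (by fun_prop)]
  congr 1
  funext z
  simp only [Function.comp]
  ring

lemma IsPosDensity.dH1_map_inv_sqrt_mul {p : ℝ → ℝ} {μ : Measure ℝ} [IsProbabilityMeasure μ]
    (hp : IsPosDensity p μ) (hlog : Integrable (fun x => Real.log (p x)) μ) {t : ℝ} (ht : 0 < t) :
    dH1 (μ.map ((√t)⁻¹ * ·)) = dH1 μ - gaussianEntropy t + gaussianEntropy 1 := by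
  have h := hp.dH1_map_affine hlog (inv_ne_zero (Real.sqrt_ne_zero'.2 ht)) 0
  simp only [add_zero] at h
  have hscale := gaussianEntropy_sub one_pos ht
  rw [h, abs_of_pos (by positivity), Real.logb_inv, Real.sqrt_eq_rpow,
    Real.logb_rpow_eq_mul_logb_of_pos ht]
  rw [Real.logb_div one_ne_zero ht.ne', Real.logb_one] at hscale
  linarith

-- The previous inequality for the standardised laws; `t` and `w` are the parameters at which the
-- entropy power inequality is linearised.
theorem gaussianEntropy_add_le_dH1_conv {p q r : ℝ → ℝ} {μ ν : Measure ℝ} [IsProbabilityMeasure μ]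
    [IsProbabilityMeasure ν] {b c s t w : ℝ} (ht : 0 < t) (hw : 0 < w) (hs : 0 < s)
    (hbc : b ^ 2 * t + c ^ 2 * w = s) (hp : IsPosDensity p μ) (hq : IsPosDensity q ν)
    (hr : IsPosDensity r (μ.map (b * ·) ∗ ν.map (c * ·)))
    (hlogp : Integrable (fun x => Real.log (p x)) μ)
    (hlogq : Integrable (fun x => Real.log (q x)) ν)
    (hlogr : Integrable (fun x => Real.log (r x)) (μ.map (b * ·) ∗ ν.map (c * ·))) :
    gaussianEntropy s + b ^ 2 * t / s * (dH1 μ - gaussianEntropy t)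
        + c ^ 2 * w / s * (dH1 ν - gaussianEntropy w)
      ≤ dH1 (μ.map (b * ·) ∗ ν.map (c * ·)) := by
  have hsqrt {x : ℝ} (hx : 0 < x) : (√x)⁻¹ ≠ 0 := inv_ne_zero (Real.sqrt_ne_zero'.2 hx)
  set ρ := μ.map (b * ·) ∗ ν.map (c * ·) with hρ
  set C := b * √t / √s
  set S := c * √w / √s
  have hC : C ^ 2 = b ^ 2 * t / s := by
    rw [div_pow, mul_pow, Real.sq_sqrt ht.le, Real.sq_sqrt hs.le]
  have hS : S ^ 2 = c ^ 2 * w / s := by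
    rw [div_pow, mul_pow, Real.sq_sqrt hw.le, Real.sq_sqrt hs.le]
  have hCS : C ^ 2 + S ^ 2 = 1 := by rw [hC, hS, ← add_div, hbc, div_self hs.ne']
  have hnorm : (μ.map ((√t)⁻¹ * ·)).map (C * ·) ∗ (ν.map ((√w)⁻¹ * ·)).map (S * ·)
      = ρ.map ((√s)⁻¹ * ·) := by
    rw [hρ, map_mul_conv_map_mul_map_mul, Measure.map_map (by fun_prop) (by fun_prop),
      Measure.map_map (by fun_prop) (by fun_prop)]
    have hst : √t ≠ 0 := Real.sqrt_ne_zero'.2 ht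
    have hsw : √w ≠ 0 := Real.sqrt_ne_zero'.2 hw
    congr 2 <;> funext x <;> simp only [Function.comp, C, S] <;> field_simp
  have h := sq_mul_dH1_add_sq_mul_dH1_le_dH1_conv hCS
    (by simpa using hp.map_affine (hsqrt ht) 0) (by simpa using hq.map_affine (hsqrt hw) 0)
    (by simpa [hnorm] using hr.map_affine (hsqrt hs) 0)
    (by simpa using hp.integrable_log_map_affine hlogp (hsqrt ht) 0)
    (by simpa using hq.integrable_log_map_affine hlogq (hsqrt hw) 0)
    (by simpa [hnorm] using hr.integrable_log_map_affine hlogr (hsqrt hs) 0)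
  rw [hnorm, hp.dH1_map_inv_sqrt_mul hlogp ht, hq.dH1_map_inv_sqrt_mul hlogq hw,
    hr.dH1_map_inv_sqrt_mul hlogr hs] at h
  rw [← hC, ← hS]
  linear_combination h - gaussianEntropy 1 * hCS

section SecondMoment

variable {μ ν : Measure ℝ} [IsProbabilityMeasure μ] [IsProbabilityMeasure ν]

lemma memLp_id_conv {r : ENNReal} (hμ : MemLp id r μ) (hν : MemLp id r ν) :
    MemLp id r (μ ∗ ν) :=
  (memLp_map_measure_iff (by fun_prop) (by fun_prop)).2 <|
    (hμ.comp_measurePreserving measurePreserving_fst).add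
      (hν.comp_measurePreserving measurePreserving_snd)

lemma integral_sub_sq_conv (hμ : MemLp id 2 μ) (hν : MemLp id 2 ν) (hν0 : ∫ x, x ∂ν = 0) (a : ℝ) :
    ∫ x, (x - a) ^ 2 ∂(μ ∗ ν) = ∫ x, (x - a) ^ 2 ∂μ + ∫ x, x ^ 2 ∂ν := by
  have hμsq : Integrable (fun x => (x - a) ^ 2) μ := (hμ.sub (memLp_const a)).integrable_sq
  have hνsq : Integrable (fun x => x ^ 2) ν := hν.integrable_sq
  have hcross : ∫ z : ℝ × ℝ, 2 * (z.1 - a) * z.2 ∂(μ.prod ν) = 0 := by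
    rw [integral_prod_mul (fun x : ℝ => 2 * (x - a)) (fun x : ℝ => x), hν0, mul_zero]
  have hcross_int : Integrable (fun z : ℝ × ℝ => 2 * (z.1 - a) * z.2) (μ.prod ν) :=
    (((hμ.sub (memLp_const a)).integrable one_le_two).const_mul 2).mul_prod
      (hν.integrable one_le_two)
  have hsq : Integrable (fun z : ℝ × ℝ => (z.1 - a) ^ 2 + z.2 ^ 2) (μ.prod ν) :=
    (hμsq.comp_fst ν).add (hνsq.comp_snd μ)
  have hexpand (z : ℝ × ℝ) :
      (z.1 + z.2 - a) ^ 2 = (z.1 - a) ^ 2 + z.2 ^ 2 + 2 * (z.1 - a) * z.2 := by ring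
  rw [Measure.conv, integral_map (by fun_prop) (by fun_prop)]
  simp only [hexpand]
  rw [integral_add hsq hcross_int,
    integral_add (hμsq.comp_fst ν) (hνsq.comp_snd μ), hcross, add_zero,
    integral_fun_fst (fun x : ℝ => (x - a) ^ 2), integral_fun_snd (fun x : ℝ => x ^ 2)]
  simp

end SecondMoment

section GaussianSmoothing

open scoped NNReal

variable {v : ℝ≥0} {ν : Measure ℝ} [IsProbabilityMeasure ν]

lemma gaussianPDFReal_le (m : ℝ) (v : ℝ≥0) (x : ℝ) :
    gaussianPDFReal m v x ≤ (√(2 * Real.pi * v))⁻¹ :=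
  mul_le_of_le_one_right (by positivity) <|
    Real.exp_le_one_iff.2 <| div_nonpos_of_nonpos_of_nonneg (by nlinarith [sq_nonneg (x - m)])
      (by positivity)

lemma continuous_gaussianPDFReal_uncurry (v : ℝ≥0) :
    Continuous fun z : ℝ × ℝ => gaussianPDFReal z.1 v z.2 := by
  unfold gaussianPDFReal
  fun_prop

lemma continuous_gaussianPDFReal_mean (v : ℝ≥0) (x : ℝ) :
    Continuous fun y => gaussianPDFReal y v x := by
  unfold gaussianPDFReal
  fun_prop

lemma integrable_gaussianPDFReal_mean (v : ℝ≥0) (ν : Measure ℝ) [IsFiniteMeasure ν] (x : ℝ) :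
    Integrable (fun y => gaussianPDFReal y v x) ν := by
  refine Integrable.of_bound (continuous_gaussianPDFReal_mean v x).aestronglyMeasurable
    (√(2 * Real.pi * v))⁻¹ (ae_of_all _ fun y => ?_)
  rw [Real.norm_of_nonneg (gaussianPDFReal_nonneg _ _ _)]
  exact gaussianPDFReal_le y v x

/-- The density of the convolution `ν ∗ gaussianReal 0 v`, for `v ≠ 0`, written as a mixture of
Gaussian densities with mean distributed according to `ν`. -/
def gaussianConvPDF (ν : Measure ℝ) (v : ℝ≥0) (x : ℝ) : ℝ :=
  ∫ y, gaussianPDFReal y v x ∂ν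

lemma gaussianConvPDF_le (ν : Measure ℝ) [IsProbabilityMeasure ν] (v : ℝ≥0) (x : ℝ) :
    gaussianConvPDF ν v x ≤ (√(2 * Real.pi * v))⁻¹ :=
  (integral_mono (integrable_gaussianPDFReal_mean v ν x) (integrable_const _)
    fun y => gaussianPDFReal_le y v x).trans_eq (by rw [integral_const, probReal_univ, one_smul])

lemma continuous_gaussianConvPDF (ν : Measure ℝ) [IsFiniteMeasure ν] (v : ℝ≥0) :
    Continuous (gaussianConvPDF ν v) := by
  have hcont := continuous_gaussianPDFReal_uncurry v
  refine continuous_of_dominated (bound := fun _ => (√(2 * Real.pi * v))⁻¹)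
    (fun x => (integrable_gaussianPDFReal_mean v ν x).1) (fun x => ae_of_all _ fun y => ?_)
    (integrable_const _)
    (ae_of_all _ fun y => hcont.comp (by fun_prop : Continuous fun x : ℝ => (y, x)))
  rw [Real.norm_of_nonneg (gaussianPDFReal_nonneg _ _ _)]
  exact gaussianPDFReal_le y v x

lemma conv_gaussianReal_eq_withDensity (ν : Measure ℝ) [IsFiniteMeasure ν] (hv : v ≠ 0) :
    ν ∗ gaussianReal 0 v = volume.withDensity fun x => ENNReal.ofReal (gaussianConvPDF ν v x) := by
  have hpdf : Measurable fun z : ℝ × ℝ => ENNReal.ofReal (gaussianPDFReal z.1 v z.2) :=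
    (continuous_gaussianPDFReal_uncurry v).measurable.ennreal_ofReal
  have hconv : Measurable fun x => ENNReal.ofReal (gaussianConvPDF ν v x) :=
    (continuous_gaussianConvPDF ν v).measurable.ennreal_ofReal
  refine Measure.ext_of_lintegral _ fun f hf => ?_
  calc ∫⁻ x, f x ∂(ν ∗ gaussianReal 0 v)
      = ∫⁻ y, ∫⁻ x, f x ∂(gaussianReal y v) ∂ν := by
        rw [Measure.lintegral_conv hf]
        refine lintegral_congr fun y => ?_
        rw [← lintegral_map (f := f) (g := (y + ·)) hf (by fun_prop), gaussianReal_map_const_add,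
          zero_add]
    _ = ∫⁻ y, (∫⁻ x, ENNReal.ofReal (gaussianPDFReal y v x) * f x) ∂ν := by
        simp only [(isPosDensity_gaussianReal _ hv).lintegral_eq hf]
    _ = ∫⁻ x, ∫⁻ y, ENNReal.ofReal (gaussianPDFReal y v x) * f x ∂ν :=
        lintegral_lintegral_swap (hpdf.mul (hf.comp measurable_snd)).aemeasurable
    _ = ∫⁻ x, ENNReal.ofReal (gaussianConvPDF ν v x) * f x := by
        refine lintegral_congr fun x => ?_
        rw [lintegral_mul_const _ (continuous_gaussianPDFReal_mean v x).measurable.ennreal_ofReal,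
          gaussianConvPDF,
          ofReal_integral_eq_lintegral_ofReal (integrable_gaussianPDFReal_mean v ν x)
            (ae_of_all _ fun y => gaussianPDFReal_nonneg y v x)]
    _ = ∫⁻ x, f x ∂(volume.withDensity fun x => ENNReal.ofReal (gaussianConvPDF ν v x)) :=
        (lintegral_withDensity_eq_lintegral_mul _ hconv hf).symm

lemma isPosDensity_gaussianConvPDF (ν : Measure ℝ) [IsProbabilityMeasure ν] (hv : v ≠ 0) :
    IsPosDensity (gaussianConvPDF ν v) (ν ∗ gaussianReal 0 v) where
  continuous := continuous_gaussianConvPDF ν v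
  pos x := by
    refine (integral_pos_iff_support_of_nonneg (fun y => gaussianPDFReal_nonneg y v x)
      (integrable_gaussianPDFReal_mean v ν x)).2 ?_
    have hsupp : (Function.support fun y => gaussianPDFReal y v x) = Set.univ :=
      Set.eq_univ_of_forall fun y => (gaussianPDFReal_pos y v x hv).ne'
    simp [hsupp]
  eq_withDensity := conv_gaussianReal_eq_withDensity ν hv

lemma log_gaussianConvPDF_le (ν : Measure ℝ) [IsProbabilityMeasure ν] (hv : v ≠ 0) (x : ℝ) :
    Real.log (gaussianConvPDF ν v x) ≤ -Real.log (2 * Real.pi * v) / 2 := by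
  have h := Real.log_le_log ((isPosDensity_gaussianConvPDF ν hv).pos x) (gaussianConvPDF_le ν v x)
  rwa [Real.log_inv, Real.log_sqrt (by positivity), ← neg_div] at h

lemma le_log_gaussianConvPDF (hν : MemLp id 2 ν) (hv : v ≠ 0) (x : ℝ) :
    -Real.log (2 * Real.pi * v) / 2 - (∫ y, (y - x) ^ 2 ∂ν) / (2 * v)
      ≤ Real.log (gaussianConvPDF ν v x) := by
  have hpos := (isPosDensity_gaussianConvPDF ν hv).pos x
  have hsymm (y : ℝ) : gaussianPDFReal y v x = gaussianPDFReal x v y := by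
    simp only [gaussianPDFReal, sub_sq_comm x y]
  have hlog := integrable_log_gaussianPDFReal x hv hν
  have h := integral_nonpos_of_lintegral_exp_le_one
    (hlog.sub (integrable_const (Real.log (gaussianConvPDF ν v x)))) <| by
      simp only [Pi.sub_apply, Real.exp_sub, Real.exp_log (gaussianPDFReal_pos _ _ _ hv),
        Real.exp_log hpos, ← hsymm]
      rw [← ofReal_integral_eq_lintegral_ofReal
        ((integrable_gaussianPDFReal_mean v ν x).div_const _)
        (ae_of_all _ fun y => div_nonneg (gaussianPDFReal_nonneg _ _ _) hpos.le), integral_div,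
        ← gaussianConvPDF, div_self hpos.ne', ENNReal.ofReal_one]
  rw [integral_sub' hlog (integrable_const _), integral_log_gaussianPDFReal x hv hν,
    integral_const, probReal_univ, one_smul] at h
  linarith

lemma integrable_log_gaussianConvPDF (hν : MemLp id 2 ν) (hv : v ≠ 0) :
    Integrable (fun x => Real.log (gaussianConvPDF ν v x)) (ν ∗ gaussianReal 0 v) := by
  have hsq : Integrable (fun y : ℝ => y ^ 2) ν := hν.integrable_sq
  have hconv : Integrable (fun x : ℝ => x ^ 2) (ν ∗ gaussianReal 0 v) :=
    (memLp_id_conv hν (memLp_id_gaussianReal' 2 (by simp))).integrable_sq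
  have hmoment (x : ℝ) : ∫ y, (y - x) ^ 2 ∂ν ≤ 2 * ∫ y, y ^ 2 ∂ν + 2 * x ^ 2 := by
    have hshift : Integrable (fun y => (y - x) ^ 2) ν := (hν.sub (memLp_const x)).integrable_sq
    have h : ∫ y, (y - x) ^ 2 ∂ν ≤ ∫ y, (2 * y ^ 2 + 2 * x ^ 2) ∂ν :=
      integral_mono hshift ((hsq.const_mul 2).add (integrable_const _)) fun y => by
        linarith [sq_nonneg (y + x)]
    rwa [integral_add (hsq.const_mul 2) (integrable_const _), integral_const_mul, integral_const,
      probReal_univ, one_smul] at h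
  refine Integrable.mono' (g := fun x => |Real.log (2 * Real.pi * v)|
      + (2 * ∫ y, y ^ 2 ∂ν + 2 * x ^ 2) / (2 * v))
    ((integrable_const _).add (((integrable_const _).add (hconv.const_mul 2)).div_const _))
    (isPosDensity_gaussianConvPDF ν hv).measurable_log.aestronglyMeasurable
    (ae_of_all _ fun x => abs_le.2 ⟨?_, ?_⟩)
  · have h : (∫ y, (y - x) ^ 2 ∂ν) / (2 * v) ≤ (2 * ∫ y, y ^ 2 ∂ν + 2 * x ^ 2) / (2 * v) := by
      gcongr
      exact hmoment x
    linarith [le_log_gaussianConvPDF hν hv x, le_abs_self (Real.log (2 * Real.pi * v)),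
      abs_nonneg (Real.log (2 * Real.pi * v))]
  · have h : 0 ≤ (2 * ∫ y, y ^ 2 ∂ν + 2 * x ^ 2) / (2 * v) := by positivity
    linarith [log_gaussianConvPDF_le ν hv x, neg_le_abs (Real.log (2 * Real.pi * v)),
      abs_nonneg (Real.log (2 * Real.pi * v))]

lemma le_dH1_conv_gaussianReal (hν : MemLp id 2 ν) (hv : v ≠ 0) :
    (1 / 2) * Real.logb 2 (2 * Real.pi * v) ≤ dH1 (ν ∗ gaussianReal 0 v) := by
  have h := integral_mono (integrable_log_gaussianConvPDF hν hv) (integrable_const _)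
    (log_gaussianConvPDF_le ν hv)
  rw [(isPosDensity_gaussianConvPDF ν hv).integral_log, integral_const, probReal_univ,
    one_smul] at h
  refine le_of_mul_le_mul_left ?_ (Real.log_pos one_lt_two)
  rw [mul_left_comm, Real.logb, mul_div_cancel₀ _ (Real.log_pos one_lt_two).ne']
  linarith

lemma dH1_conv_gaussianReal_le (hν : MemLp id 2 ν) (hv : v ≠ 0) (a : ℝ) {s : ℝ} (hs : 0 < s) :
    dH1 (ν ∗ gaussianReal 0 v)
      ≤ gaussianEntropy s + ((∫ x, (x - a) ^ 2 ∂ν + v) / s - 1) / (2 * Real.log 2) := by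
  have hγ : MemLp id 2 (gaussianReal 0 v) := memLp_id_gaussianReal' 2 (by simp)
  have h := (isPosDensity_gaussianConvPDF ν hv).dH1_le_gaussianEntropy_add
    (integrable_log_gaussianConvPDF hν hv) (memLp_id_conv hν hγ) a hs
  have hvar : ∫ x, x ^ 2 ∂(gaussianReal 0 v) = v := by
    simpa using integral_sub_sq_gaussianReal 0 v
  rwa [integral_sub_sq_conv hν hγ integral_id_gaussianReal, hvar] at h

end GaussianSmoothing

section SmoothedEntropyPower

open scoped NNReal

variable {ν : Measure ℝ} [IsProbabilityMeasure ν] {v : ℝ≥0}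

lemma dH1_map_add_const_conv_gaussianReal (hν : MemLp id 2 ν) (hv : v ≠ 0) (a : ℝ) :
    dH1 (ν.map (· + a) ∗ gaussianReal 0 v) = dH1 (ν ∗ gaussianReal 0 v) := by
  have hshift : ν.map (· + a) ∗ gaussianReal 0 v
      = (ν ∗ gaussianReal 0 v).map fun x => 1 * x + a := by
    rw [← Measure.conv_dirac ν a, Measure.conv_assoc, Measure.conv_comm (Measure.dirac a),
      ← Measure.conv_assoc, Measure.conv_dirac]
    simp only [one_mul]
  rw [hshift, (isPosDensity_gaussianConvPDF ν hv).dH1_map_affine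
    (integrable_log_gaussianConvPDF hν hv) one_ne_zero, abs_one, Real.logb_one, add_zero]

lemma map_mul_conv_gaussianReal_conv (ν : Measure ℝ) [IsProbabilityMeasure ν] (b : ℝ)
    {v₁ v₂ w : ℝ≥0} (hvw : b ^ 2 * v₁ + w = v₂) :
    (ν ∗ gaussianReal 0 v₁).map (b * ·) ∗ (gaussianReal 0 1).map (√w * ·)
      = ν.map (b * ·) ∗ gaussianReal 0 v₂ := by
  have hmap : (ν ∗ gaussianReal 0 v₁).map (b * ·)
      = ν.map (b * ·) ∗ (gaussianReal 0 v₁).map (b * ·) :=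
    Measure.map_conv_addMonoidHom (AddMonoidHom.mulLeft b) (measurable_const_mul b)
  rw [hmap, gaussianReal_map_const_mul, gaussianReal_map_const_mul, Measure.conv_assoc,
    gaussianReal_conv_gaussianReal]
  congr 2
  · simp
  · ext
    simp [← hvw]

lemma gaussianEntropy_add_le_dH1_conv_gaussianReal (hν : MemLp id 2 ν) (a b : ℝ) {v₁ v₂ w : ℝ≥0}
    (hv₁ : v₁ ≠ 0) (hv₂ : v₂ ≠ 0) (hvw : b ^ 2 * v₁ + w = v₂) {t : ℝ} (ht : 0 < t) :
    gaussianEntropy (b ^ 2 * t + w)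
        + b ^ 2 * t / (b ^ 2 * t + w) * (dH1 (ν ∗ gaussianReal 0 v₁) - gaussianEntropy t)
      ≤ dH1 (ν.map (fun x => b * x + a) ∗ gaussianReal 0 v₂) := by
  have hs : 0 < b ^ 2 * t + w := by
    rcases eq_or_ne b 0 with rfl | hb
    · have hw : (w : ℝ) = v₂ := by simpa using hvw
      simpa [hw, pos_iff_ne_zero] using hv₂
    · positivity
  have hνb : MemLp id 2 (ν.map (b * ·)) :=
    (memLp_map_measure_iff (by fun_prop) (by fun_prop)).2 (hν.const_mul b)
  have hshift : (ν.map (b * ·)).map (· + a) = ν.map fun x => b * x + a :=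
    Measure.map_map (by fun_prop) (by fun_prop)
  have hlaw := map_mul_conv_gaussianReal_conv ν b hvw
  have h := gaussianEntropy_add_le_dH1_conv ht one_pos hs
    (by rw [Real.sq_sqrt w.coe_nonneg, mul_one])
    (isPosDensity_gaussianConvPDF ν hv₁) (isPosDensity_gaussianReal 0 one_ne_zero)
    (hlaw ▸ isPosDensity_gaussianConvPDF (ν.map (b * ·)) hv₂)
    (integrable_log_gaussianConvPDF hν hv₁)
    (integrable_log_gaussianPDFReal 0 one_ne_zero (memLp_id_gaussianReal' 2 (by simp)))
    (hlaw ▸ integrable_log_gaussianConvPDF hνb hv₂)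
  rwa [hlaw, dH1_gaussianReal 0 one_ne_zero, NNReal.coe_one, sub_self, mul_zero, add_zero,
    ← dH1_map_add_const_conv_gaussianReal hνb hv₂ a, hshift] at h

end SmoothedEntropyPower

section CondDistrib

variable {Ω β γ δ : Type*} [MeasurableSpace Ω] [MeasurableSpace β] [MeasurableSpace γ]
  [MeasurableSpace δ] [StandardBorelSpace γ] [Nonempty γ] [StandardBorelSpace δ] [Nonempty δ]
  {μ : Measure Ω} [IsFiniteMeasure μ] {Q : Ω → β} {X : Ω → γ}

lemma condDistrib_comp_prodMk (hQ : Measurable Q) (hX : Measurable X) {f : β × γ → δ}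
    (hf : Measurable f) :
    ∀ᵐ q ∂μ.map Q, condDistrib (fun ω => f (Q ω, X ω)) Q μ q
      = (condDistrib X Q μ q).map fun x => f (q, x) := by
  set κ := condDistrib X Q μ
  let η : Kernel β δ := (Kernel.id ×ₖ κ).map f
  have hη (q : β) : η q = (κ q).map fun x => f (q, x) := by
    rw [Kernel.map_apply _ hf, Kernel.prod_apply, Kernel.id_apply, Measure.dirac_prod,
      Measure.map_map hf (by fun_prop)]
    rfl
  simp only [← hη]
  refine condDistrib_ae_eq_of_measure_eq_compProd_of_measurable hQ (by fun_prop) ?_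
  refine Measure.ext_of_lintegral _ fun g hg => ?_
  calc ∫⁻ z, g z ∂(μ.map fun ω => (Q ω, f (Q ω, X ω)))
      = ∫⁻ z, g (z.1, f z) ∂(μ.map fun ω => (Q ω, X ω)) := by
        rw [lintegral_map hg (by fun_prop), lintegral_map (by fun_prop) (by fun_prop)]
    _ = ∫⁻ q, ∫⁻ x, g (q, f (q, x)) ∂(κ q) ∂(μ.map Q) := by
        rw [← compProd_map_condDistrib hX.aemeasurable, Measure.lintegral_compProd (by fun_prop)]
    _ = ∫⁻ z, g z ∂(μ.map Q ⊗ₘ η) := by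
        rw [Measure.lintegral_compProd hg]
        refine lintegral_congr fun q => ?_
        rw [hη, lintegral_map (by fun_prop) (by fun_prop)]

lemma condDistrib_add_of_indepFun [AddMonoid γ] [MeasurableAdd₂ γ] {N : Ω → γ}
    (hQ : Measurable Q) (hX : Measurable X) (hN : Measurable N)
    (hind : IndepFun (fun ω => (Q ω, X ω)) N μ) :
    ∀ᵐ q ∂μ.map Q, condDistrib (fun ω => X ω + N ω) Q μ q = condDistrib X Q μ q ∗ μ.map N := by
  set κ := condDistrib X Q μ
  let η : Kernel β γ := (κ ×ₖ Kernel.const β (μ.map N)).map fun z => z.1 + z.2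
  have hη (q : β) : η q = κ q ∗ μ.map N := by
    rw [Kernel.map_apply _ (by fun_prop), Kernel.prod_apply, Kernel.const_apply]
    rfl
  simp only [← hη]
  refine condDistrib_ae_eq_of_measure_eq_compProd_of_measurable hQ (by fun_prop) ?_
  refine Measure.ext_of_lintegral _ fun g hg => ?_
  calc ∫⁻ z, g z ∂(μ.map fun ω => (Q ω, X ω + N ω))
      = ∫⁻ z, g (z.1.1, z.1.2 + z.2) ∂(μ.map fun ω => ((Q ω, X ω), N ω)) := by
        rw [lintegral_map hg (by fun_prop), lintegral_map (by fun_prop) (by fun_prop)]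
    _ = ∫⁻ z, ∫⁻ n, g (z.1, z.2 + n) ∂(μ.map N) ∂(μ.map fun ω => (Q ω, X ω)) := by
        rw [(indepFun_iff_map_prod_eq_prod_map_map (by fun_prop) hN.aemeasurable).1 hind,
          lintegral_prod _ (by fun_prop)]
    _ = ∫⁻ q, ∫⁻ x, ∫⁻ n, g (q, x + n) ∂(μ.map N) ∂(κ q) ∂(μ.map Q) := by
        rw [← compProd_map_condDistrib hX.aemeasurable, Measure.lintegral_compProd (by fun_prop)]
    _ = ∫⁻ z, g z ∂(μ.map Q ⊗ₘ η) := by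
        rw [Measure.lintegral_compProd hg]
        refine lintegral_congr fun q => ?_
        rw [hη, Measure.lintegral_conv (by fun_prop)]

lemma integral_integral_condDistrib {f : β × γ → ℝ} (hQ : Measurable Q) (hX : Measurable X)
    (hf : Measurable f) (hint : Integrable (fun ω => f (Q ω, X ω)) μ) :
    ∫ ω, ∫ x, f (Q ω, x) ∂(condDistrib X Q μ (Q ω)) ∂μ = ∫ ω, f (Q ω, X ω) ∂μ := by
  rw [← integral_congr_ae (condExp_prod_ae_eq_integral_condDistrib hQ hX.aemeasurable
    hf.stronglyMeasurable hint), integral_condExp hQ.comap_le]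

lemma integrable_integral_condDistrib {f : β × γ → ℝ} (hQ : Measurable Q) (hX : Measurable X)
    (hf : Measurable f) (hint : Integrable (fun ω => f (Q ω, X ω)) μ) :
    Integrable (fun ω => ∫ x, f (Q ω, x) ∂(condDistrib X Q μ (Q ω))) μ :=
  Integrable.integral_condDistrib hQ.aemeasurable hX.aemeasurable <|
    (integrable_map_measure (by fun_prop) (by fun_prop)).2 hint

lemma ae_memLp_id_condDistrib {X : Ω → ℝ} (hQ : Measurable Q) (hX : Measurable X)
    (hX2 : MemLp X 2 μ) : ∀ᵐ ω ∂μ, MemLp id 2 (condDistrib X Q μ (Q ω)) := by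
  have hsq : Integrable (fun z : β × ℝ => z.2 ^ 2) (μ.map fun ω => (Q ω, X ω)) :=
    (integrable_map_measure (by fun_prop) (by fun_prop)).2 hX2.integrable_sq
  filter_upwards [hsq.condDistrib_ae hQ.aemeasurable hX.aemeasurable] with ω hω
  exact (memLp_two_iff_integrable_sq (by fun_prop)).2 hω

end CondDistrib

section ConditionalEntropy

open scoped NNReal

variable {Ω β : Type*} [MeasurableSpace Ω] [MeasurableSpace β] {μ : Measure Ω}
  [IsProbabilityMeasure μ] {Q : Ω → β} {X N : Ω → ℝ} {g : β → ℝ} {v : ℝ≥0}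

lemma measurable_dH1_conv_gaussianReal (κ : Kernel β ℝ) [IsMarkovKernel κ] (hv : v ≠ 0) :
    Measurable fun q => dH1 (κ q ∗ gaussianReal 0 v) := by
  have hpdf : Measurable fun z : β × ℝ => gaussianConvPDF (κ z.1) v z.2 := by
    have h : StronglyMeasurable fun z : (β × ℝ) × ℝ => gaussianPDFReal z.2 v z.1.2 :=
      ((continuous_gaussianPDFReal_uncurry v).measurable.comp
        (by fun_prop : Measurable fun z : (β × ℝ) × ℝ => (z.2, z.1.2))).stronglyMeasurable
    exact (h.integral_kernel_prod_right' (κ := Kernel.prodMkRight ℝ κ)).measurable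
  have hdH1 (q : β) : dH1 (κ q ∗ gaussianReal 0 v)
      = -∫ x, gaussianConvPDF (κ q) v x * Real.logb 2 (gaussianConvPDF (κ q) v x) := by
    rw [(isPosDensity_gaussianConvPDF (κ q) hv).dH1_eq,
      (isPosDensity_gaussianConvPDF (κ q) hv).integral_eq]
  simp only [hdH1]
  exact (hpdf.mul (hpdf.log.div_const _)).stronglyMeasurable.integral_prod_right'.measurable.neg

lemma integrable_dH1_condDistrib_conv_gaussianReal (hQ : Measurable Q) (hX : Measurable X)
    (hX2 : MemLp X 2 μ) (hv : v ≠ 0) :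
    Integrable (fun ω => dH1 (condDistrib X Q μ (Q ω) ∗ gaussianReal 0 v)) μ := by
  have hsq : Integrable (fun ω => ∫ x, (x - 0) ^ 2 ∂(condDistrib X Q μ (Q ω))) μ :=
    integrable_integral_condDistrib (f := fun z => (z.2 - 0) ^ 2) hQ hX (by fun_prop)
      (hX2.sub (memLp_const 0)).integrable_sq
  refine integrable_of_le_of_le
    ((measurable_dH1_conv_gaussianReal _ hv).comp hQ).aestronglyMeasurable
    ?_ ?_ (integrable_const ((1 / 2) * Real.logb 2 (2 * Real.pi * v)))
    ((integrable_const (gaussianEntropy 1)).add <|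
      (((hsq.add (integrable_const (v : ℝ))).div_const 1).sub (integrable_const 1)).div_const
        (2 * Real.log 2))
  · filter_upwards [ae_memLp_id_condDistrib hQ hX hX2] with ω hω
    exact le_dH1_conv_gaussianReal hω hv
  · filter_upwards [ae_memLp_id_condDistrib hQ hX hX2] with ω hω
    exact dH1_conv_gaussianReal_le hω hv 0 one_pos

lemma condDiffEnt_add_of_map_eq_gaussianReal (hQ : Measurable Q) (hX : Measurable X)
    (hN : Measurable N) (hlaw : μ.map N = gaussianReal 0 v)
    (hind : IndepFun (fun ω => (Q ω, X ω)) N μ) :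
    condDiffEnt μ (fun ω => X ω + N ω) Q
      = ∫ ω, dH1 (condDistrib X Q μ (Q ω) ∗ gaussianReal 0 v) ∂μ := by
  refine integral_congr_ae ?_
  filter_upwards [ae_of_ae_map hQ.aemeasurable (condDistrib_add_of_indepFun hQ hX hN hind)]
    with ω hω
  rw [hω, hlaw]

lemma condDiffEnt_add_le_of_map_eq_gaussianReal (hQ : Measurable Q) (hX : Measurable X)
    (hN : Measurable N) (hX2 : MemLp X 2 μ) (hv : v ≠ 0) (hlaw : μ.map N = gaussianReal 0 v)
    (hind : IndepFun (fun ω => (Q ω, X ω)) N μ) (hg : Measurable g)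
    (hg2 : MemLp (fun ω => g (Q ω)) 2 μ) {s : ℝ} (hs : 0 < s) :
    condDiffEnt μ (fun ω => X ω + N ω) Q
      ≤ gaussianEntropy s
        + ((∫ ω, (X ω - g (Q ω)) ^ 2 ∂μ + v) / s - 1) / (2 * Real.log 2) := by
  have herr : Integrable (fun ω => (X ω - g (Q ω)) ^ 2) μ := (hX2.sub hg2).integrable_sq
  have hcond : Integrable
      (fun ω => ∫ x, (x - g (Q ω)) ^ 2 ∂(condDistrib X Q μ (Q ω))) μ :=
    integrable_integral_condDistrib (f := fun z => (z.2 - g z.1) ^ 2) hQ hX (by fun_prop) herr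
  have hratio : Integrable
      (fun ω => (∫ x, (x - g (Q ω)) ^ 2 ∂(condDistrib X Q μ (Q ω)) + v) / s) μ :=
    (hcond.add (integrable_const (v : ℝ))).div_const s
  have hbound : Integrable (fun ω => ((∫ x, (x - g (Q ω)) ^ 2 ∂(condDistrib X Q μ (Q ω)) + v) / s
      - 1) / (2 * Real.log 2)) μ :=
    (hratio.sub (integrable_const 1)).div_const _
  calc condDiffEnt μ (fun ω => X ω + N ω) Q
      = ∫ ω, dH1 (condDistrib X Q μ (Q ω) ∗ gaussianReal 0 v) ∂μ :=
        condDiffEnt_add_of_map_eq_gaussianReal hQ hX hN hlaw hind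
    _ ≤ ∫ ω, (gaussianEntropy s + ((∫ x, (x - g (Q ω)) ^ 2 ∂(condDistrib X Q μ (Q ω)) + v) / s
          - 1) / (2 * Real.log 2)) ∂μ := by
        refine integral_mono_ae (integrable_dH1_condDistrib_conv_gaussianReal hQ hX hX2 hv)
          ((integrable_const _).add hbound) ?_
        filter_upwards [ae_memLp_id_condDistrib hQ hX hX2] with ω hω
        exact dH1_conv_gaussianReal_le hω hv _ hs
    _ = _ := by
        rw [integral_add (integrable_const _) hbound, integral_div,
          integral_sub hratio (integrable_const _), integral_div,
          integral_add hcond (integrable_const _),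
          integral_integral_condDistrib (f := fun z => (z.2 - g z.1) ^ 2) hQ hX (by fun_prop) herr]
        simp only [integral_const, probReal_univ, one_smul]

lemma le_integral_sub_sq_add_of_condDiffEnt_eq (hQ : Measurable Q) (hX : Measurable X)
    (hN : Measurable N) (hX2 : MemLp X 2 μ) (hv : v ≠ 0) (hlaw : μ.map N = gaussianReal 0 v)
    (hind : IndepFun (fun ω => (Q ω, X ω)) N μ) (hg : Measurable g)
    (hg2 : MemLp (fun ω => g (Q ω)) 2 μ) {s : ℝ} (hs : 0 < s)
    (hent : condDiffEnt μ (fun ω => X ω + N ω) Q = gaussianEntropy s) :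
    s ≤ ∫ ω, (X ω - g (Q ω)) ^ 2 ∂μ + v := by
  have hlog2 : 0 < 2 * Real.log 2 := mul_pos two_pos (Real.log_pos one_lt_two)
  have h := condDiffEnt_add_le_of_map_eq_gaussianReal hQ hX hN hX2 hv hlaw hind hg hg2 hs
  rwa [hent, le_add_iff_nonneg_right, le_div_iff₀ hlog2, zero_mul, sub_nonneg,
    one_le_div₀ hs] at h

theorem gaussianEntropy_add_le_condDiffEnt {Z : Ω → ℝ} {b t : ℝ} {v₁ v₂ w : ℝ≥0}
    (hQ : Measurable Q) (hX : Measurable X) (hZ : Measurable Z) (hN : Measurable N)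
    (hX2 : MemLp X 2 μ) (hg : Measurable g) (hg2 : MemLp (fun ω => g (Q ω)) 2 μ)
    (hv₁ : v₁ ≠ 0) (hv₂ : v₂ ≠ 0) (hvw : b ^ 2 * v₁ + w = v₂) (ht : 0 < t)
    (hZlaw : μ.map Z = gaussianReal 0 v₁) (hNlaw : μ.map N = gaussianReal 0 v₂)
    (hZind : IndepFun (fun ω => (Q ω, X ω)) Z μ) (hNind : IndepFun (fun ω => (Q ω, X ω)) N μ) :
    gaussianEntropy (b ^ 2 * t + w) + b ^ 2 * t / (b ^ 2 * t + w)
        * (condDiffEnt μ (fun ω => X ω + Z ω) Q - gaussianEntropy t)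
      ≤ condDiffEnt μ (fun ω => b * X ω + g (Q ω) + N ω) Q := by
  set Y : Ω → ℝ := fun ω => b * X ω + g (Q ω)
  have hY : Measurable Y := by fun_prop
  have hYind : IndepFun (fun ω => (Q ω, Y ω)) N μ :=
    hNind.comp (φ := fun z => (z.1, b * z.2 + g z.1)) (by fun_prop) measurable_id
  have hX_int := integrable_dH1_condDistrib_conv_gaussianReal hQ hX hX2 hv₁
  have hdiff_int : Integrable (fun ω => b ^ 2 * t / (b ^ 2 * t + w)
      * (dH1 (condDistrib X Q μ (Q ω) ∗ gaussianReal 0 v₁) - gaussianEntropy t)) μ :=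
    (hX_int.sub (integrable_const _)).const_mul _
  rw [condDiffEnt_add_of_map_eq_gaussianReal hQ hX hZ hZlaw hZind,
    condDiffEnt_add_of_map_eq_gaussianReal hQ hY hN hNlaw hYind]
  calc _ = ∫ ω, (gaussianEntropy (b ^ 2 * t + w) + b ^ 2 * t / (b ^ 2 * t + w)
        * (dH1 (condDistrib X Q μ (Q ω) ∗ gaussianReal 0 v₁) - gaussianEntropy t)) ∂μ := by
        rw [integral_add (integrable_const _) hdiff_int, integral_const_mul,
          integral_sub hX_int (integrable_const _)]
        simp only [integral_const, probReal_univ, one_smul]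
    _ ≤ ∫ ω, dH1 (condDistrib Y Q μ (Q ω) ∗ gaussianReal 0 v₂) ∂μ := by
        refine integral_mono_ae ((integrable_const _).add hdiff_int)
          (integrable_dH1_condDistrib_conv_gaussianReal hQ hY ((hX2.const_mul b).add hg2) hv₂) ?_
        filter_upwards [ae_memLp_id_condDistrib hQ hX hX2, ae_of_ae_map hQ.aemeasurable
          (condDistrib_comp_prodMk hQ hX (f := fun z => b * z.2 + g z.1) (by fun_prop))]
          with ω hω hYω
        rw [hYω]
        exact gaussianEntropy_add_le_dH1_conv_gaussianReal hω _ b hv₁ hv₂ hvw ht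

end ConditionalEntropy

section SecondMoment

variable {Ω : Type*} [MeasurableSpace Ω] {μ : Measure Ω} {X Y : Ω → ℝ}

lemma integral_mul_add_mul_sq (hX : MemLp X 2 μ) (hY : MemLp Y 2 μ) (s t : ℝ) :
    ∫ ω, (s * X ω + t * Y ω) ^ 2 ∂μ
      = s ^ 2 * ∫ ω, X ω ^ 2 ∂μ + 2 * s * t * ∫ ω, X ω * Y ω ∂μ + t ^ 2 * ∫ ω, Y ω ^ 2 ∂μ := by
  have hXX := hX.integrable_sq.const_mul (s ^ 2)
  have hXY : Integrable (fun ω => 2 * s * t * (X ω * Y ω)) μ :=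
    (hX.integrable_mul hY).const_mul _
  have hsum : Integrable (fun ω => s ^ 2 * X ω ^ 2 + 2 * s * t * (X ω * Y ω)) μ := hXX.add hXY
  have hYY := hY.integrable_sq.const_mul (t ^ 2)
  calc ∫ ω, (s * X ω + t * Y ω) ^ 2 ∂μ
      = ∫ ω, (s ^ 2 * X ω ^ 2 + 2 * s * t * (X ω * Y ω) + t ^ 2 * Y ω ^ 2) ∂μ := by
        congr with ω
        ring
    _ = _ := by
        rw [integral_add hsum hYY, integral_add hXX hXY, integral_const_mul,
          integral_const_mul, integral_const_mul]

lemma sq_integral_mul_le_of_forall_le_integral_sub_sq (hX : MemLp X 2 μ) (hY : MemLp Y 2 μ)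
    {A : ℝ} (hA : ∀ β : ℝ, A ≤ ∫ ω, (X ω - β * Y ω) ^ 2 ∂μ) :
    (∫ ω, X ω * Y ω ∂μ) ^ 2 ≤ (∫ ω, X ω ^ 2 ∂μ - A) * ∫ ω, Y ω ^ 2 ∂μ := by
  have hnonneg (β : ℝ) : 0 ≤ (∫ ω, Y ω ^ 2 ∂μ) * (β * β)
      + -2 * (∫ ω, X ω * Y ω ∂μ) * β + (∫ ω, X ω ^ 2 ∂μ - A) := by
    have hexp := integral_mul_add_mul_sq hX hY 1 (-β)
    simp only [one_mul, neg_mul, ← sub_eq_add_neg] at hexp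
    linarith [hA β]
  have hdiscrim := discrim_le_zero hnonneg
  rw [discrim] at hdiscrim
  linarith

lemma integral_mul_add_sq_le_of_forall_le_integral_sub_sq (hX : MemLp X 2 μ) (hY : MemLp Y 2 μ)
    {A P S : ℝ} (hA : ∀ β : ℝ, A ≤ ∫ ω, (X ω - β * Y ω) ^ 2 ∂μ)
    (hXP : ∫ ω, X ω ^ 2 ∂μ ≤ P) (hYS : ∫ ω, Y ω ^ 2 ∂μ ≤ S) (b : ℝ) :
    ∫ ω, (b * X ω + Y ω) ^ 2 ∂μ ≤ b ^ 2 * P + S + 2 * |b| * √((P - A) * S) := by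
  have hAX : A ≤ ∫ ω, X ω ^ 2 ∂μ := by simpa only [zero_mul, sub_zero] using hA 0
  have hcorr : (∫ ω, X ω * Y ω ∂μ) ^ 2 ≤ (P - A) * S :=
    (sq_integral_mul_le_of_forall_le_integral_sub_sq hX hY hA).trans <|
      mul_le_mul (by linarith) hYS (integral_nonneg fun ω => sq_nonneg _) (by linarith)
  have hcross : b * ∫ ω, X ω * Y ω ∂μ ≤ |b| * √((P - A) * S) :=
    calc _ ≤ |b| * |∫ ω, X ω * Y ω ∂μ| := (le_abs_self _).trans_eq (abs_mul _ _)
      _ ≤ _ := by gcongr; exact Real.abs_le_sqrt hcorr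
  have hexp := integral_mul_add_mul_sq hX hY b 1
  simp only [one_mul, mul_one, one_pow] at hexp
  linarith [mul_le_mul_of_nonneg_left hXP (sq_nonneg b)]

end SecondMoment

section GaussianNoise

open scoped NNReal

variable {Ω : Type*} [MeasurableSpace Ω] {μ : Measure Ω}

lemma map_mul_add_eq_gaussianReal {Z₁ Z₂ : Ω → ℝ} {b : ℝ} {v₁ v₂ v : ℝ≥0} (hZ₁ : AEMeasurable Z₁ μ)
    (hlaw₁ : μ.map Z₁ = gaussianReal 0 v₁) (hlaw₂ : μ.map Z₂ = gaussianReal 0 v₂)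
    (hind : IndepFun Z₁ Z₂ μ) (hv : b ^ 2 * v₁ + v₂ = v) :
    μ.map (fun ω => b * Z₁ ω + Z₂ ω) = gaussianReal 0 v := by
  have hsum := gaussianReal_add_gaussianReal_of_indepFun
    (X := fun ω => b * Z₁ ω) (hind.comp (φ := fun z => b * z) (by fun_prop) measurable_id)
    (gaussianReal_const_mul ⟨hZ₁, hlaw₁⟩ b).map_eq hlaw₂
  have hvar : .mk (b ^ 2) (sq_nonneg b) * v₁ + v₂ = v := NNReal.coe_injective hv
  rwa [mul_zero, add_zero, hvar] at hsum

lemma dH1_map_add_le_gaussianEntropy [IsProbabilityMeasure μ] {V N : Ω → ℝ} {v : ℝ≥0} {s : ℝ}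
    (hV : Measurable V) (hN : Measurable N) (hV2 : MemLp V 2 μ) (hv : v ≠ 0)
    (hlaw : μ.map N = gaussianReal 0 v) (hind : IndepFun V N μ)
    (hs : ∫ ω, V ω ^ 2 ∂μ + v ≤ s) :
    dH1 (μ.map fun ω => V ω + N ω) ≤ gaussianEntropy s := by
  have hs0 : 0 < s := lt_of_lt_of_le
    (add_pos_of_nonneg_of_pos (integral_nonneg fun ω => sq_nonneg _)
      (NNReal.coe_pos.2 (pos_iff_ne_zero.2 hv))) hs
  have := Measure.isProbabilityMeasure_map (μ := μ) hV.aemeasurable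
  have hmem : MemLp id 2 (μ.map V) :=
    (memLp_map_measure_iff (by fun_prop) hV.aemeasurable).2 hV2
  have hconv : μ.map (fun ω => V ω + N ω) = μ.map V ∗ gaussianReal 0 v :=
    hlaw ▸ hind.map_add_eq_map_conv_map hV hN
  have hmoment : ∫ x, (x - 0) ^ 2 ∂(μ.map V) = ∫ ω, V ω ^ 2 ∂μ := by
    rw [integral_map hV.aemeasurable (by fun_prop)]
    simp only [sub_zero]
  have hbound := dH1_conv_gaussianReal_le hmem hv 0 hs0
  rw [← hconv, hmoment] at hbound
  refine hbound.trans (add_le_of_nonpos_right (div_nonpos_of_nonpos_of_nonneg ?_ ?_))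
  · exact sub_nonpos.2 ((div_le_one hs0).2 hs)
  · exact (mul_pos two_pos (Real.log_pos one_lt_two)).le

theorem dH1_map_sub_condDiffEnt_le [IsProbabilityMeasure μ] {β : Type*} [MeasurableSpace β]
    {Q : Ω → β} {g : β → ℝ} {X Z N : Ω → ℝ} {b A P S : ℝ} {v₁ v₂ w : ℝ≥0}
    (hQ : Measurable Q) (hX : Measurable X) (hZ : Measurable Z) (hN : Measurable N)
    (hg : Measurable g) (hX2 : MemLp X 2 μ) (hg2 : MemLp (fun ω => g (Q ω)) 2 μ)
    (hXP : ∫ ω, X ω ^ 2 ∂μ ≤ P) (hgS : ∫ ω, g (Q ω) ^ 2 ∂μ ≤ S)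
    (hv₁ : v₁ ≠ 0) (hv₂ : v₂ ≠ 0) (hvw : b ^ 2 * v₁ + w = v₂)
    (hZlaw : μ.map Z = gaussianReal 0 v₁) (hNlaw : μ.map N = gaussianReal 0 v₂)
    (hZind : IndepFun (fun ω => (Q ω, X ω)) Z μ) (hNind : IndepFun (fun ω => (Q ω, X ω)) N μ)
    (hA : 0 ≤ A) (hent : condDiffEnt μ (fun ω => X ω + Z ω) Q = gaussianEntropy (A + v₁)) :
    dH1 (μ.map fun ω => b * X ω + g (Q ω) + N ω)
        - condDiffEnt μ (fun ω => b * X ω + g (Q ω) + N ω) Q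
      ≤ gaussianEntropy (b ^ 2 * P + S + 2 * |b| * √((P - A) * S) + v₂)
        - gaussianEntropy (b ^ 2 * A + v₂) := by
  have ht : 0 < A + v₁ := add_pos_of_nonneg_of_pos hA (NNReal.coe_pos.2 (pos_iff_ne_zero.2 hv₁))
  have herr (β : ℝ) : A ≤ ∫ ω, (X ω - β * g (Q ω)) ^ 2 ∂μ :=
    le_of_add_le_add_right <| le_integral_sub_sq_add_of_condDiffEnt_eq (g := fun q => β * g q)
      hQ hX hZ hX2 hv₁ hZlaw hZind (by fun_prop) (hg2.const_mul β) ht hent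
  have hpower := integral_mul_add_sq_le_of_forall_le_integral_sub_sq hX2 hg2 herr hXP hgS b
  have hind : IndepFun (fun ω => b * X ω + g (Q ω)) N μ :=
    hNind.comp (φ := fun z : β × ℝ => b * z.2 + g z.1) (by fun_prop) measurable_id
  have hupper := dH1_map_add_le_gaussianEntropy (by fun_prop) hN ((hX2.const_mul b).add hg2)
    hv₂ hNlaw hind (add_le_add_left hpower v₂)
  have hlower := gaussianEntropy_add_le_condDiffEnt (b := b) hQ hX hZ hN hX2 hg hg2 hv₁ hv₂ hvw
    ht hZlaw hNlaw hZind hNind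
  rw [hent, sub_self, mul_zero, add_zero, mul_add, add_assoc, hvw] at hlower
  exact sub_le_sub hupper hlower

end GaussianNoise

theorem mutualInfo_Y2_bound_general {Ω 𝒰 : Type*} [MeasurableSpace Ω] [MeasurableSpace 𝒰]
    (μ : Measure Ω) [IsProbabilityMeasure μ] (b : ℝ) (hb : |b| ≤ 1)
    (U : Ω → 𝒰) (X1 X2 Z1 Z' : Ω → ℝ)
    (hU : Measurable U) (hX1 : Measurable X1) (hX2 : Measurable X2)
    (hZ1 : Measurable Z1) (hZ' : Measurable Z') (P1 P2 : ℝ)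
    (hX1sq : MemLp X1 2 μ) (hX2sq : MemLp X2 2 μ)
    (hX1pow : (∫ ω, (X1 ω) ^ 2 ∂μ) ≤ P1) (hX2pow : (∫ ω, (X2 ω) ^ 2 ∂μ) ≤ P2)
    (hZ1law : Measure.map Z1 μ = gaussianReal 0 1)
    (hZ'law : Measure.map Z' μ = gaussianReal 0 (Real.toNNReal (1 - b ^ 2)))
    (hindep1 : IndepFun Z1 Z' μ)
    (hindep2 : IndepFun (fun ω => (Z1 ω, Z' ω)) (fun ω => (U ω, X1 ω, X2 ω)) μ)
    (α : ℝ) (hα0 : 0 ≤ α)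
    (hent : condDiffEnt μ (fun ω => X1 ω + Z1 ω) (fun ω => (U ω, X2 ω))
      = (1 / 2) * Real.logb 2 (2 * Real.pi * Real.exp 1 * (1 + α * P1))) :
    dH1 (Measure.map (fun ω => b * X1 ω + X2 ω + b * Z1 ω + Z' ω) μ)
        - condDiffEnt μ (fun ω => b * X1 ω + X2 ω + b * Z1 ω + Z' ω)
            (fun ω => (U ω, X2 ω))
      ≤ (1 / 2) * Real.logb 2
          ((1 + b ^ 2 * P1 + P2 + 2 * |b| * Real.sqrt ((1 - α) * P1 * P2))
            / (1 + b ^ 2 * α * P1)) := by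
  have hP1 : 0 ≤ P1 := (integral_nonneg fun ω => sq_nonneg (X1 ω)).trans hX1pow
  have hP2 : 0 ≤ P2 := (integral_nonneg fun ω => sq_nonneg (X2 ω)).trans hX2pow
  have hw : b ^ 2 * ((1 : NNReal) : ℝ) + (1 - b ^ 2).toNNReal = (1 : NNReal) := by
    rw [Real.coe_toNNReal _ (sub_nonneg.2 ((sq_le_one_iff_abs_le_one b).2 hb)), NNReal.coe_one]
    ring
  have hNlaw := map_mul_add_eq_gaussianReal hZ1.aemeasurable hZ1law hZ'law hindep1 hw
  have hindep := hindep2.symm.comp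
    (φ := fun p : 𝒰 × ℝ × ℝ => ((p.1, p.2.2), p.2.1)) (by fun_prop) measurable_id
  have hbound := dH1_map_sub_condDiffEnt_le (g := Prod.snd) (A := α * P1) (hU.prodMk hX2) hX1 hZ1
    (by fun_prop) measurable_snd hX1sq hX2sq hX1pow hX2pow one_ne_zero one_ne_zero hw hZ1law hNlaw
    (hindep.comp measurable_id measurable_fst)
    (hindep.comp (ψ := fun p : ℝ × ℝ => b * p.1 + p.2) measurable_id (by fun_prop))
    (mul_nonneg hα0 hP1) (by rw [hent, gaussianEntropy, NNReal.coe_one, add_comm])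
  rw [gaussianEntropy_sub (by positivity) (by positivity)] at hbound
  have hgap : (P1 - α * P1) * P2 = (1 - α) * P1 * P2 := by ring
  simp only [← add_assoc, hgap, NNReal.coe_one] at hbound
  convert hbound using 4 <;> ring

/-- **Lemma (bound on `I(U, X₂; Y₂)`).**  Let `|b| ≤ 1`, let `X₁, X₂` be zero-mean with
`E[X₁²] ≤ P₁`, `E[X₂²] ≤ P₂`, let `Z₁ ~ N(0,1)` and `Z' ~ N(0,1−b²)` be independent of
each other and of `(U, X₁, X₂)`, and set `Y₂ = bX₁ + X₂ + bZ₁ + Z'`.  If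
`h(X₁ + Z₁ | U, X₂) = ½ log(2πe(1 + αP₁))` for some `α ∈ [0,1]`, then
`I(U, X₂; Y₂) = h(Y₂) − h(Y₂ | U, X₂)
  ≤ ½ log((1 + b²P₁ + P₂ + 2|b|√((1−α)P₁P₂)) / (1 + b²αP₁))`. -/
theorem mutualInfo_Y2_bound {Ω 𝒰 : Type*} [MeasurableSpace Ω] [MeasurableSpace 𝒰]
    (μ : Measure Ω) [IsProbabilityMeasure μ]
    (b : ℝ) (hb : |b| ≤ 1)
    (U : Ω → 𝒰) (X1 X2 Z1 Z' : Ω → ℝ)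
    (hU : Measurable U) (hX1 : Measurable X1) (hX2 : Measurable X2)
    (hZ1 : Measurable Z1) (hZ' : Measurable Z')
    (P1 P2 : ℝ) (hP1 : 0 < P1) (hP2 : 0 < P2)
    (hX1sq : MemLp X1 2 μ) (hX2sq : MemLp X2 2 μ)
    (hX1mean : (∫ ω, X1 ω ∂μ) = 0) (hX2mean : (∫ ω, X2 ω ∂μ) = 0)
    (hX1pow : (∫ ω, (X1 ω) ^ 2 ∂μ) ≤ P1) (hX2pow : (∫ ω, (X2 ω) ^ 2 ∂μ) ≤ P2)
    (hZ1law : Measure.map Z1 μ = gaussianReal 0 1)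
    (hZ'law : Measure.map Z' μ = gaussianReal 0 (Real.toNNReal (1 - b ^ 2)))
    (hindep1 : IndepFun Z1 Z' μ)
    (hindep2 : IndepFun (fun ω => (Z1 ω, Z' ω)) (fun ω => (U ω, X1 ω, X2 ω)) μ)
    (α : ℝ) (hα0 : 0 ≤ α) (hα1 : α ≤ 1)
    (hent : condDiffEnt μ (fun ω => X1 ω + Z1 ω) (fun ω => (U ω, X2 ω))
      = (1 / 2) * Real.logb 2 (2 * Real.pi * Real.exp 1 * (1 + α * P1))) :
    dH1 (Measure.map (fun ω => b * X1 ω + X2 ω + b * Z1 ω + Z' ω) μ)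
        - condDiffEnt μ (fun ω => b * X1 ω + X2 ω + b * Z1 ω + Z' ω)
            (fun ω => (U ω, X2 ω))
      ≤ (1 / 2) * Real.logb 2
          ((1 + b ^ 2 * P1 + P2 + 2 * |b| * Real.sqrt ((1 - α) * P1 * P2))
            / (1 + b ^ 2 * α * P1)) :=
  mutualInfo_Y2_bound_general μ b hb U X1 X2 Z1 Z' hU hX1 hX2 hZ1 hZ' P1 P2 hX1sq hX2sq hX1pow
    hX2pow hZ1law hZ'law hindep1 hindep2 α hα0 hent
end
end
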